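/- Let K ⊆ L be number fields with L/K finite Galois, let σ be an element of the Galois group of L over K, let f ∈ L[x] be a polynomial, and let a ∈ L. Then the set {n ∈ ℕ : σ(f^{(n)}(a)) = f^{(n)}(a)} is a virtually periodic subset of ℕ, where f^{(n)} denotes the n-th iterate of f. -/

import Mathlib

/-!
Write `b n` for the `n`-th iterate of `f` at `a`, and `S` for the set of `n` with `σ (b n) = b n`.
If the orbit is finite or `S` is finite there is nothing to do. Otherwise some iterate `f^k`, `k ≥ 1`,
has `σ`-invariant coefficients (`exists_iterate_invariant`); then `n ∈ S` implies `n + k ∈ S`, and a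
set stable under a translation is virtually periodic (`virtually_periodic_of_add`).

Suppose that no iterate is invariant. The same then holds for every generator `τ` of the cyclic group
`⟨σ⟩`, and `f` and its conjugate `τ f` have only finitely many common periodic points
(`finite_common_periodic_of_not_invariant`). In degree at least two this is a capacity argument: the
common periodic points lie in a set whose transfinite diameter, taken over all places, is too small
for the product formula applied to the Vandermonde determinant of many of them
(`finite_common_periodic`); it applies unless all the monic normalisations of the iterates of `f` and
`τ f` differ by constants, a case treated by hand (`exists_iter_eq_of_const`). In degree one, two
periodic points already make an iterate the identity (`periodic_subsingleton_of_linear`).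

Let `Y` be the finite set of the forward orbits of these common periodic points, for all generators
`τ`. There is a place `v` of a number field `E ⊇ L`, with an automorphism `ρ` of `E` which preserves
`v` and restricts to a generator `τ` of `⟨σ⟩`, such that no `b n` is `v`-adically close to `Y`
(`exists_good_place`). It comes from two applications of a weak form of the Chebotarev density
theorem, `exists_frobenius_prime`: for every automorphism `ρ` of a number field, the Frobenius at
arbitrarily large primes can be a generator of `⟨ρ⟩`. The latter follows from the pole of the Dedekind
zeta function at `1` for the fixed fields of the powers of `ρ`, by Möbius inversion.

At the place `v` the sequence `b n - ρ (b n)` is studied along arithmetic progressions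
(`local_dichotomy`). If the residual cycle of the orbit is attracting, the orbit approaches a common
root of `f^m - X` and `τ f^m - X`, that is, a point of `Y`, which is excluded. Otherwise the sequence
is interpolated by `p`-adic analytic functions, and Strassmann's theorem (`strassmann`) shows that it
vanishes on an entire progression. Hence an iterate of `f` is `τ`-invariant, a contradiction.
-/

open Filter Topology IsDedekindDomain NumberField Polynomial

/-! ### Primes with prescribed Frobenius -/

/-- Sieving out the multiples of finitely many primes from a completely multiplicative sum over
ideals; this replaces the Euler product. -/
lemma sieve_tsum {R : Type*} [CommRing R] [IsDedekindDomain R] (w : Ideal R → ℝ)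
    (hmul : ∀ I J, w (I * J) = w I * w J) (hsum : Summable w)
    (T : Finset (HeightOneSpectrum R)) :
    Summable ({I : Ideal R | ∀ P ∈ T, ¬ P.asIdeal ∣ I}.indicator w) ∧
    ∑' I, {I : Ideal R | ∀ P ∈ T, ¬ P.asIdeal ∣ I}.indicator w I =
      (∑' I, w I) * ∏ P ∈ T, (1 - w P.asIdeal) := by
  classical
  refine ⟨hsum.indicator _, ?_⟩
  induction T using Finset.induction_on with
  | empty => simp
  | insert P T hP ih =>
    set A := {I : Ideal R | ∀ Q ∈ T, ¬ Q.asIdeal ∣ I} with hA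
    have hinj : Function.Injective (fun I : Ideal R => P.asIdeal * I) :=
      mul_right_injective₀ P.ne_bot
    have key : ∑' I, (A ∩ {I | P.asIdeal ∣ I}).indicator w I
        = w P.asIdeal * ∑' I, A.indicator w I := by
      rw [← tsum_mul_left, ← hinj.tsum_eq]
      · refine tsum_congr fun I => ?_
        have : (P.asIdeal * I ∈ A ∩ {I | P.asIdeal ∣ I}) ↔ I ∈ A := by
          simp only [hA, Set.mem_inter_iff, Set.mem_ofPred_eq, dvd_mul_right, and_true]
          refine forall₂_congr fun Q hQ => not_congr ⟨fun h => ?_, fun h => h.mul_left _⟩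
          refine (Q.prime.dvd_or_dvd h).resolve_left fun h' => hP ?_
          have : P.asIdeal = Q.asIdeal :=
            P.isMaximal.eq_of_le Q.isPrime.ne_top (Ideal.dvd_iff_le.mp h')
          have := HeightOneSpectrum.ext this
          rwa [this]
        by_cases hI : I ∈ A
        · rw [Set.indicator_of_mem (this.2 hI), Set.indicator_of_mem hI, hmul]
        · rw [Set.indicator_of_notMem (fun h => hI (this.1 h)), Set.indicator_of_notMem hI,
            mul_zero]
      · intro I hI
        have := Set.mem_of_indicator_ne_zero hI
        obtain ⟨J, hJ⟩ := this.2
        exact ⟨J, hJ.symm⟩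
    have hsplit : {I : Ideal R | ∀ Q ∈ insert P T, ¬ Q.asIdeal ∣ I}
        = A \ (A ∩ {I | P.asIdeal ∣ I}) := by
      ext I
      simp only [hA, Finset.forall_mem_insert, Set.mem_ofPred_eq, Set.mem_sdiff, Set.mem_inter_iff]
      tauto
    rw [hsplit, Set.indicator_sdiff Set.inter_subset_left]
    simp only [Pi.sub_apply]
    rw [Summable.tsum_sub (hsum.indicator _) (hsum.indicator _), key, ih, Finset.prod_insert hP]
    ring

/-- The logarithmic form of the Euler product over prime ideals. -/
lemma hasSum_neg_log {R : Type*} [CommRing R] [IsDedekindDomain R] (w : Ideal R → ℝ)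
    (hmul : ∀ I J, w (I * J) = w I * w J) (hsum : Summable w) (h0 : w ⊥ = 0) (h1 : w ⊤ = 1)
    (hnn : ∀ I, 0 ≤ w I) (hlt : ∀ P : HeightOneSpectrum R, w P.asIdeal < 1) :
    HasSum (fun P : HeightOneSpectrum R => - Real.log (1 - w P.asIdeal))
      (Real.log (∑' I, w I)) := by
  classical
  set Z := fun T : Finset (HeightOneSpectrum R) =>
    ∑' I, {I : Ideal R | ∀ P ∈ T, ¬ P.asIdeal ∣ I}.indicator w I with hZ
  have htop : ∀ T : Finset (HeightOneSpectrum R), (⊤ : Ideal R) ∈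
      {I : Ideal R | ∀ P ∈ T, ¬ P.asIdeal ∣ I} := fun T P _ h =>
    P.isPrime.ne_top (top_le_iff.mp (Ideal.dvd_iff_le.mp h))
  have hZ1 : ∀ T, 1 ≤ Z T := fun T => by
    refine le_trans ?_ ((sieve_tsum w hmul hsum T).1.le_tsum ⊤ fun I _ =>
      Set.indicator_nonneg (fun I _ => hnn I) I)
    rw [Set.indicator_of_mem (htop T), h1]
  have hz : 1 ≤ ∑' I, w I := by simpa [h1] using hsum.le_tsum ⊤ fun I _ => hnn I
  have hlim : Tendsto Z atTop (𝓝 1) := by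
    have := tendsto_tsum_compl_atTop_zero w
    rw [tendsto_order]
    refine ⟨fun a ha => Eventually.of_forall fun T => ha.trans_le (hZ1 T), fun a ha => ?_⟩
    obtain ⟨S, hS⟩ := ((tendsto_order.1 this).2 (a - 1) (by linarith)).exists
    -- every ideal of `S` other than `0` and `1` has a prime divisor in `T₀`
    have hex : ∀ I : Ideal R, ∃ P : Option (HeightOneSpectrum R), I ≠ ⊤ → I ≠ ⊥ →
        ∃ Q ∈ P, Q.asIdeal ∣ I := by
      intro I
      by_cases hI : I = ⊤
      · exact ⟨none, fun h => (h hI).elim⟩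
      by_cases hI0 : I = ⊥
      · exact ⟨none, fun _ h => (h hI0).elim⟩
      obtain ⟨M, hM, hIM⟩ := Ideal.exists_le_maximal I hI
      exact ⟨some ⟨M, hM.isPrime, fun h => hI0 (le_bot_iff.1 (h ▸ hIM))⟩, fun _ _ =>
        ⟨_, rfl, Ideal.dvd_iff_le.mpr hIM⟩⟩
    choose g hg using hex
    filter_upwards [eventually_ge_atTop (S.biUnion fun I => (g I).toFinset)] with T hT
    have : Z T ≤ 1 + ∑' I : { I // I ∉ S }, w I := by
      have e1 : ∑' I : { I // I ∉ S }, w I = ∑' I, ((S : Set (Ideal R))ᶜ).indicator w I :=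
        tsum_subtype ((S : Set (Ideal R))ᶜ) w
      have e2 : ∑' I, ({⊤} : Set (Ideal R)).indicator w I = 1 := by
        rw [← tsum_subtype]; simp [h1]
      rw [e1, ← e2, ← Summable.tsum_add (hsum.indicator _) (hsum.indicator _)]
      refine Summable.tsum_le_tsum (fun I => ?_) (hsum.indicator _)
        ((hsum.indicator _).add (hsum.indicator _))
      by_cases hm : I ∈ {I : Ideal R | ∀ P ∈ T, ¬ P.asIdeal ∣ I}
      · rw [Set.indicator_of_mem hm]
        by_cases ht : I = ⊤
        · rw [Set.indicator_of_mem (show I ∈ ({⊤} : Set _) from ht)]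
          have := Set.indicator_nonneg (s := (S : Set (Ideal R))ᶜ) (fun I _ => hnn I) I
          linarith
        rw [Set.indicator_of_notMem (show I ∉ ({⊤} : Set _) from ht), zero_add]
        by_cases hb : I = ⊥
        · rw [hb, h0]; exact Set.indicator_nonneg (fun I _ => hnn I) _
        rw [Set.indicator_of_mem]
        intro hIS
        obtain ⟨Q, hQ, hQI⟩ := hg I ht hb
        exact hm Q (hT (Finset.mem_biUnion.2 ⟨I, hIS, by simpa using hQ⟩)) hQI
      · rw [Set.indicator_of_notMem hm]
        exact add_nonneg (Set.indicator_nonneg (fun I _ => hnn I) _)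
          (Set.indicator_nonneg (fun I _ => hnn I) _)
    linarith
  have hfin : ∀ T : Finset (HeightOneSpectrum R), ∑ P ∈ T, - Real.log (1 - w P.asIdeal)
      = Real.log (∑' I, w I) - Real.log (Z T) := by
    intro T
    have := (sieve_tsum w hmul hsum T).2
    have hpr : ∏ P ∈ T, (1 - w P.asIdeal) ≠ 0 :=
      Finset.prod_ne_zero_iff.2 fun P _ => by linarith [hlt P]
    simp only [hZ]
    rw [this, Real.log_mul (by linarith) hpr, Real.log_prod (fun P _ => by linarith [hlt P])]
    simp
  unfold HasSum
  simp_rw [hfin]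
  have := (hlim.log one_ne_zero).const_sub (Real.log (∑' I, w I))
  simpa using this

/-- At most `[F : ℚ]` primes of `𝓞 F` contain a given rational prime. -/
lemma card_primes_above_le {F : Type*} [Field F] [NumberField F] (p : ℕ) (hp : p.Prime)
    (T : Finset (HeightOneSpectrum (𝓞 F))) (hT : ∀ P ∈ T, (p : 𝓞 F) ∈ P.asIdeal) :
    T.card ≤ Module.finrank ℤ (𝓞 F) := by
  classical
  have h1 : ∏ P ∈ T, P.asIdeal ∣ Ideal.span {(p : 𝓞 F)} := by
    have : ∏ I ∈ T.image HeightOneSpectrum.asIdeal, I ∣ Ideal.span {(p : 𝓞 F)} := by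
      refine Finset.prod_primes_dvd _ ?_ ?_
      · intro I hI
        obtain ⟨P, _, rfl⟩ := Finset.mem_image.1 hI
        exact P.prime
      · intro I hI
        obtain ⟨P, hP, rfl⟩ := Finset.mem_image.1 hI
        rw [Ideal.dvd_iff_le, Ideal.span_singleton_le_iff_mem]
        exact hT P hP
    rwa [Finset.prod_image (fun P _ Q _ h => HeightOneSpectrum.ext h)] at this
  have h2 := map_dvd Ideal.absNorm h1
  rw [map_prod, Ideal.absNorm_span_natCast] at h2
  have h3 : p ^ T.card ∣ ∏ P ∈ T, Ideal.absNorm P.asIdeal := by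
    rw [← Finset.prod_const]
    refine Finset.prod_dvd_prod_of_dvd _ _ fun P hP => ?_
    have := P.isMaximal
    obtain ⟨q, k, hk, hqP, hq, hN⟩ := Ideal.exists_prime_and_absNorm_eq_pow P.asIdeal
    have hqp : q = p := by
      by_contra hne
      have hc : Nat.Coprime q p := (Nat.coprime_primes hq hp).2 hne
      apply P.isPrime.ne_top
      rw [Ideal.eq_top_iff_one]
      have := Nat.isCoprime_iff_coprime.2 hc
      obtain ⟨a, b, hab⟩ := this
      have : ((a * q + b * p : ℤ) : 𝓞 F) = 1 := by rw [hab]; simp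
      rw [← this]
      push_cast
      exact P.asIdeal.add_mem (Ideal.mul_mem_left _ _ hqP) (Ideal.mul_mem_left _ _ (hT P hP))
    rw [hN, hqp]
    exact dvd_pow_self _ hk.ne'
  exact (Nat.pow_dvd_pow_iff_le_right hp.one_lt).1 (h3.trans h2)

/-- A choice of residue characteristic for every prime of `𝓞 F`. The sum converges because at most
`[F : ℚ]` primes share a residue characteristic; it bounds the contribution to the Euler product
of the primes of degree at least two and of the higher prime powers. -/
lemma exists_char_summable (F : Type*) [Field F] [NumberField F] :
    ∃ pp : HeightOneSpectrum (𝓞 F) → ℕ, (∀ P, (pp P).Prime ∧ ∃ k, 0 < k ∧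
      Ideal.absNorm P.asIdeal = pp P ^ k) ∧ Summable fun P => (1 : ℝ) / (pp P : ℝ) ^ 2 := by
  classical
  have hex : ∀ P : HeightOneSpectrum (𝓞 F), ∃ p k : ℕ, p.Prime ∧ (p : 𝓞 F) ∈ P.asIdeal ∧ 0 < k ∧
      Ideal.absNorm P.asIdeal = p ^ k := by
    intro P
    have := P.isMaximal
    obtain ⟨q, k, hk, hqP, hq, hN⟩ := Ideal.exists_prime_and_absNorm_eq_pow P.asIdeal
    exact ⟨q, k, hq, hqP, hk, hN⟩
  choose pp k hpp hmem hk hN using hex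
  refine ⟨pp, fun P => ⟨hpp P, k P, hk P, hN P⟩, ?_⟩
  have hs : Summable fun n : ℕ => (1 : ℝ) / (n : ℝ) ^ 2 := Real.summable_one_div_nat_pow.2 one_lt_two
  refine summable_of_sum_le (c := Module.finrank ℤ (𝓞 F) * ∑' n : ℕ, (1 : ℝ) / (n : ℝ) ^ 2)
    (fun P => by positivity) fun T => ?_
  rw [← Finset.sum_fiberwise_of_maps_to (g := pp) (t := T.image pp)
    (fun P hP => Finset.mem_image_of_mem _ hP)]
  calc _ ≤ ∑ p ∈ T.image pp, (Module.finrank ℤ (𝓞 F) : ℝ) * (1 / (p : ℝ) ^ 2) := by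
        refine Finset.sum_le_sum fun p hp => ?_
        obtain ⟨P0, hP0, rfl⟩ := Finset.mem_image.1 hp
        rw [Finset.sum_congr rfl (g := fun _ => 1 / ((pp P0 : ℕ) : ℝ) ^ 2)
          (fun P hP => by rw [(Finset.mem_filter.1 hP).2]), Finset.sum_const, nsmul_eq_mul]
        refine mul_le_mul_of_nonneg_right ?_ (by positivity)
        exact_mod_cast card_primes_above_le (pp P0) (hpp P0) _ fun P hP => by
          rw [← (Finset.mem_filter.1 hP).2]; exact hmem P
    _ ≤ _ := by
        rw [← Finset.mul_sum]
        exact mul_le_mul_of_nonneg_left (hs.sum_le_tsum _ fun _ _ => by positivity) (by positivity)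

lemma hasSum_subtype_of_ite {α : Type*} (q : α → Prop) [DecidablePred q] (f : α → ℝ) (z : ℝ)
    (h : HasSum (fun x => if q x then f x else 0) z) : HasSum (fun x : {x // q x} => f x) z := by
  refine (hasSum_subtype_iff_indicator (s := {x | q x})).2 ?_
  convert h using 1
  ext x
  simp [Set.indicator_apply]

/-- The weight `I ↦ N(I)⁻ˢ`. -/
noncomputable def normWeight (F : Type*) [Field F] [NumberField F] (s : ℝ) (I : Ideal (𝓞 F)) : ℝ :=
  (Ideal.absNorm I : ℝ) ^ (-s)

/-- The simple pole of the Dedekind zeta function at `1`, in the form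
`log ζ_F(s) = log (1 / (s - 1)) + O(1)` as `s → 1⁺`. -/
lemma zeta_log_bound (F : Type*) [Field F] [NumberField F] :
    ∃ C : ℝ, ∀ᶠ s : ℝ in 𝓝[>] 1, Summable (normWeight F s) ∧
      |Real.log (∑' I, normWeight F s I) + Real.log (s - 1)| ≤ C := by
  have hlim := tendsto_sub_one_mul_dedekindZeta_nhdsGT F
  have hpos := dedekindZeta_residue_pos F
  set c := dedekindZeta_residue F
  have hre : Tendsto (fun s : ℝ => ((s - 1) * (dedekindZeta F s)).re) (𝓝[>] 1) (𝓝 c) :=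
    (Complex.continuous_re.tendsto _).comp hlim
  have hlog := hre.log hpos.ne'
  refine ⟨|Real.log c| + 1, ?_⟩
  have e1 : ∀ᶠ s : ℝ in 𝓝[>] 1, |Real.log (((s - 1) * (dedekindZeta F s)).re)| < |Real.log c| + 1 :=
    (hlog.abs).eventually (gt_mem_nhds (by linarith))
  have e2 : ∀ᶠ s : ℝ in 𝓝[>] 1, 0 < ((s - 1) * (dedekindZeta F s)).re :=
    hre.eventually (lt_mem_nhds hpos)
  filter_upwards [e1, e2, self_mem_nhdsWithin] with s h1 h2 hs
  have hs : (1 : ℝ) < s := hs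
  have hne : dedekindZeta F s ≠ 0 := by
    intro h; rw [h] at h2; simp at h2
  have hsum : LSeriesSummable
      (fun n ↦ (Nat.card {I : Ideal (𝓞 F) // Ideal.absNorm I = n} : ℂ)) s := by
    by_contra h
    exact hne (tsum_eq_zero_of_not_summable h)
  have hterm : ∀ n : ℕ, LSeries.term (fun n ↦ (Nat.card {I : Ideal (𝓞 F) // Ideal.absNorm I = n} : ℂ))
      s n = (((Nat.card {I : Ideal (𝓞 F) // Ideal.absNorm I = n} : ℝ) * (n : ℝ) ^ (-s) : ℝ) : ℂ) := by
    intro n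
    rcases eq_or_ne n 0 with rfl | hn
    · rw [LSeries.term_zero, Nat.cast_zero, Real.zero_rpow (by linarith)]; simp
    rw [LSeries.term_of_ne_zero hn, Real.rpow_neg (by positivity), Complex.ofReal_mul,
      Complex.ofReal_inv, Complex.ofReal_cpow (by positivity)]
    simp [div_eq_mul_inv]
  have hfib : ∀ n : ℕ, HasSum (fun I : {I : Ideal (𝓞 F) // Ideal.absNorm I = n} =>
      normWeight F s I.1) ((Nat.card {I : Ideal (𝓞 F) // Ideal.absNorm I = n} : ℝ) *
        (n : ℝ) ^ (-s)) := by
    intro n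
    have : Finite {I : Ideal (𝓞 F) // Ideal.absNorm I = n} :=
      Ideal.finite_setOfPred_absNorm_eq n
    have := Fintype.ofFinite {I : Ideal (𝓞 F) // Ideal.absNorm I = n}
    have hf := hasSum_fintype (fun I : {I : Ideal (𝓞 F) // Ideal.absNorm I = n} =>
      normWeight F s I.1)
    convert hf using 1
    rw [Finset.sum_congr rfl (g := fun _ => (n : ℝ) ^ (-s))
      (fun I _ => by rw [normWeight, I.2])]
    simp
  have hS : Summable fun n : ℕ => ((Nat.card {I : Ideal (𝓞 F) // Ideal.absNorm I = n} : ℝ) *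
        (n : ℝ) ^ (-s)) := by
    have : Summable _ := hsum
    simp_rw [funext hterm] at this
    exact Complex.summable_ofReal.1 this
  have hw : Summable (normWeight F s) := by
    rw [← (Equiv.sigmaFiberEquiv (fun I : Ideal (𝓞 F) => Ideal.absNorm I)).summable_iff]
    refine (summable_sigma_of_nonneg fun x => Real.rpow_nonneg (by positivity) _).2
      ⟨fun n => (hfib n).summable, ?_⟩
    refine hS.congr fun n => ?_
    exact ((hfib n).tsum_eq).symm
  refine ⟨hw, ?_⟩
  have hval : dedekindZeta F s = ((∑' I, normWeight F s I : ℝ) : ℂ) := by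
    rw [← (Equiv.sigmaFiberEquiv (fun I : Ideal (𝓞 F) => Ideal.absNorm I)).tsum_eq,
      Summable.tsum_sigma (f := fun c => normWeight F s
        ((Equiv.sigmaFiberEquiv (fun I : Ideal (𝓞 F) => Ideal.absNorm I)) c))
        ((Equiv.summable_iff _).2 hw)]
    have : ∀ n : ℕ, ∑' c : {I : Ideal (𝓞 F) // Ideal.absNorm I = n}, normWeight F s
      ((Equiv.sigmaFiberEquiv (fun I : Ideal (𝓞 F) => Ideal.absNorm I)) ⟨n, c⟩) = _ :=
        fun n => (hfib n).tsum_eq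
    simp_rw [this]
    rw [Complex.ofReal_tsum]
    exact tsum_congr hterm
  rw [hval] at h1 h2
  have hcast : ((s : ℂ) - 1) * ((∑' I, normWeight F s I : ℝ) : ℂ)
      = (((s - 1) * ∑' I, normWeight F s I : ℝ) : ℂ) := by push_cast; ring
  rw [hcast, Complex.ofReal_re] at h1 h2
  rw [add_comm, ← Real.log_mul (by linarith) (by rintro h; rw [h] at h2; simp at h2)]
  exact h1.le

set_option maxHeartbeats 1000000 in
/-- Degree one primes: `∑ₚ h(p) p⁻ˢ = log (1 / (s - 1)) + O(1)` as `s → 1⁺`, where `h(p)` is the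
number of ideals of norm `p`. -/
theorem prime_sum_log (F : Type*) [Field F] [NumberField F] :
    ∃ C : ℝ, ∀ᶠ s : ℝ in 𝓝[>] 1,
      Summable (fun p : Nat.Primes =>
        (Nat.card {I : Ideal (𝓞 F) // Ideal.absNorm I = p} : ℝ) * ((p : ℕ) : ℝ) ^ (-s)) ∧
      |(∑' p : Nat.Primes, (Nat.card {I : Ideal (𝓞 F) // Ideal.absNorm I = p} : ℝ) *
        ((p : ℕ) : ℝ) ^ (-s)) + Real.log (s - 1)| ≤ C := by
  classical
  obtain ⟨C₀, hC₀⟩ := zeta_log_bound F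
  obtain ⟨pp, hpp, hS⟩ := exists_char_summable F
  refine ⟨C₀ + 3 * ∑' P, (1 : ℝ) / (pp P : ℝ) ^ 2, ?_⟩
  filter_upwards [hC₀, self_mem_nhdsWithin] with s ⟨hw, hb⟩ hs
  have hs : (1 : ℝ) < s := hs
  set w := normWeight F s with hwdef
  have hnn : ∀ I, 0 ≤ w I := fun I => Real.rpow_nonneg (by positivity) _
  have hwk : ∀ P k, Ideal.absNorm P.asIdeal = pp P ^ k → w P.asIdeal ≤ ((pp P : ℝ) ^ k)⁻¹ := by
    intro P k hk
    have h1 : (1 : ℝ) ≤ (pp P : ℝ) ^ k := one_le_pow₀ (by exact_mod_cast (hpp P).1.one_lt.le)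
    rw [hwdef, normWeight, hk, Nat.cast_pow, ← Real.rpow_neg_one]
    exact Real.rpow_le_rpow_of_exponent_le h1 (by linarith)
  have hw1 : ∀ P : HeightOneSpectrum (𝓞 F), w P.asIdeal ≤ ((pp P : ℝ))⁻¹ := by
    intro P
    obtain ⟨hp, k, hk, hN⟩ := hpp P
    refine (hwk P k hN).trans ?_
    have : (1 : ℝ) ≤ pp P := by exact_mod_cast hp.one_lt.le
    refine inv_anti₀ (by linarith) (le_self_pow₀ this hk.ne')
  have hhalf : ∀ P : HeightOneSpectrum (𝓞 F), w P.asIdeal ≤ 1 / 2 := by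
    intro P
    refine (hw1 P).trans ?_
    have : (2 : ℝ) ≤ pp P := by exact_mod_cast (hpp P).1.two_le
    rw [one_div]; exact inv_anti₀ two_pos this
  have hEul := hasSum_neg_log w
    (fun I J => by
      simp only [hwdef, normWeight, map_mul, Nat.cast_mul]
      exact Real.mul_rpow (by positivity) (by positivity)) hw
    (by simp [hwdef, normWeight, Real.zero_rpow (show -s ≠ 0 by linarith)])
    (by simp [hwdef, normWeight]) hnn (fun P => by linarith [hhalf P])
  set g : HeightOneSpectrum (𝓞 F) → ℝ := fun P =>
    if (Ideal.absNorm P.asIdeal).Prime then w P.asIdeal else 0 with hg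
  have hdiff : ∀ P, |(- Real.log (1 - w P.asIdeal)) - g P| ≤ 3 * ((1 : ℝ) / (pp P : ℝ) ^ 2) := by
    intro P
    have hx0 := hnn P.asIdeal
    have hx1 := hhalf P
    have hx2 := hw1 P
    have hpp2 : (w P.asIdeal) ^ 2 ≤ 1 / (pp P : ℝ) ^ 2 := by
      rw [one_div, ← inv_pow]; exact pow_le_pow_left₀ hx0 hx2 2
    have hl := Real.abs_log_sub_add_sum_range_le (x := w P.asIdeal)
      (by rw [abs_of_nonneg hx0]; linarith) 1
    simp only [Finset.sum_range_one, abs_of_nonneg hx0] at hl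
    have hl2 : |w P.asIdeal + Real.log (1 - w P.asIdeal)| ≤ 2 * (w P.asIdeal) ^ 2 := by
      refine le_trans (by simpa using hl) ?_
      rw [div_le_iff₀ (by linarith)]
      nlinarith [sq_nonneg (w P.asIdeal)]
    have hg2 : |w P.asIdeal - g P| ≤ 1 / (pp P : ℝ) ^ 2 := by
      simp only [hg]
      split_ifs with h
      · simp
      · obtain ⟨hp, k, hk, hN⟩ := hpp P
        rw [sub_zero, abs_of_nonneg hx0]
        refine (hwk P k hN).trans ?_
        have hk2 : 2 ≤ k := by
          by_contra h'
          have : k = 1 := by omega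
          rw [hN, this, pow_one] at h
          exact h hp
        have : (1 : ℝ) ≤ pp P := by exact_mod_cast hp.one_lt.le
        rw [one_div]
        exact inv_anti₀ (by positivity) (pow_le_pow_right₀ this hk2)
    calc _ = |-(w P.asIdeal + Real.log (1 - w P.asIdeal)) + (w P.asIdeal - g P)| := by ring_nf
      _ ≤ 2 * (w P.asIdeal) ^ 2 + 1 / (pp P : ℝ) ^ 2 := by
          refine (abs_add_le _ _).trans (add_le_add ?_ hg2)
          rwa [abs_neg]
      _ ≤ _ := by linarith
  have hdS : Summable fun P => (- Real.log (1 - w P.asIdeal)) - g P :=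
    Summable.of_norm_bounded (hS.mul_left 3) hdiff
  have hgS : Summable g := by
    have := hEul.summable.sub hdS
    simpa using this
  have hdb : |∑' P, ((- Real.log (1 - w P.asIdeal)) - g P)| ≤ 3 * ∑' P, (1 : ℝ) / (pp P : ℝ) ^ 2 := by
    rw [← tsum_mul_left]
    exact tsum_of_norm_bounded (f := fun P : HeightOneSpectrum (𝓞 F) =>
      - Real.log (1 - w P.asIdeal) - g P) (hS.mul_left 3).hasSum hdiff
  rw [Summable.tsum_sub hEul.summable hgS, hEul.tsum_eq] at hdb
  -- regroup the degree one primes by their norm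
  let D := {P : HeightOneSpectrum (𝓞 F) // (Ideal.absNorm P.asIdeal).Prime}
  let nm : D → Nat.Primes := fun P => ⟨Ideal.absNorm P.1.asIdeal, P.2⟩
  have hgD : HasSum (fun P : D => w P.1.asIdeal) (∑' P, g P) := by
    exact hasSum_subtype_of_ite _ _ _ hgS.hasSum
  have hfib : ∀ p : Nat.Primes, HasSum (fun P : {P : D // nm P = p} => w P.1.1.asIdeal)
      ((Nat.card {I : Ideal (𝓞 F) // Ideal.absNorm I = p} : ℝ) * ((p : ℕ) : ℝ) ^ (-s)) := by
    intro p
    let e : {P : D // nm P = p} ≃ {I : Ideal (𝓞 F) // Ideal.absNorm I = p} :=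
      { toFun := fun P => ⟨P.1.1.asIdeal, congrArg Subtype.val P.2⟩
        invFun := fun I => ⟨⟨⟨I.1, Ideal.isPrime_of_irreducible_absNorm (by
            rw [I.2]; exact p.2), by
            rintro h; have := I.2; rw [h, Ideal.absNorm_bot] at this
            exact p.2.ne_zero this.symm⟩, by rw [I.2]; exact p.2⟩, Subtype.ext I.2⟩
        left_inv := fun P => rfl
        right_inv := fun I => rfl }
    have : Finite {I : Ideal (𝓞 F) // Ideal.absNorm I = p} :=
      Ideal.finite_setOfPred_absNorm_eq (p : ℕ)
    have := Fintype.ofFinite {I : Ideal (𝓞 F) // Ideal.absNorm I = p}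
    have hf := hasSum_fintype (fun I : {I : Ideal (𝓞 F) // Ideal.absNorm I = p} => w I.1)
    rw [Finset.sum_congr rfl (g := fun _ => ((p : ℕ) : ℝ) ^ (-s))
      (fun I _ => by rw [hwdef, normWeight, I.2])] at hf
    have : HasSum (fun P : {P : D // nm P = p} => w P.1.1.asIdeal) _ := (e.hasSum_iff).2 hf
    simpa using this
  have hfinal := ((Equiv.sigmaFiberEquiv nm).hasSum_iff.2 hgD).sigma hfib
  refine ⟨hfinal.summable, ?_⟩
  rw [hfinal.tsum_eq]
  rw [abs_le] at hb hdb ⊢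
  constructor <;> linarith [hb.1, hb.2, hdb.1, hdb.2]

/-- The characteristic of `k` divides the norm of `z` as soon as some `ω : 𝓞 E → k` kills `z`. -/
lemma eventually_hom_ne {E : Type*} [Field E] [NumberField E] (z : 𝓞 E) (hz : z ≠ 0) :
    ∃ N : ℕ, ∀ p : ℕ, N < p → ∀ (k : Type) [Field k] [CharP k p] (ω : 𝓞 E →+* k), ω z ≠ 0 := by
  refine ⟨Ideal.absNorm (Ideal.span {z}), fun p hp k _ _ ω h => ?_⟩
  have hne : Ideal.absNorm (Ideal.span {z}) ≠ 0 := by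
    rw [Ne, Ideal.absNorm_eq_zero_iff, Ideal.span_singleton_eq_bot]; exact hz
  obtain ⟨c, hc⟩ := Ideal.mem_span_singleton.1 (Ideal.absNorm_mem (Ideal.span {z}))
  have := congrArg ω hc
  rw [map_mul, h, zero_mul, map_natCast] at this
  have := (CharP.cast_eq_zero_iff k p _).1 this
  exact absurd (Nat.le_of_dvd (Nat.pos_of_ne_zero hne) this) (by omega)

/-- An integral primitive element `θ` such that, for all large `p`, homs from `𝓞 E` to fields of
characteristic `p` are determined by their value at `θ`, and `Aut E` acts freely on them. -/
lemma exists_good_element (E : Type*) [Field E] [NumberField E] :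
    ∃ (θ : 𝓞 E) (N : ℕ), ∀ p : ℕ, N < p → ∀ (k : Type) [Field k] [CharP k p],
      (∀ ω ω' : 𝓞 E →+* k, ω θ = ω' θ → ω = ω') ∧
      (∀ (ω : 𝓞 E →+* k) (τ : E ≃ₐ[ℚ] E),
        ω (RingOfIntegers.mapRingHom (τ : E →+* E) θ) = ω θ → τ = 1) := by
  classical
  obtain ⟨α, hα⟩ := Field.exists_primitive_element ℚ E
  obtain ⟨m, hm, hIntegral⟩ := ((IsFractionRing.isAlgebraic_iff ℤ ℚ E).2
    (Algebra.IsAlgebraic.isAlgebraic α)).exists_integral_multiple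
  have hIntegral : IsIntegral ℤ ((m : ℚ) • α) := by
    rwa [show ((m : ℚ) • α) = m • α from Int.cast_smul_eq_zsmul ℚ m α]
  let θ : 𝓞 E := ⟨(m : ℚ) • α, hIntegral⟩
  have hθ : IntermediateField.adjoin ℚ {(θ : E)} = ⊤ := by
    rw [eq_top_iff, ← hα, IntermediateField.adjoin_simple_le_iff]
    have : α = (m : ℚ)⁻¹ • (θ : E) := by
      change α = (m : ℚ)⁻¹ • ((m : ℚ) • α)
      rw [inv_smul_smul₀ (by exact_mod_cast hm)]
    rw [this]
    exact (IntermediateField.adjoin ℚ {(θ : E)}).smul_mem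
      (IntermediateField.mem_adjoin_simple_self ℚ _)
  let B : PowerBasis ℚ E := (IntermediateField.adjoin.powerBasis
    (Algebra.IsIntegral.isIntegral (R := ℚ) (θ : E))).map
      ((IntermediateField.equivOfEq hθ).trans IntermediateField.topEquiv)
  have hB : B.gen = (θ : E) := by
    simp [B]
  have hBint : IsIntegral ℤ B.gen := by rw [hB]; exact θ.isIntegral_coe
  -- the discriminant is an integer annihilating `𝓞 E / ℤ[θ]`
  obtain ⟨d, hd⟩ : ∃ d : ℤ, (d : ℚ) = Algebra.discr ℚ B.basis := by
    have : IsIntegral ℤ (Algebra.discr ℚ B.basis) := Algebra.discr_isIntegral ℚ (fun i => by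
      rw [B.basis_eq_pow]; exact hBint.pow _)
    obtain ⟨d, hd⟩ := IsIntegrallyClosed.isIntegral_iff.1 this
    exact ⟨d, by simpa using hd⟩
  have hd0 : d ≠ 0 := by
    rintro rfl
    exact Algebra.discr_not_zero_of_basis ℚ B.basis (by rw [← hd]; simp)
  have hdet : ∀ z : 𝓞 E, ∃ q : ℤ[X], (d : 𝓞 E) * z = aeval θ q := by
    intro z
    have := Algebra.discr_mul_isIntegral_mem_adjoin ℚ hBint z.isIntegral_coe
    rw [← hd, hB, Algebra.adjoin_singleton_eq_range_aeval] at this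
    obtain ⟨q, hq⟩ := this
    refine ⟨q, RingOfIntegers.coe_injective ?_⟩
    have h1 : algebraMap (𝓞 E) E (aeval θ q) = aeval (algebraMap (𝓞 E) E θ) q :=
      (aeval_algebraMap_apply E θ q).symm
    rw [h1, map_mul]
    refine Eq.trans ?_ hq.symm
    rw [Algebra.smul_def]; simp
  -- `τ θ - θ` for the finitely many `τ ≠ 1`
  have hfree : ∀ τ : E ≃ₐ[ℚ] E, ∃ N : ℕ, ∀ p : ℕ, N < p → ∀ (k : Type) [Field k] [CharP k p]
      (ω : 𝓞 E →+* k), ω (RingOfIntegers.mapRingHom (τ : E →+* E) θ) = ω θ → τ = 1 := by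
    intro τ
    by_cases hτ : RingOfIntegers.mapRingHom (τ : E →+* E) θ - θ = 0
    · refine ⟨0, fun p _ k _ _ ω _ => ?_⟩
      have h1 : τ θ = (θ : E) := congrArg (fun x : 𝓞 E => (x : E)) (sub_eq_zero.1 hτ)
      have h2 : (τ : E →ₐ[ℚ] E) = AlgHom.id ℚ E := by
        refine B.algHom_ext ?_
        rw [hB]; exact h1
      ext x
      exact congrArg (fun g : E →ₐ[ℚ] E => g x) h2
    · obtain ⟨N, hN⟩ := eventually_hom_ne _ hτ
      refine ⟨N, fun p hp k _ _ ω h => ?_⟩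
      exact absurd (by rw [map_sub, h, sub_self]) (hN p hp k ω)
  choose Nf hNf using hfree
  refine ⟨θ, d.natAbs + ∑ τ, Nf τ, fun p hp k _ _ => ⟨fun ω ω' h => ?_, fun ω τ h => ?_⟩⟩
  · ext z
    obtain ⟨q, hq⟩ := hdet z
    have hdk : (d : k) ≠ 0 := by
      intro h0
      have := (CharP.intCast_eq_zero_iff k p d).1 h0
      have := Int.natCast_dvd.1 this
      have := Nat.le_of_dvd (Int.natAbs_pos.2 hd0) this
      omega
    have key : ∀ ω : 𝓞 E →+* k, (d : k) * ω z = eval₂ (Int.castRingHom k) (ω θ) q := by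
      intro ω
      rw [← map_intCast ω, ← map_mul, hq, aeval_def, hom_eval₂]
      congr 1
      exact Subsingleton.elim _ _
    have h1 := key ω
    rw [h, ← key ω'] at h1
    exact mul_left_cancel₀ hdk h1
  · refine hNf τ p ?_ k ω h
    have : Nf τ ≤ ∑ τ, Nf τ := Finset.single_le_sum (fun _ _ => Nat.zero_le _) (Finset.mem_univ τ)
    omega

lemma isTorsionFree_of_injective {A B : Type*} [CommRing A] [IsDomain A] [CommRing B] [IsDomain B]
    [Algebra A B] (h : Function.Injective (algebraMap A B)) : Module.IsTorsionFree A B := by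
  have : FaithfulSMul A B := (faithfulSMul_iff_algebraMap_injective _ _).2 h
  infer_instance

lemma exists_hom_extension {R S k : Type*} [CommRing R] [CommRing S] [IsDomain S] [Field k]
    [IsAlgClosed k] [Algebra R S] [Algebra.IsIntegral R S]
    (hinj : Function.Injective (algebraMap R S)) (φ : R →+* k) :
    ∃ ψ : S →+* k, ψ.comp (algebraMap R S) = φ := by
  have hP : (RingHom.ker φ).IsPrime := RingHom.ker_isPrime φ
  obtain ⟨Q, hQ, hQP⟩ := Ideal.exists_ideal_over_prime_of_isIntegral_of_isDomain (S := S)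
    (RingHom.ker φ) (by rw [(RingHom.injective_iff_ker_eq_bot _).1 hinj]; exact bot_le)
  have : Q.LiesOver (RingHom.ker φ) := ⟨hQP.symm⟩
  let := (RingHom.kerLift φ).toAlgebra
  have h1 : Module.IsTorsionFree (R ⧸ RingHom.ker φ) k :=
    isTorsionFree_of_injective (RingHom.kerLift_injective φ)
  have h2 : Module.IsTorsionFree (R ⧸ RingHom.ker φ) (S ⧸ Q) :=
    isTorsionFree_of_injective (FaithfulSMul.algebraMap_injective _ _)
  let e : (S ⧸ Q) →ₐ[R ⧸ RingHom.ker φ] k := IsAlgClosed.lift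
  refine ⟨(e : (S ⧸ Q) →+* k).comp (Ideal.Quotient.mk Q), ?_⟩
  ext x
  have := e.commutes (Ideal.Quotient.mk _ x)
  exact this

lemma mem_range_zmod {k : Type*} [Field k] {p : ℕ} [Fact p.Prime] [CharP k p] [Algebra (ZMod p) k]
    {x : k} (hx : x ^ p = x) : ∃ c : ZMod p, algebraMap (ZMod p) k c = x := by
  classical
  have h0 : (X ^ p - X : k[X]) ≠ 0 := FiniteField.X_pow_card_sub_X_ne_zero k (Fact.out : p.Prime).one_lt
  have hsub : (Finset.univ.image (algebraMap (ZMod p) k)) ⊆ (X ^ p - X : k[X]).roots.toFinset := by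
    intro y hy
    obtain ⟨c, _, rfl⟩ := Finset.mem_image.1 hy
    rw [Multiset.mem_toFinset, mem_roots h0, IsRoot, eval_sub, eval_pow, eval_X, ← map_pow,
      ZMod.pow_card, sub_self]
  have hcard : (X ^ p - X : k[X]).roots.toFinset.card ≤ (Finset.univ.image (algebraMap (ZMod p) k)).card := by
    rw [Finset.card_image_of_injective _ (algebraMap (ZMod p) k).injective, Finset.card_univ,
      ZMod.card]
    refine (Multiset.toFinset_card_le _).trans ((card_roots' _).trans ?_)
    rw [FiniteField.X_pow_card_sub_X_natDegree_eq k (Fact.out : p.Prime).one_lt]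
  have := Finset.eq_of_subset_of_card_le hsub hcard
  have hm : x ∈ (X ^ p - X : k[X]).roots.toFinset := by
    rw [Multiset.mem_toFinset, mem_roots h0, IsRoot, eval_sub, eval_pow, eval_X, hx, sub_self]
  rw [← this] at hm
  obtain ⟨c, _, hc⟩ := Finset.mem_image.1 hm
  exact ⟨c, hc⟩

/-- Frobenius-fixed homs from `𝓞 F` to a field of characteristic `p` correspond to ideals of
norm `p`. -/
lemma card_fixed_hom (F : Type*) [Field F] [NumberField F] (p : ℕ) [Fact p.Prime]
    (k : Type*) [Field k] [CharP k p] [Algebra (ZMod p) k] :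
    Nat.card {φ : 𝓞 F →+* k // ∀ x, φ x ^ p = φ x} =
      Nat.card {I : Ideal (𝓞 F) // Ideal.absNorm I = p} := by
  have hp : p.Prime := Fact.out
  have hker : ∀ φ : 𝓞 F →+* k, (∀ x, φ x ^ p = φ x) → ∃ ψ : 𝓞 F →+* ZMod p,
      (algebraMap (ZMod p) k).comp ψ = φ := by
    intro φ hφ
    choose g hg using fun x => mem_range_zmod (hφ x)
    have hi := (algebraMap (ZMod p) k).injective
    exact ⟨{ toFun := g
             map_one' := hi (by rw [hg, map_one, map_one])
             map_zero' := hi (by rw [hg, map_zero, map_zero])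
             map_mul' := fun x y => hi (by simp [hg])
             map_add' := fun x y => hi (by simp [hg]) }, by ext x; exact hg x⟩
  refine Nat.card_congr (Equiv.ofBijective (fun φ => ⟨RingHom.ker φ.1, ?_⟩) ⟨?_, ?_⟩)
  · obtain ⟨ψ, hψ⟩ := hker φ.1 φ.2
    have hk : RingHom.ker φ.1 = RingHom.ker ψ := by
      ext x
      rw [RingHom.mem_ker, RingHom.mem_ker, ← hψ, RingHom.comp_apply,
        map_eq_zero_iff _ (algebraMap (ZMod p) k).injective]
    rw [hk, Ideal.absNorm_apply, Submodule.cardQuot_apply,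
      Nat.card_congr (RingHom.quotientKerEquivOfSurjective (ZMod.ringHom_surjective ψ)).toEquiv,
      Nat.card_zmod]
  · rintro ⟨φ, hφ⟩ ⟨φ', hφ'⟩ h
    have h : RingHom.ker φ = RingHom.ker φ' := congrArg Subtype.val h
    obtain ⟨ψ, hψ⟩ := hker φ hφ
    refine Subtype.ext (RingHom.ext fun x => ?_)
    have h1 : x - ((ψ x).val : 𝓞 F) ∈ RingHom.ker φ := by
      rw [RingHom.mem_ker, ← hψ, RingHom.comp_apply, map_sub, map_natCast, ZMod.natCast_zmod_val,
        sub_self, map_zero]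
    have h2 := h1
    rw [h] at h2
    rw [RingHom.mem_ker, map_sub, map_natCast, sub_eq_zero] at h1 h2
    exact h1.trans h2.symm
  · rintro ⟨I, hI⟩
    rw [Ideal.absNorm_apply, Submodule.cardQuot_apply] at hI
    have : Finite (𝓞 F ⧸ I) := Nat.finite_of_card_ne_zero (by rw [hI]; exact hp.ne_zero)
    have := Fintype.ofFinite (𝓞 F ⧸ I)
    let e := ZMod.ringEquivOfPrime (𝓞 F ⧸ I) hp (by rw [← Nat.card_eq_fintype_card, hI])
    refine ⟨⟨(algebraMap (ZMod p) k).comp ((e.symm : (𝓞 F ⧸ I) →+* ZMod p).comp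
      (Ideal.Quotient.mk I)), fun x => ?_⟩, Subtype.ext ?_⟩
    · simp only [RingHom.comp_apply]
      rw [← map_pow, ZMod.pow_card]
    · ext x
      simp [RingHom.mem_ker, Ideal.Quotient.eq_zero_iff_mem]

/-- Homs from `𝓞 E` to a field which agree on `𝓞 F` are conjugate under `Gal(E/F)`, as soon as homs
are determined by their values at one element. -/
lemma hom_conj {F E k : Type*} [Field F] [Field E] [NumberField F] [NumberField E] [Algebra F E]
    [IsGalois F E] [Field k] (θ : 𝓞 E) (hθ : ∀ ω ω' : 𝓞 E →+* k, ω θ = ω' θ → ω = ω')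
    (ω ω' : 𝓞 E →+* k)
    (h : ∀ x : 𝓞 F, ω (algebraMap (𝓞 F) (𝓞 E) x) = ω' (algebraMap (𝓞 F) (𝓞 E) x)) :
    ∃ τ : E ≃ₐ[F] E, ω' = ω.comp (RingOfIntegers.mapRingHom (τ : E →+* E)) := by
  classical
  have hfd : FiniteDimensional F E := Module.Finite.of_restrictScalars_finite ℚ F E
  have : Fintype (E ≃ₐ[F] E) := Fintype.ofFinite _
  let act : (E ≃ₐ[F] E) → 𝓞 E := fun τ => RingOfIntegers.mapRingHom (τ : E →+* E) θ
  let P : (𝓞 E)[X] := ∏ τ, (X - C (act τ))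
  have hP : ∃ Q : (𝓞 F)[X], Q.map (algebraMap (𝓞 F) (𝓞 E)) = P := by
    have hc : P = MulSemiringAction.charpoly (E ≃ₐ[F] E) θ := by
      rw [MulSemiringAction.charpoly_eq]; rfl
    obtain ⟨Q, hQ⟩ := (Polynomial.mem_lifts _).mp
      (Algebra.IsInvariant.charpoly_mem_lifts (𝓞 F) (𝓞 E) (E ≃ₐ[F] E) θ)
    exact ⟨Q, by rw [hc]; exact hQ⟩
  obtain ⟨Q, hQ⟩ := hP
  have h1 : P.map ω = P.map ω' := by
    rw [← hQ, Polynomial.map_map, Polynomial.map_map]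
    congr 1
    ext x; exact h x
  have h2 : (P.map ω').eval (ω' θ) = 0 := by
    rw [eval_map_apply]
    have : P.eval θ = 0 := by
      rw [eval_prod]
      refine Finset.prod_eq_zero (Finset.mem_univ 1) ?_
      have : act 1 = θ := by ext; rfl
      simp [this]
    rw [this, map_zero]
  rw [← h1, Polynomial.map_prod, eval_prod, Finset.prod_eq_zero_iff] at h2
  obtain ⟨τ, _, hτ⟩ := h2
  refine ⟨τ, hθ _ _ ?_⟩
  simp [sub_eq_zero] at hτ
  exact hτ

/-- Every Frobenius-fixed hom from `𝓞 F` has exactly `|Gal(E/F)|` extensions to `𝓞 E`. -/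
lemma card_hom_fixed_on {F E : Type*} [Field F] [Field E] [NumberField F] [NumberField E]
    [Algebra F E] [IsGalois F E] (p : ℕ) [Fact p.Prime]
    (k : Type*) [Field k] [CharP k p] [Algebra (ZMod p) k] [IsAlgClosed k]
    (θ : 𝓞 E) (hθ : ∀ ω ω' : 𝓞 E →+* k, ω θ = ω' θ → ω = ω')
    (hfree : ∀ (ω : 𝓞 E →+* k) (τ : E ≃ₐ[ℚ] E),
        ω (RingOfIntegers.mapRingHom (τ : E →+* E) θ) = ω θ → τ = 1) :
    Nat.card {ω : 𝓞 E →+* k // ∀ x : 𝓞 F, ω (algebraMap (𝓞 F) (𝓞 E) x) ^ p =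
      ω (algebraMap (𝓞 F) (𝓞 E) x)} =
      Nat.card (E ≃ₐ[F] E) * Nat.card {I : Ideal (𝓞 F) // Ideal.absNorm I = p} := by
  rw [← card_fixed_hom F p k, ← Nat.card_prod]
  have hinj : Function.Injective (algebraMap (𝓞 F) (𝓞 E)) :=
    FaithfulSMul.algebraMap_injective _ _
  choose s hs using fun φ : 𝓞 F →+* k => exists_hom_extension (S := 𝓞 E) hinj φ
  have hs' : ∀ (φ : 𝓞 F →+* k) x, s φ (algebraMap (𝓞 F) (𝓞 E) x) = φ x :=
    fun φ x => RingHom.congr_fun (hs φ) x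
  have hτ : ∀ (τ : E ≃ₐ[F] E) (x : 𝓞 F), RingOfIntegers.mapRingHom (τ : E →+* E)
      (algebraMap (𝓞 F) (𝓞 E) x) = algebraMap (𝓞 F) (𝓞 E) x := by
    intro τ x
    ext
    exact τ.commutes x
  symm
  refine Nat.card_congr (Equiv.ofBijective (fun q =>
    ⟨(s q.2.1).comp (RingOfIntegers.mapRingHom (q.1 : E →+* E)), ?_⟩) ⟨?_, ?_⟩)
  · intro x
    rw [RingHom.comp_apply, hτ, hs']
    exact q.2.2 x
  · rintro ⟨τ, φ, hφ⟩ ⟨τ', φ', hφ'⟩ h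
    have h := congrArg Subtype.val h
    simp only at h
    have h1 : φ = φ' := by
      ext x
      have := RingHom.congr_fun h (algebraMap (𝓞 F) (𝓞 E) x)
      rwa [RingHom.comp_apply, RingHom.comp_apply, hτ, hτ, hs', hs'] at this
    subst h1
    have h2 : (τ * τ'⁻¹).restrictScalars ℚ = 1 := by
      apply hfree (s φ)
      have := RingHom.congr_fun h (RingOfIntegers.mapRingHom ((τ'⁻¹ : E ≃ₐ[F] E) : E →+* E) θ)
      rw [RingHom.comp_apply, RingHom.comp_apply] at this
      have e2 : RingOfIntegers.mapRingHom (τ' : E →+* E)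
          (RingOfIntegers.mapRingHom ((τ'⁻¹ : E ≃ₐ[F] E) : E →+* E) θ) = θ := by
        ext
        change τ' (τ'⁻¹ θ.1) = θ.1
        rw [← AlgEquiv.mul_apply, mul_inv_cancel, AlgEquiv.one_apply]
      rw [e2] at this
      exact this
    have h3 : τ * τ'⁻¹ = 1 := by
      ext x; exact DFunLike.congr_fun h2 x
    rw [mul_inv_eq_one.1 h3]
  · rintro ⟨ω, hω⟩
    obtain ⟨τ, hτ'⟩ := hom_conj (F := F) θ hθ (s (ω.comp (algebraMap (𝓞 F) (𝓞 E)))) ω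
      (fun x => by rw [hs']; rfl)
    exact ⟨⟨τ, ⟨_, hω⟩⟩, Subtype.ext hτ'.symm⟩

lemma sum_moebius_dvd (n i : ℕ) (hn : 0 < n) :
    (∑ m ∈ n.divisors, if m ∣ i then (ArithmeticFunction.moebius m : ℤ) else 0) =
      if Nat.Coprime i n then 1 else 0 := by
  rw [← Finset.sum_filter]
  have h1 : n.divisors.filter (fun m => m ∣ i) = (Nat.gcd i n).divisors := by
    ext m
    simp only [Finset.mem_filter, Nat.mem_divisors, Nat.dvd_gcd_iff]
    have : Nat.gcd i n ≠ 0 := (Nat.gcd_pos_of_pos_right i hn).ne'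
    have := hn.ne'
    tauto
  rw [h1, ← ArithmeticFunction.coe_zeta_mul_apply, ArithmeticFunction.coe_zeta_mul_moebius,
    ArithmeticFunction.one_apply]

lemma sum_moebius_mul_div (n : ℕ) (hn : 0 < n) :
    (∑ m ∈ n.divisors, ((ArithmeticFunction.moebius m : ℤ) : ℝ) * ((n / m : ℕ) : ℝ)) =
      (Nat.totient n : ℝ) := by
  have := (ArithmeticFunction.sum_eq_iff_sum_mul_moebius_eq (R := ℝ)
    (f := fun n => (Nat.totient n : ℝ)) (g := fun n => (n : ℝ))).1
    (fun n _ => by exact_mod_cast Nat.sum_totient n) n hn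
  rw [← this, Nat.sum_divisorsAntidiagonal
    (fun a b => ((ArithmeticFunction.moebius a : ℤ) : ℝ) * (b : ℝ))]

lemma isGalois_fixedField {E : Type*} [Field E] [NumberField E] (H : Subgroup (E ≃ₐ[ℚ] E)) :
    IsGalois (IntermediateField.fixedField H) E ∧
    Nat.card (E ≃ₐ[IntermediateField.fixedField H] E) = Nat.card H := by
  have h : Nat.card (E ≃ₐ[IntermediateField.fixedField H] E) = Nat.card H := by
    rw [← Nat.card_congr (IntermediateField.fixingSubgroupEquiv _).toEquiv,
      IntermediateField.fixingSubgroup_fixedField]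
  exact ⟨IsGalois.of_card_aut_eq_finrank _ _
    (by rw [h, IntermediateField.finrank_fixedField_eq_card]), h⟩

/-- The fixed field of `ρ ^ m`. -/
noncomputable abbrev powField {E : Type*} [Field E] [NumberField E] (ρ : E ≃ₐ[ℚ] E) (m : ℕ) :
    IntermediateField ℚ E :=
  IntermediateField.fixedField (Subgroup.zpowers (ρ ^ m))

/-- If no prime above `p` has a Frobenius generating `⟨ρ⟩`, then inclusion-exclusion over the
subgroups of `⟨ρ⟩` gives a linear relation between the numbers of ideals of norm `p` in the fixed
fields of the powers of `ρ`: the `m`-th term of the sum counts the homs from `𝓞 E` to `k` whose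
Frobenius lies in `⟨ρ ^ m⟩`. -/
lemma pow_moebius_identity {E : Type*} [Field E] [NumberField E] (ρ : E ≃ₐ[ℚ] E)
    (p : ℕ) [Fact p.Prime]
    (k : Type*) [Field k] [CharP k p] [Algebra (ZMod p) k] [IsAlgClosed k]
    (θ : 𝓞 E) (hθ : ∀ ω ω' : 𝓞 E →+* k, ω θ = ω' θ → ω = ω')
    (hfree : ∀ (ω : 𝓞 E →+* k) (τ : E ≃ₐ[ℚ] E),
        ω (RingOfIntegers.mapRingHom (τ : E →+* E) θ) = ω θ → τ = 1)
    (hno : ∀ (ω : 𝓞 E →+* k) (i : ℕ), Nat.Coprime i (orderOf ρ) →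
      ¬ ∀ x, ω x ^ p = ω (RingOfIntegers.mapRingHom ((ρ ^ i : E ≃ₐ[ℚ] E) : E →+* E) x)) :
    (∑ m ∈ (orderOf ρ).divisors, ((ArithmeticFunction.moebius m : ℤ) : ℝ) *
      ((orderOf ρ / m : ℕ) : ℝ) *
        (Nat.card {I : Ideal (𝓞 (powField ρ m)) // Ideal.absNorm I = p} : ℝ)) = 0 := by
  classical
  have hn : 0 < orderOf ρ := orderOf_pos ρ
  -- homs which are Frobenius-fixed on the ring of integers of `powField ρ m`
  let Ω : ℕ → Set (𝓞 E →+* k) := fun m => {ω | ∀ x : 𝓞 (powField ρ m),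
    ω (algebraMap (𝓞 (powField ρ m)) (𝓞 E) x) ^ p = ω (algebraMap (𝓞 (powField ρ m)) (𝓞 E) x)}
  have hcard : ∀ m ∈ (orderOf ρ).divisors, Nat.card (Ω m) = (orderOf ρ / m) *
      Nat.card {I : Ideal (𝓞 (powField ρ m)) // Ideal.absNorm I = p} := by
    intro m hm
    have hm' := Nat.mem_divisors.1 hm
    have hG := isGalois_fixedField (Subgroup.zpowers (ρ ^ m))
    have := hG.1
    have h := card_hom_fixed_on (F := powField ρ m) p k θ hθ hfree
    rw [hG.2, Nat.card_zpowers, orderOf_pow_of_dvd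
      (fun h => by rw [h, zero_dvd_iff] at hm'; exact hm'.2 hm'.1) hm'.1] at h
    exact h
  let frob : (𝓞 E →+* k) → (𝓞 E →+* k) := fun ω => (frobenius k p).comp ω
  -- freeness
  have hfree' : ∀ (ω : 𝓞 E →+* k) (τ τ' : E ≃ₐ[ℚ] E),
      ω.comp (RingOfIntegers.mapRingHom (τ : E →+* E)) =
      ω.comp (RingOfIntegers.mapRingHom (τ' : E →+* E)) → τ = τ' := by
    intro ω τ τ' h
    have h2 : τ'⁻¹ * τ = 1 := by
      apply hfree (ω.comp (RingOfIntegers.mapRingHom (τ' : E →+* E)))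
      rw [← h, RingHom.comp_apply, RingHom.comp_apply]
      have e := RingHom.congr_fun h (RingOfIntegers.mapRingHom ((τ'⁻¹ * τ : E ≃ₐ[ℚ] E) : E →+* E) θ)
      rw [RingHom.comp_apply, RingHom.comp_apply] at e
      rw [e]
      congr 1
      ext
      change τ' ((τ'⁻¹ * τ) θ.1) = τ θ.1
      rw [← AlgEquiv.mul_apply, mul_inv_cancel_left]
    exact (inv_mul_eq_one.1 h2).symm
  -- elements of `Ω m` have Frobenius in `⟨ρ ^ m⟩`
  have hΩ : ∀ m, ∀ ω ∈ Ω m, ∃ τ ∈ Subgroup.zpowers (ρ ^ m),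
      frob ω = ω.comp (RingOfIntegers.mapRingHom (τ : E →+* E)) := by
    intro m ω hω
    have := (isGalois_fixedField (Subgroup.zpowers (ρ ^ m))).1
    obtain ⟨τ, hτ⟩ := hom_conj (F := powField ρ m) θ hθ ω (frob ω) (fun x => (hω x).symm)
    refine ⟨τ.restrictScalars ℚ, ?_, hτ⟩
    rw [← IntermediateField.fixingSubgroup_fixedField (Subgroup.zpowers (ρ ^ m))]
    rw [IntermediateField.mem_fixingSubgroup_iff]
    intro x hx
    exact τ.commutes ⟨x, hx⟩
  have hΩ' : ∀ m ω τ, τ ∈ Subgroup.zpowers (ρ ^ m) →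
      frob ω = ω.comp (RingOfIntegers.mapRingHom (τ : E →+* E)) → ω ∈ Ω m := by
    intro m ω τ hτ h x
    have := RingHom.congr_fun h (algebraMap (𝓞 (powField ρ m)) (𝓞 E) x)
    change ω (algebraMap (𝓞 (powField ρ m)) (𝓞 E) x) ^ p = _ at this
    rw [this, RingHom.comp_apply]
    congr 1
    ext
    change τ ((x : powField ρ m) : E) = ((x : powField ρ m) : E)
    exact x.1.2 ⟨τ, hτ⟩
  have hex : ∀ ω ∈ Ω 1, ∃ i : ℕ, frob ω =
      ω.comp (RingOfIntegers.mapRingHom ((ρ ^ i : E ≃ₐ[ℚ] E) : E →+* E)) := by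
    intro ω hω
    obtain ⟨τ, hτ, h⟩ := hΩ 1 ω hω
    rw [pow_one] at hτ
    obtain ⟨i, rfl⟩ := (mem_powers_iff_mem_zpowers).2 hτ
    exact ⟨i, h⟩
  choose! idx hidx using hex
  have hsub : ∀ m, Ω m ⊆ Ω 1 := by
    intro m ω hω
    obtain ⟨τ, hτ, h⟩ := hΩ m ω hω
    refine hΩ' 1 ω τ ?_ h
    rw [pow_one]
    exact (Subgroup.zpowers_le.2 (Subgroup.pow_mem _ (Subgroup.mem_zpowers ρ) m)) hτ
  have hmem : ∀ m ∈ (orderOf ρ).divisors, ∀ ω ∈ Ω 1, (ω ∈ Ω m ↔ m ∣ idx ω) := by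
    intro m hm ω hω
    constructor
    · intro h
      obtain ⟨τ, hτ, h⟩ := hΩ m ω h
      obtain ⟨j, rfl⟩ := (mem_powers_iff_mem_zpowers).2 hτ
      have e := hfree' ω _ _ (h.symm.trans (hidx ω hω))
      simp only [← pow_mul] at e
      have := ((pow_eq_pow_iff_modEq).1 e).of_dvd (Nat.mem_divisors.1 hm).1
      exact (Nat.modEq_zero_iff_dvd.1 (this.symm.trans
        (Nat.modEq_zero_iff_dvd.2 (dvd_mul_right m j))))
    · rintro ⟨j, hj⟩
      refine hΩ' m ω _ ?_ (hidx ω hω)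
      rw [hj, pow_mul]
      exact Subgroup.pow_mem _ (Subgroup.mem_zpowers _) j
  have hfin : (Ω 1).Finite := by
    by_contra hinf
    have h1 : (Ω 1).Infinite := hinf
    have hs : Function.Injective (fun ω : 𝓞 E →+* k => ω θ) := fun a b h => hθ a b h
    have h2 := h1.image hs.injOn
    apply h2
    have hmin := NumberField.RingOfIntegers.isIntegral θ
    have hne : ((minpoly ℤ θ).map (Int.castRingHom k)) ≠ 0 :=
      ((minpoly.monic hmin).map _).ne_zero
    refine (((minpoly ℤ θ).map (Int.castRingHom k)).roots.toFinset.finite_toSet).subset ?_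
    rintro _ ⟨ω, -, rfl⟩
    simp only [Finset.mem_coe, Multiset.mem_toFinset]
    rw [mem_roots hne, IsRoot, eval_map]
    have := congrArg ω (minpoly.aeval ℤ θ)
    rw [map_zero, aeval_def, hom_eval₂] at this
    rwa [show ω.comp (algebraMap ℤ (𝓞 E)) = Int.castRingHom k from RingHom.ext_int _ _] at this
  have hIntegral : (∑ m ∈ (orderOf ρ).divisors, (ArithmeticFunction.moebius m : ℤ) *
      (Nat.card (Ω m) : ℤ)) = 0 := by
    have h1 : ∀ m ∈ (orderOf ρ).divisors, (Nat.card (Ω m) : ℤ) =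
        ∑ ω ∈ hfin.toFinset, if m ∣ idx ω then 1 else 0 := by
      intro m hm
      rw [Finset.sum_boole, Nat.card_coe_set_eq,
        ← Set.ncard_coe_finset]
      congr 2
      ext ω
      simp only [Finset.coe_filter, Set.Finite.mem_toFinset, Set.mem_ofPred_eq]
      exact ⟨fun h => ⟨hsub m h, (hmem m hm ω (hsub m h)).1 h⟩, fun h => (hmem m hm ω h.1).2 h.2⟩
    rw [Finset.sum_congr rfl (fun m hm => by rw [h1 m hm, Finset.mul_sum])]
    rw [Finset.sum_comm]
    refine Finset.sum_eq_zero fun ω hω => ?_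
    have hω' : ω ∈ Ω 1 := hfin.mem_toFinset.1 hω
    simp only [mul_ite, mul_one, mul_zero]
    rw [sum_moebius_dvd _ _ hn, if_neg]
    intro hco
    refine hno ω _ hco fun x => ?_
    exact RingHom.congr_fun (hidx ω hω') x
  have := congrArg (fun z : ℤ => (z : ℝ)) hIntegral
  simp only [Int.cast_sum, Int.cast_mul, Int.cast_zero, Int.cast_natCast] at this
  rw [← this]
  refine Finset.sum_congr rfl fun m hm => ?_
  rw [hcard m hm, mul_assoc, Nat.cast_mul]

/-- Infinitely many primes have a Frobenius generating the cyclic group `⟨ρ⟩`. -/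
lemma exists_frobenius_prime {E : Type*} [Field E] [NumberField E] (ρ : E ≃ₐ[ℚ] E) (N₀ : ℕ) :
    ∃ p : ℕ, p.Prime ∧ N₀ < p ∧ ∃ P : Ideal (𝓞 E), P.IsPrime ∧ (p : 𝓞 E) ∈ P ∧
      ∃ i : ℕ, Nat.Coprime i (orderOf ρ) ∧
        ∀ x : 𝓞 E, RingOfIntegers.mapRingHom ((ρ ^ i : E ≃ₐ[ℚ] E) : E →+* E) x - x ^ p ∈ P := by
  by_contra hcon
  obtain ⟨θ, N₁, hθ⟩ := exists_good_element E
  have hn : 0 < orderOf ρ := orderOf_pos ρ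
  let h : ℕ → ℕ → ℝ := fun m p =>
    (Nat.card {I : Ideal (𝓞 (powField ρ m)) // Ideal.absNorm I = p} : ℝ)
  let c : ℕ → ℝ := fun m => ((ArithmeticFunction.moebius m : ℤ) : ℝ) * ((orderOf ρ / m : ℕ) : ℝ)
  have hzero : ∀ p : ℕ, p.Prime → max N₀ N₁ < p →
      ∑ m ∈ (orderOf ρ).divisors, c m * h m p = 0 := by
    intro p hp hNp
    have : Fact p.Prime := ⟨hp⟩
    obtain ⟨h1, h2⟩ := hθ p ((le_max_right _ _).trans_lt hNp) (AlgebraicClosure (ZMod p))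
    refine pow_moebius_identity ρ p (AlgebraicClosure (ZMod p)) θ h1 h2 ?_
    intro ω i hi hall
    refine hcon ⟨p, hp, (le_max_left _ _).trans_lt hNp, RingHom.ker ω, RingHom.ker_isPrime ω,
      ?_, i, hi, fun x => ?_⟩
    · rw [RingHom.mem_ker, map_natCast, CharP.cast_eq_zero]
    · rw [RingHom.mem_ker, map_sub, map_pow, hall x, sub_self]
  choose C hC using fun m => prime_sum_log (powField ρ m)
  let D := (orderOf ρ).divisors
  have hall : ∀ᶠ s : ℝ in 𝓝[>] 1, ∀ m ∈ D, Summable (fun p : Nat.Primes => h m p * ((p:ℕ):ℝ)^(-s)) ∧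
      |(∑' p : Nat.Primes, h m p * ((p:ℕ):ℝ)^(-s)) + Real.log (s-1)| ≤ C m :=
    (Finset.eventually_all D).2 fun m _ => hC m
  -- the finitely many small primes contribute a bounded amount
  have hfinp : {p : Nat.Primes | (p : ℕ) ≤ max N₀ N₁}.Finite :=
    (Set.finite_Iic (max N₀ N₁)).preimage Subtype.val_injective.injOn
  let B : ℝ := ∑ p ∈ hfinp.toFinset, |∑ m ∈ D, c m * h m p|
  have hbound : ∀ᶠ s : ℝ in 𝓝[>] 1,
      (Nat.totient (orderOf ρ) : ℝ) * (- Real.log (s - 1)) ≤ B + ∑ m ∈ D, |c m| * C m := by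
    filter_upwards [hall, self_mem_nhdsWithin] with s hs hs1
    have hs1 : 1 < s := hs1
    have e1 : ∑ m ∈ D, c m * (∑' p : Nat.Primes, h m p * ((p:ℕ):ℝ)^(-s)) =
        ∑ p ∈ hfinp.toFinset, (∑ m ∈ D, c m * h m p) * ((p:ℕ):ℝ)^(-s) := by
      rw [Finset.sum_congr rfl (fun m hm => ((hs m hm).1.tsum_mul_left (c m)).symm),
        ← Summable.tsum_finsetSum (fun m hm => (hs m hm).1.mul_left (c m)),
        ← tsum_eq_sum (L := .unconditional _)]
      · refine tsum_congr fun p => ?_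
        rw [Finset.sum_mul]
        exact Finset.sum_congr rfl fun m _ => by ring
      · intro p hp
        have : max N₀ N₁ < p := by simpa using hp
        rw [hzero p p.2 this, zero_mul]
    have e2 : |∑ m ∈ D, c m * (∑' p : Nat.Primes, h m p * ((p:ℕ):ℝ)^(-s))| ≤ B := by
      rw [e1]
      refine (Finset.abs_sum_le_sum_abs _ _).trans (Finset.sum_le_sum fun p _ => ?_)
      rw [abs_mul]
      refine mul_le_of_le_one_right (abs_nonneg _) ?_
      rw [abs_of_nonneg (by positivity)]
      exact Real.rpow_le_one_of_one_le_of_nonpos (by exact_mod_cast p.2.one_lt.le) (by linarith)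
    have e3 : |∑ m ∈ D, c m * ((∑' p : Nat.Primes, h m p * ((p:ℕ):ℝ)^(-s)) + Real.log (s-1))| ≤
        ∑ m ∈ D, |c m| * C m := by
      refine (Finset.abs_sum_le_sum_abs _ _).trans (Finset.sum_le_sum fun m hm => ?_)
      rw [abs_mul]
      exact mul_le_mul_of_nonneg_left (hs m hm).2 (abs_nonneg _)
    simp only [mul_add, Finset.sum_add_distrib] at e3
    rw [← Finset.sum_mul, sum_moebius_mul_div _ hn] at e3
    have := abs_le.1 e2
    have := abs_le.1 e3
    linarith
  have hlim : Tendsto (fun s : ℝ => (Nat.totient (orderOf ρ) : ℝ) * (- Real.log (s - 1)))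
      (𝓝[>] 1) atTop := by
    refine Tendsto.const_mul_atTop (by exact_mod_cast Nat.totient_pos.2 hn) ?_
    refine tendsto_neg_atBot_atTop.comp (Real.tendsto_log_nhdsGT_zero.comp ?_)
    refine tendsto_nhdsWithin_iff.2 ⟨?_, ?_⟩
    · have : Tendsto (fun s : ℝ => s - 1) (𝓝 1) (𝓝 (1 - 1)) :=
        (continuous_id.sub continuous_const).tendsto 1
      rw [sub_self] at this
      exact this.mono_left nhdsWithin_le_nhds
    · filter_upwards [self_mem_nhdsWithin] with s hs
      exact Set.mem_Ioi.2 (sub_pos.2 (Set.mem_Ioi.1 hs))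
  obtain ⟨s, h1, h2⟩ := (hbound.and (hlim.eventually_gt_atTop (B + ∑ m ∈ D, |c m| * C m))).exists
  exact absurd h1 (not_le.2 h2)

/-! ### `p`-adic interpolation of orbits -/

/-- Orbits of a polynomial map which is congruent to the identity near `ξ` are `p`-adically
smooth: the `i`-th finite differences are divisible by `p ^ i`. -/
lemma fwdDiff_orbit_dvd {R : Type*} [CommRing R] (p : R) (F : R[X]) (ξ : R)
    (h0 : p ^ 2 ∣ F.eval ξ - ξ) (h1 : p ∣ F.derivative.eval ξ - 1) (x : R) (hx : p ∣ x - ξ) (i : ℕ) :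
    p ^ i ∣ ((fwdDiff 1)^[i] (fun t : ℕ => (fun b => F.eval b)^[t] x)) 0 := by
  obtain ⟨c, hc⟩ := h0
  obtain ⟨c', hc'⟩ := h1
  obtain ⟨z₀, hz₀⟩ := hx
  -- `F (ξ + p z) = ξ + p H(z)` with `H ≡ X` modulo `p`
  obtain ⟨k, hk⟩ := binomExpansion (F.map C) (C ξ) (C p * X)
  let q : R[X] := C c + C c' * X + k * X ^ 2
  let H : R[X] := X + C p * q
  have hH : ∀ z, F.eval (ξ + p * z) = ξ + p * H.eval z := by
    intro z
    have := congrArg (eval z) hk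
    rw [derivative_map, eval_map_apply, eval_map_apply] at this
    have e : eval z (eval (C ξ + C p * X) (map C F)) = F.eval (ξ + p * z) := by
      rw [eval_map, ← comp, eval_comp]; simp
    rw [e] at this
    rw [this]
    simp only [H, q, eval_add, eval_mul, eval_C, eval_X, eval_pow]
    linear_combination hc + hc' * p * z
  have horb : ∀ t : ℕ, (fun b => F.eval b)^[t] x = ξ + p * (fun b => H.eval b)^[t] z₀ := by
    intro t
    induction t with
    | zero => simp; linear_combination hz₀
    | succ t ih => rw [Function.iterate_succ_apply', Function.iterate_succ_apply', ih, hH]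
  have hdiff : ∀ P : R[X], ∃ P' : R[X], P.comp H - P = C p * P' := by
    intro P
    have h := sub_dvd_eval_sub (H : R[X]) X (P.map C)
    rw [eval_map, eval_map, ← comp, ← comp, comp_X] at h
    refine (dvd_trans ⟨q, ?_⟩ h)
    simp [H]
  have hall : ∀ i : ℕ, ∃ P : R[X], ∀ t : ℕ,
      ((fwdDiff 1)^[i] (fun t : ℕ => (fun b => F.eval b)^[t] x)) t =
        p ^ i * P.eval ((fun b => H.eval b)^[t] z₀) := by
    intro i
    induction i with
    | zero =>
      refine ⟨C ξ + C p * X, fun t => ?_⟩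
      simp only [Function.iterate_zero, id, horb, pow_zero, one_mul]
      simp
    | succ i ih =>
      obtain ⟨P, hP⟩ := ih
      obtain ⟨P', hP'⟩ := hdiff P
      refine ⟨P', fun t => ?_⟩
      rw [Function.iterate_succ_apply', fwdDiff, hP, hP, Function.iterate_succ_apply']
      have := congrArg (eval ((fun b => H.eval b)^[t] z₀)) hP'
      rw [eval_sub, eval_comp, eval_mul, eval_C] at this
      rw [← mul_sub, this, pow_succ, mul_assoc]
  obtain ⟨P, hP⟩ := hall i
  exact ⟨_, hP 0⟩

lemma val_natCast_le_one {E : Type*} [Field E] (v : AbsoluteValue E ℝ) (hv : IsNonarchimedean v)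
    (n : ℕ) : v n ≤ 1 := hv.apply_natCast_le_one

lemma val_intCast_le_one {E : Type*} [Field E] (v : AbsoluteValue E ℝ) (hv : IsNonarchimedean v)
    (n : ℤ) : v n ≤ 1 := hv.apply_intCast_le_one

lemma val_natCast_coprime {E : Type*} [Field E] (v : AbsoluteValue E ℝ) (hv : IsNonarchimedean v)
    (p n : ℕ) (hp : v p < 1) (hn : Nat.Coprime n p) : v n = 1 := by
  refine le_antisymm (val_natCast_le_one v hv n) ?_
  by_contra h
  push Not at h
  have hb := Nat.gcd_eq_gcd_ab n p
  rw [hn.gcd_eq_one] at hb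
  have hb' : (1 : E) = n * (n.gcdA p : ℤ) + p * (n.gcdB p : ℤ) := by
    have := congrArg (Int.cast : ℤ → E) hb
    push_cast at this
    exact this
  have h1 : v ((n : E) * (n.gcdA p : ℤ)) < 1 := by
    rw [map_mul]
    exact mul_lt_one_of_nonneg_of_lt_one_left (v.nonneg _) h (val_intCast_le_one v hv _)
  have h2 : v ((p : E) * (n.gcdB p : ℤ)) < 1 := by
    rw [map_mul]
    exact mul_lt_one_of_nonneg_of_lt_one_left (v.nonneg _) hp (val_intCast_le_one v hv _)
  have := hv ((n : E) * (n.gcdA p : ℤ)) ((p : E) * (n.gcdB p : ℤ))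
  rw [← hb', map_one] at this
  exact absurd this (not_le.2 (max_lt h1 h2))

lemma val_factorial {E : Type*} [Field E] (v : AbsoluteValue E ℝ) (hv : IsNonarchimedean v)
    (p : ℕ) (hp : p.Prime) (hvp : v p < 1) (n : ℕ) :
    v (n.factorial : E) = v (p : E) ^ (padicValNat p n.factorial) := by
  have : Fact p.Prime := ⟨hp⟩
  obtain ⟨m, hm⟩ := pow_padicValNat_dvd (p := p) (n := n.factorial)
  have hco : Nat.Coprime m p := by
    rw [Nat.coprime_comm, hp.coprime_iff_not_dvd]
    rintro ⟨l, rfl⟩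
    apply pow_succ_padicValNat_not_dvd (p := p) (n := n.factorial) (Nat.factorial_ne_zero n)
    exact ⟨l, by rw [pow_succ, mul_assoc]; exact hm⟩
  conv_lhs => rw [hm]
  rw [Nat.cast_mul, map_mul, val_natCast_coprime v hv p m hvp hco, mul_one, Nat.cast_pow, map_pow]

/-- Strassmann's theorem in terms of finite differences. -/
lemma strassmann {E : Type*} [Field E] [CharZero E] (v : AbsoluteValue E ℝ)
    (hv : IsNonarchimedean v) (p : ℕ) (hp : p.Prime) (hp3 : 3 ≤ p) (hvp : v p < 1)
    (e : ℕ → E) (he : ∀ i, v (((fwdDiff 1)^[i] e) 0) ≤ v p ^ i)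
    (hz : {t | e t = 0}.Infinite) (t : ℕ) : e t = 0 := by
  classical
  let d : ℕ → E := fun i => ((fwdDiff 1)^[i] e) 0 / (i.factorial : E)
  have hd : ∀ i, v (d i) ^ 2 ≤ v p ^ i := by
    intro i
    have : Fact p.Prime := ⟨hp⟩
    have h2 : 2 * padicValNat p i.factorial ≤ i := by
      have := sub_one_mul_padicValNat_factorial (p := p) i
      have h3 : 2 * padicValNat p i.factorial ≤ (p - 1) * padicValNat p i.factorial :=
        Nat.mul_le_mul_right _ (by omega)
      omega
    have hpos : 0 < v (p : E) := v.pos (by exact_mod_cast hp.ne_zero)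
    simp only [d]
    rw [map_div₀, val_factorial v hv p hp hvp, div_pow, div_le_iff₀ (by positivity), ← pow_mul]
    calc v (((fwdDiff 1)^[i] e) 0) ^ 2 ≤ (v p ^ i) ^ 2 := by gcongr; exact he i
      _ = v p ^ i * v p ^ i := by ring
      _ ≤ v p ^ i * v p ^ (padicValNat p i.factorial * 2) := by
        refine mul_le_mul_of_nonneg_left ?_ (by positivity)
        exact pow_le_pow_of_le_one hpos.le hvp.le (by omega)
  have hexp : ∀ M t : ℕ, t ≤ M → e t = ∑ i ∈ Finset.range (M + 1),
      d i * ((descPochhammer ℤ i).eval (t : ℤ) : ℤ) := by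
    intro M t htM
    have h := shift_eq_sum_fwdDiff_iter 1 e t 0
    simp only [zero_add, smul_eq_mul, mul_one] at h
    rw [h]
    refine (Finset.sum_subset (Finset.range_mono (by omega)) ?_).trans
      (Finset.sum_congr rfl fun i _ => ?_)
    · intro i _ hi
      rw [Nat.choose_eq_zero_of_lt (by simpa using hi), zero_smul]
    · rw [descPochhammer_eval_eq_descFactorial, Nat.descFactorial_eq_factorial_mul_choose]
      have : (i.factorial : E) ≠ 0 := by exact_mod_cast i.factorial_ne_zero
      simp only [d]
      push_cast
      rw [nsmul_eq_mul]
      field_simp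
  by_contra hne
  obtain ⟨i₀, hi₀⟩ : ∃ i, d i ≠ 0 := by
    by_contra hall
    push Not at hall
    apply hne
    rw [hexp t t le_rfl]
    exact Finset.sum_eq_zero fun i _ => by rw [hall i, zero_mul]
  -- the last index at which `v (d i)` is maximal
  have hev : ∃ M, ∀ i, M ≤ i → v (d i) < v (d i₀) := by
    have hlim := (tendsto_pow_atTop_nhds_zero_of_lt_one (v.nonneg (p : E)) hvp)
    have hpos : 0 < v (d i₀) ^ 2 := pow_pos (v.pos hi₀) 2
    obtain ⟨M, hM⟩ := eventually_atTop.1 (hlim.eventually_lt_const hpos)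
    exact ⟨M, fun i hi => lt_of_pow_lt_pow_left₀ 2 (v.nonneg _) ((hd i).trans_lt (hM i hi))⟩
  obtain ⟨M₀, hM₀⟩ := hev
  have hNex : ∃ N, v (d i₀) ≤ v (d N) ∧ (∀ i, v (d i) ≤ v (d N)) ∧ ∀ i, N < i → v (d i) < v (d N) := by
    have hi₀M : i₀ < M₀ := by
      by_contra h
      exact lt_irrefl _ (hM₀ i₀ (not_lt.1 h))
    obtain ⟨N₁, hN₁, hmax⟩ := Finset.exists_max_image (Finset.range M₀) (fun i => v (d i))
      ⟨i₀, Finset.mem_range.2 hi₀M⟩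
    have hmax' : ∀ i, v (d i) ≤ v (d N₁) := by
      intro i
      by_cases hi : i < M₀
      · exact hmax i (Finset.mem_range.2 hi)
      · exact (hM₀ i (not_lt.1 hi)).le.trans (hmax i₀ (Finset.mem_range.2 hi₀M))
    let T := (Finset.range M₀).filter (fun i => v (d i) = v (d N₁))
    have hT : T.Nonempty := ⟨N₁, Finset.mem_filter.2 ⟨hN₁, rfl⟩⟩
    have hmem := Finset.mem_filter.1 (T.max'_mem hT)
    refine ⟨T.max' hT, ?_, ?_, ?_⟩
    · rw [hmem.2]; exact hmax' i₀
    · rw [hmem.2]; exact hmax'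
    · intro i hi
      rw [hmem.2]
      refine lt_of_le_of_ne (hmax' i) fun heq => ?_
      have : i ∈ T := by
        refine Finset.mem_filter.2 ⟨?_, heq⟩
        by_contra h
        have := hM₀ i (by simpa using h)
        rw [heq] at this
        exact absurd this (not_lt.2 (hmax' i₀))
      exact absurd (T.le_max' i this) (not_le.2 hi)
  obtain ⟨N, hN0, -, hNlt⟩ := hNex
  have hdN : 0 < v (d N) := (v.pos hi₀).trans_le hN0
  obtain ⟨Z, hZsub, hZcard⟩ := hz.exists_subset_card_eq (N + 1)
  let W : ℤ[X] := ∏ t ∈ Z, (X - C (t : ℤ))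
  have hW : W.Monic := monic_prod_of_monic _ _ fun t _ => monic_X_sub_C _
  have hWdeg : W.natDegree = N + 1 := by
    rw [natDegree_prod_of_monic _ _ fun t _ => monic_X_sub_C _]
    simp only [natDegree_X_sub_C, Finset.sum_const, smul_eq_mul, mul_one, hZcard]
  let M := max N (Z.sup id)
  let Q : E[X] := ∑ i ∈ Finset.range (M + 1), d i • (descPochhammer ℤ i).map (Int.castRingHom E)
  have hWQ : W.map (Int.castRingHom E) ∣ Q := by
    simp only [W, Polynomial.map_prod]
    refine Finset.prod_dvd_of_coprime ?_ ?_
    · intro s _ t _ hst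
      simp only [Function.onFun, Polynomial.map_sub, map_X, map_C]
      refine pairwise_coprime_X_sub_C (s := fun t : ℕ => ((Int.castRingHom E) (t : ℤ))) ?_ hst
      intro a b h
      simpa using h
    · intro t ht
      simp only [Polynomial.map_sub, map_X, map_C]
      rw [dvd_iff_isRoot, IsRoot]
      have h0 : e t = 0 := hZsub ht
      rw [hexp M t ((Finset.le_sup (f := id) ht).trans (le_max_right _ _))] at h0
      rw [← h0, eval_finsetSum]
      refine Finset.sum_congr rfl fun i _ => ?_
      rw [eval_smul, eval_map_apply, smul_eq_mul]
      rfl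
  have hWm : (W.map (Int.castRingHom E)).Monic := hW.map _
  have hmod := (modByMonic_eq_zero_iff_dvd hWm).2 hWQ
  have hlin : Q %ₘ (W.map (Int.castRingHom E)) = ∑ i ∈ Finset.range (M + 1),
      d i • ((descPochhammer ℤ i) %ₘ W).map (Int.castRingHom E) := by
    have := map_sum (modByMonicHom (W.map (Int.castRingHom E)))
      (fun i => d i • (descPochhammer ℤ i).map (Int.castRingHom E)) (Finset.range (M + 1))
    simp only [map_smul, modByMonicHom_apply] at this
    rw [this]
    exact Finset.sum_congr rfl fun i _ => by rw [map_modByMonic _ hW]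
  rw [hlin] at hmod
  have hcoeff := congrArg (fun P : E[X] => P.coeff N) hmod
  simp only [finsetSum_coeff, coeff_smul, coeff_map, coeff_zero, smul_eq_mul] at hcoeff
  have hNM : N ∈ Finset.range (M + 1) := Finset.mem_range.2 (Nat.lt_succ_of_le (le_max_left _ _))
  rw [← Finset.add_sum_erase _ _ hNM] at hcoeff
  have hsmall : ∀ i ≤ N, (descPochhammer ℤ i) %ₘ W = descPochhammer ℤ i := by
    intro i hi
    rw [modByMonic_eq_self_iff hW]
    rw [degree_eq_natDegree (monic_descPochhammer ℤ i).ne_zero, degree_eq_natDegree hW.ne_zero,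
      hWdeg, descPochhammer_natDegree]
    exact_mod_cast Nat.lt_succ_of_le hi
  have hNone : (descPochhammer ℤ N).coeff N = 1 := by
    have := (monic_descPochhammer ℤ N).coeff_natDegree
    rwa [descPochhammer_natDegree] at this
  rw [hsmall N le_rfl, hNone, map_one, mul_one] at hcoeff
  have hrest : v (∑ i ∈ (Finset.range (M + 1)).erase N,
      d i * (Int.castRingHom E) (((descPochhammer ℤ i) %ₘ W).coeff N)) < v (d N) := by
    rcases ((Finset.range (M + 1)).erase N).eq_empty_or_nonempty with h | h
    · rw [h]; simpa using hdN
    obtain ⟨i, hi, hle⟩ := hv.finset_image_add_of_nonempty (fun i =>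
      d i * (Int.castRingHom E) (((descPochhammer ℤ i) %ₘ W).coeff N)) h
    refine hle.trans_lt ?_
    rcases lt_or_ge N i with hNi | hiN
    · rw [map_mul]
      exact (mul_le_of_le_one_right (v.nonneg _) (val_intCast_le_one v hv _)).trans_lt (hNlt i hNi)
    · rw [hsmall i hiN, coeff_eq_zero_of_natDegree_lt, map_zero, mul_zero, map_zero]
      · exact hdN
      · rw [descPochhammer_natDegree]
        exact lt_of_le_of_ne hiN (Finset.mem_erase.1 hi).1
  rw [eq_neg_of_add_eq_zero_left hcoeff, v.map_neg] at hrest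
  exact lt_irrefl _ hrest

/-- The `k`-th iterate of a polynomial under composition. -/
noncomputable def polyIter {R : Type*} [CommRing R] (f : R[X]) (k : ℕ) : R[X] := (f.comp)^[k] X

lemma polyIter_zero {R : Type*} [CommRing R] (f : R[X]) : polyIter f 0 = X := rfl

lemma polyIter_succ {R : Type*} [CommRing R] (f : R[X]) (k : ℕ) :
    polyIter f (k + 1) = f.comp (polyIter f k) := Function.iterate_succ_apply' _ _ _

lemma eval_polyIter {R : Type*} [CommRing R] (f : R[X]) (k : ℕ) (x : R) :
    (polyIter f k).eval x = (fun b => f.eval b)^[k] x := by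
  rw [polyIter, iterate_comp_eval, eval_X]

lemma map_polyIter {R S : Type*} [CommRing R] [CommRing S] (φ : R →+* S) (f : R[X]) (k : ℕ) :
    (polyIter f k).map φ = polyIter (f.map φ) k := by
  induction k with
  | zero => rw [polyIter_zero, polyIter_zero, map_X]
  | succ k ih => rw [polyIter_succ, polyIter_succ, map_comp, ih]

lemma iterate_map {R S : Type*} [CommRing R] [CommRing S] (φ : R →+* S) (f : R[X]) (k : ℕ) (x : R) :
    φ ((fun b => f.eval b)^[k] x) = (fun b => (f.map φ).eval b)^[k] (φ x) := by
  rw [← eval_polyIter, ← eval_polyIter, ← map_polyIter, eval_map_apply]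

lemma dvd_iterate_sub {R : Type*} [CommRing R] (f : R[X]) (k : ℕ) (q x y : R) (h : q ∣ x - y) :
    q ∣ (fun b => f.eval b)^[k] x - (fun b => f.eval b)^[k] y := by
  rw [← eval_polyIter, ← eval_polyIter]
  exact h.trans (sub_dvd_eval_sub x y _)

/-- Chain rule modulo `q` for iterates at a point which is fixed modulo `q`. -/
lemma derivative_polyIter_dvd {R : Type*} [CommRing R] (F : R[X]) (ξ q : R)
    (h : q ∣ F.eval ξ - ξ) (k : ℕ) :
    q ∣ (polyIter F k).eval ξ - ξ ∧
    q ∣ (polyIter F k).derivative.eval ξ - (F.derivative.eval ξ) ^ k := by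
  induction k with
  | zero => simp [polyIter_zero]
  | succ k ih =>
    obtain ⟨h1, h2⟩ := ih
    constructor
    · rw [polyIter_succ, eval_comp]
      have := (h1.trans (sub_dvd_eval_sub _ _ F))
      have := dvd_add this h
      simpa using this
    · rw [polyIter_succ, derivative_comp, eval_mul, eval_comp, pow_succ]
      have h3 := h1.trans (sub_dvd_eval_sub _ _ (derivative F))
      obtain ⟨a, ha⟩ := h2
      obtain ⟨b, hb⟩ := h3
      refine ⟨a * eval ((polyIter F k).eval ξ) (derivative F) + F.derivative.eval ξ ^ k * b, ?_⟩
      linear_combination eval ((polyIter F k).eval ξ) (derivative F) * ha +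
        F.derivative.eval ξ ^ k * hb

lemma exists_infinite_class {S : Set ℕ} (hS : S.Infinite) (n₁ m : ℕ) (hm : 0 < m) :
    ∃ c, {t : ℕ | n₁ + c + m * t ∈ S}.Infinite := by
  by_contra hcon
  push Not at hcon
  apply hS
  have : S ⊆ Set.Iio n₁ ∪ ⋃ c ∈ Finset.range m, (fun t => n₁ + c + m * t) '' {t : ℕ | n₁ + c + m * t ∈ S} := by
    intro n hn
    by_cases h : n < n₁
    · exact Or.inl h
    · right
      simp only [Set.mem_iUnion]
      have e : n₁ + (n - n₁) % m + m * ((n - n₁) / m) = n := by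
        rw [add_assoc, Nat.mod_add_div]; omega
      refine ⟨(n - n₁) % m, Finset.mem_range.2 (Nat.mod_lt _ hm), (n - n₁) / m, ?_, e⟩
      change n₁ + (n - n₁) % m + m * ((n - n₁) / m) ∈ S
      rwa [e]
  refine Set.Finite.subset ?_ this
  exact (Set.finite_Iio n₁).union
    (Set.Finite.biUnion (Finset.finite_toSet _) fun c _ => (hcon c).image _)

lemma val_eval_le {E : Type*} [Field E] (v : AbsoluteValue E ℝ)
    (A : E[X]) : ∃ C : ℝ, 0 ≤ C ∧ ∀ x, v x ≤ 1 → v (A.eval x) ≤ C := by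
  refine ⟨∑ i ∈ Finset.range (A.natDegree + 1), v (A.coeff i),
    Finset.sum_nonneg fun i _ => v.nonneg _, fun x hx => ?_⟩
  rw [eval_eq_sum_range]
  refine (v.sum_le _ _).trans (Finset.sum_le_sum fun i _ => ?_)
  rw [map_mul, map_pow]
  exact mul_le_of_le_one_right (v.nonneg _) (pow_le_one₀ (v.nonneg _) hx)

/-- If `ρ` fixes all points of an infinite orbit of the `k`-th iterate of `g`, it fixes the coefficients
of this iterate. -/
lemma polyIter_eq_of_orbit {E : Type*} [Field E] (ρ : E ≃+* E) (g : E[X]) (k : ℕ) (x : ℕ → E)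
    (hx : ∀ t, (fun b => g.eval b)^[k] (x t) = x (t + 1)) (hinj : Function.Injective x)
    (hfix : ∀ t, ρ (x t) = x t) :
    (polyIter g k).map (ρ : E →+* E) = polyIter g k := by
  refine Polynomial.eq_of_infinite_eval_eq _ _
    (Set.Infinite.mono ?_ (Set.infinite_range_of_injective hinj))
  rintro _ ⟨t, rfl⟩
  change eval (x t) _ = eval (x t) _
  rw [eval_polyIter, hx, ← hfix (t + 1), ← hx t, ← eval_polyIter]
  have := eval_map_apply (p := polyIter g k) (f := (ρ : E →+* E)) (x t)
  rw [RingEquiv.coe_toRingHom, hfix] at this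
  exact this

/-- The local step. Let `ρ` preserve `v` and fix infinitely many points of the orbit of `a`. Modulo
`p ^ 2` the orbit is eventually periodic, of period `m` say; the multiplier of this residual cycle
is either a non-unit or a unit. In the first case the orbit converges along arithmetic progressions
of difference `m`, so that the greatest common divisor of `f^m - X` and its conjugate becomes
arbitrarily small on the orbit, which `hR` excludes. In the second case a multiple of `m` gives
progressions along which the orbit is `p`-adically analytic, and Strassmann's theorem shows that
`ρ` fixes such a progression entirely. -/
lemma local_dichotomy {E : Type*} [Field E] [CharZero E] (v : AbsoluteValue E ℝ)
    (hv : IsNonarchimedean v) (p : ℕ) (hp : p.Prime) (hp3 : 3 ≤ p) (hvp : v p < 1)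
    (𝒪 : Subring E) (h𝒪 : ∀ x, x ∈ 𝒪 ↔ v x ≤ 1)
    (hfin : Finite (𝒪 ⧸ Ideal.span {((p : 𝒪)) ^ 2}))
    (ρ : E ≃+* E) (hρ : ∀ x, v (ρ x) = v x) (f : 𝒪[X]) (a : 𝒪)
    (hinj : Function.Injective fun n => (fun x => f.eval x)^[n] a)
    (hS : {n | ρ (((fun x => f.eval x)^[n] a : 𝒪) : E) = ((fun x => f.eval x)^[n] a : 𝒪)}.Infinite)
    (hR : ∀ m ≥ 1, ∀ R : E[X], R.Monic → R ∣ polyIter (f.map 𝒪.subtype) m - X →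
      R ∣ (polyIter (f.map 𝒪.subtype) m).map (ρ : E →+* E) - X → ∀ n,
      1 ≤ v (R.eval (((fun x => f.eval x)^[n] a : 𝒪) : E))) :
    ∃ k ≥ 1, (polyIter (f.map 𝒪.subtype) k).map (ρ : E →+* E) = polyIter (f.map 𝒪.subtype) k := by
  classical
  set b : ℕ → 𝒪 := fun n => (fun x => f.eval x)^[n] a with hb
  have hbadd : ∀ n k, (fun x => f.eval x)^[k] (b n) = b (n + k) := by
    intro n k
    simp only [hb]
    rw [add_comm n k, Function.iterate_add_apply]
  have hpb : v (p : E) < 1 := hvp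
  -- eventual periodicity modulo `p ^ 2`
  obtain ⟨n₁, n₂, hlt, hcong⟩ : ∃ n₁ n₂, n₁ < n₂ ∧ (p : 𝒪) ^ 2 ∣ b n₂ - b n₁ := by
    obtain ⟨x, y, hxy, h⟩ := Finite.exists_ne_map_eq_of_infinite
      (fun n => Ideal.Quotient.mk (Ideal.span {((p : 𝒪)) ^ 2}) (b n))
    rcases lt_or_gt_of_ne hxy with hl | hl
    · exact ⟨x, y, hl, Ideal.mem_span_singleton.1 (Ideal.Quotient.eq.1 h.symm)⟩
    · exact ⟨y, x, hl, Ideal.mem_span_singleton.1 (Ideal.Quotient.eq.1 h)⟩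
  obtain ⟨m, rfl⟩ : ∃ m, n₂ = n₁ + m := ⟨n₂ - n₁, by omega⟩
  have hm : 0 < m := by omega
  obtain ⟨c, hc⟩ := exists_infinite_class hS n₁ m hm
  set ξ : 𝒪 := b (n₁ + c) with hξ
  let F : 𝒪[X] := polyIter f m
  have hFb : ∀ n, F.eval (b n) = b (n + m) := fun n => by
    rw [eval_polyIter]; exact hbadd n m
  have hFξ : (p : 𝒪) ^ 2 ∣ F.eval ξ - ξ := by
    rw [hξ, hFb, show n₁ + c + m = n₁ + m + c by ring, ← hbadd (n₁ + m) c, ← hbadd n₁ c]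
    exact dvd_iterate_sub f c _ _ _ hcong
  let x : ℕ → 𝒪 := fun t => b (n₁ + c + m * t)
  have hx0 : x 0 = ξ := by simp [x, hξ]
  have hxF : ∀ t, F.eval (x t) = x (t + 1) := fun t => by
    simp only [x]; rw [hFb]; congr 1; ring
  have hxiter : ∀ t s, (fun y => F.eval y)^[t] (x s) = x (s + t) := by
    intro t s
    induction t with
    | zero => rfl
    | succ t ih => rw [Function.iterate_succ_apply', ih, hxF]; rfl
  have hxξ : ∀ t, (p : 𝒪) ^ 2 ∣ x t - ξ := by
    intro t
    have := (derivative_polyIter_dvd F ξ _ hFξ t).1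
    rw [eval_polyIter, ← hx0, hxiter, zero_add] at this
    rwa [hx0] at this
  have hxinj : Function.Injective x := fun t s h => by
    have := hinj h
    exact Nat.eq_of_mul_eq_mul_left hm (by omega)
  let lam : 𝒪 := F.derivative.eval ξ
  have hle : ∀ y : 𝒪, v (y : E) ≤ 1 := fun y => (h𝒪 _).1 y.2
  have hdvd : ∀ y z : 𝒪, y ∣ z → v (z : E) ≤ v (y : E) := by
    rintro y _ ⟨z, rfl⟩
    push_cast
    rw [map_mul]
    exact mul_le_of_le_one_right (v.nonneg _) (hle z)
  rcases lt_or_eq_of_le (hle lam) with hlam | hlam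
  · -- attracting case
    exfalso
    let c₀ : ℝ := max (v (lam : E)) (v (p : E))
    have hc₀ : c₀ < 1 := max_lt hlam hvp
    have hc₀0 : 0 ≤ c₀ := (v.nonneg _).trans (le_max_left _ _)
    have hpdvd : (p : 𝒪) ∣ (p : 𝒪) ^ 2 := dvd_pow_self _ two_ne_zero
    have hstep : ∀ t, v ((x (t + 2) : E) - x (t + 1)) ≤ c₀ * v ((x (t + 1) : E) - x t) := by
      intro t
      obtain ⟨k, hk⟩ := binomExpansion F (x t) (x (t + 1) - x t)
      rw [add_sub_cancel, hxF, hxF] at hk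
      have hd : (p : 𝒪) ∣ F.derivative.eval (x t) + k * (x (t + 1) - x t) - lam := by
        have h1 : (p : 𝒪) ∣ F.derivative.eval (x t) - lam :=
          (hpdvd.trans (hxξ t)).trans (sub_dvd_eval_sub _ _ _)
        have h2 : (p : 𝒪) ∣ x (t + 1) - x t := by
          have := dvd_sub (hpdvd.trans (hxξ (t + 1))) (hpdvd.trans (hxξ t))
          simpa using this
        have := dvd_add h1 (h2.mul_left k)
        convert this using 1; ring
      have hv1 : v ((F.derivative.eval (x t) + k * (x (t + 1) - x t) : 𝒪) : E) ≤ c₀ := by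
        have e : ((F.derivative.eval (x t) + k * (x (t + 1) - x t) : 𝒪) : E) =
          ((F.derivative.eval (x t) + k * (x (t + 1) - x t) - lam : 𝒪) : E) + lam := by
          push_cast; ring
        rw [e]
        refine (hv _ _).trans (max_le ?_ (le_max_left _ _))
        exact (hdvd _ _ hd).trans (by simp [c₀])
      have e : (x (t + 2) : E) - x (t + 1) =
          ((F.derivative.eval (x t) + k * (x (t + 1) - x t) : 𝒪) : E) * ((x (t + 1) : E) - x t) := by
        have := congrArg (fun y : 𝒪 => (y : E)) hk
        push_cast at this ⊢
        linear_combination this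
      rw [e, map_mul]
      exact mul_le_mul_of_nonneg_right hv1 (v.nonneg _)
    have hdecay : ∀ t, v ((x (t + 1) : E) - x t) ≤ c₀ ^ t := by
      intro t
      induction t with
      | zero =>
        have := hle (x 1 - x 0)
        simpa using this
      | succ t ih =>
        refine (hstep t).trans ?_
        rw [pow_succ, mul_comm]
        exact mul_le_mul_of_nonneg_right ih hc₀0
    -- the gcd of the two fixed point polynomials is small along the orbit
    let G : E[X] := polyIter (f.map 𝒪.subtype) m
    have hGmap : G = F.map 𝒪.subtype := (map_polyIter _ _ _).symm
    let A₁ : E[X] := G - X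
    let A₂ : E[X] := G.map (ρ : E →+* E) - X
    have hA₁ : A₁ ≠ 0 := by
      intro h
      have h1 : G.eval (x 0 : E) = x 0 := by
        have := congrArg (eval (x 0 : E)) h
        simpa [A₁, sub_eq_zero] using this
      have h2 : G.eval (x 0 : E) = x 1 := by
        rw [hGmap]
        have := eval_map_apply (p := F) (f := 𝒪.subtype) (x 0)
        rw [hxF] at this
        exact this
      have : x 1 = x 0 := Subtype.ext (h2.symm.trans h1)
      exact absurd (hxinj this) (by norm_num)
    have hGx : ∀ t, G.eval (x t : E) = x (t + 1) := by
      intro t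
      rw [hGmap]
      have := eval_map_apply (p := F) (f := 𝒪.subtype) (x t)
      rw [hxF] at this
      exact this
    let g := EuclideanDomain.gcd A₁ A₂
    have hg0 : g ≠ 0 := fun h => hA₁ (EuclideanDomain.gcd_eq_zero_iff.1 h).1
    have hbez : g = A₁ * EuclideanDomain.gcdA A₁ A₂ + A₂ * EuclideanDomain.gcdB A₁ A₂ :=
      EuclideanDomain.gcd_eq_gcd_ab A₁ A₂
    obtain ⟨C₁, hC₁0, hC₁⟩ := val_eval_le v (EuclideanDomain.gcdA A₁ A₂)
    obtain ⟨C₂, hC₂0, hC₂⟩ := val_eval_le v (EuclideanDomain.gcdB A₁ A₂)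
    have hlc : g.leadingCoeff ≠ 0 := leadingCoeff_ne_zero.2 hg0
    have hunit : IsUnit (C (g.leadingCoeff⁻¹) : E[X]) :=
      isUnit_C.2 (IsUnit.mk0 _ (inv_ne_zero hlc))
    have hmon : (g * C (g.leadingCoeff⁻¹)).Monic := monic_mul_leadingCoeff_inv hg0
    have hd1 : g * C (g.leadingCoeff⁻¹) ∣ A₁ :=
      (hunit.mul_right_dvd).2 (EuclideanDomain.gcd_dvd_left _ _)
    have hd2 : g * C (g.leadingCoeff⁻¹) ∣ A₂ :=
      (hunit.mul_right_dvd).2 (EuclideanDomain.gcd_dvd_right _ _)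
    have hbig := hR m hm _ hmon hd1 hd2
    -- choose a large index in the fixed set
    have hlim : Tendsto (fun t : ℕ => (C₁ + C₂) * c₀ ^ t) atTop (𝓝 ((C₁ + C₂) * 0)) :=
      (tendsto_pow_atTop_nhds_zero_of_lt_one hc₀0 hc₀).const_mul _
    rw [mul_zero] at hlim
    obtain ⟨T, hT⟩ := eventually_atTop.1
      (hlim.eventually_lt_const (v.pos hlc))
    obtain ⟨t, ht, hTt⟩ := hc.exists_gt T
    have hfix : ρ (x t : E) = x t := ht
    have hA1x : v (A₁.eval (x t : E)) ≤ c₀ ^ t := by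
      simp only [A₁, eval_sub, eval_X, hGx]
      exact hdecay t
    have hA2x : v (A₂.eval (x t : E)) ≤ c₀ ^ t := by
      have e : A₂.eval (x t : E) = ρ ((x (t + 1) : E) - x t) := by
        simp only [A₂, eval_sub, eval_X, map_sub, hfix]
        rw [← hGx t]
        have := eval_map_apply (p := G) (f := (ρ : E →+* E)) (x t : E)
        rw [RingEquiv.coe_toRingHom, hfix] at this
        rw [this]
      rw [e, hρ]
      exact hdecay t
    have hgx : v (g.eval (x t : E)) ≤ (C₁ + C₂) * c₀ ^ t := by
      conv_lhs => rw [hbez]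
      rw [eval_add, eval_mul, eval_mul]
      refine (v.add_le _ _).trans ?_
      rw [map_mul, map_mul, add_mul]
      have hp0 : 0 ≤ c₀ ^ t := pow_nonneg hc₀0 t
      refine add_le_add ?_ ?_
      · rw [mul_comm]
        exact mul_le_mul (hC₁ _ (hle _)) hA1x (v.nonneg _) hC₁0
      · rw [mul_comm]
        exact mul_le_mul (hC₂ _ (hle _)) hA2x (v.nonneg _) hC₂0
    have h1 := hbig (n₁ + c + m * t)
    rw [eval_mul, eval_C, map_mul, map_inv₀, ← div_eq_mul_inv, one_le_div (v.pos hlc)] at h1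
    exact absurd (h1.trans hgx) (not_le.2 (hT t hTt.le))
  · -- indifferent case
    have hlam0 : (lam : E) ≠ 0 := by
      intro h; rw [h, map_zero] at hlam; exact zero_ne_one hlam
    have hunit : IsUnit lam := by
      refine IsUnit.of_mul_eq_one ⟨(lam : E)⁻¹, (h𝒪 _).2 (by rw [map_inv₀, hlam, inv_one])⟩ ?_
      exact Subtype.ext (mul_inv_cancel₀ hlam0)
    obtain ⟨N', hN', hpow⟩ : ∃ N' > 0, (p : 𝒪) ^ 2 ∣ lam ^ N' - 1 := by
      have hu := hunit.map (Ideal.Quotient.mk (Ideal.span {((p : 𝒪)) ^ 2}))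
      obtain ⟨u, hu⟩ := hu
      obtain ⟨N', hN', h⟩ := (isOfFinOrder_of_finite u).exists_pow_eq_one
      refine ⟨N', hN', Ideal.mem_span_singleton.1 (Ideal.Quotient.eq.1 ?_)⟩
      rw [map_pow, map_one, ← hu, ← Units.val_pow_eq_pow_val, h, Units.val_one]
    obtain ⟨c', hc'⟩ := exists_infinite_class hc 0 N' hN'
    let H : 𝒪[X] := polyIter F N'
    let y : ℕ → 𝒪 := fun t => x (c' + N' * t)
    have hHx : ∀ s, H.eval (x s) = x (s + N') := fun s => by
      rw [eval_polyIter]; exact hxiter N' s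
    have hyiter : ∀ t, (fun z => H.eval z)^[t] (y 0) = y t := by
      intro t
      induction t with
      | zero => rfl
      | succ t ih =>
        rw [Function.iterate_succ_apply', ih]
        simp only [y]
        rw [hHx]; congr 1; ring
    have hpdvd : (p : 𝒪) ∣ (p : 𝒪) ^ 2 := dvd_pow_self _ two_ne_zero
    have hder := derivative_polyIter_dvd F ξ _ hFξ N'
    have hHd : (p : 𝒪) ∣ H.derivative.eval ξ - 1 := by
      have := dvd_add (hpdvd.trans hder.2) (hpdvd.trans hpow)
      convert this using 1
      simp only [H, lam]
      ring
    have hdiffs := fwdDiff_orbit_dvd (p : 𝒪) H ξ hder.1 hHd (y 0) (hpdvd.trans (hxξ _))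
    have hyfun : (fun t : ℕ => (fun z => H.eval z)^[t] (y 0)) = y := funext hyiter
    rw [hyfun] at hdiffs
    let e : ℕ → E := fun t => (y t : E) - ρ (y t)
    have hediff : ∀ i t, ((fwdDiff 1)^[i] e) t =
        ((((fwdDiff 1)^[i] y) t : 𝒪) : E) - ρ ((((fwdDiff 1)^[i] y) t : 𝒪) : E) := by
      intro i
      induction i with
      | zero => intro t; rfl
      | succ i ih =>
        intro t
        simp only [Function.iterate_succ_apply', fwdDiff, ih]
        push_cast
        rw [map_sub]
        ring
    have hzero := strassmann v hv p hp hp3 hvp e (fun i => ?_) ?_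
    rotate_left
    · rw [hediff]
      have hle' : v ((((fwdDiff 1)^[i] y) 0 : 𝒪) : E) ≤ v (p : E) ^ i := by
        refine (hdvd _ _ (hdiffs i)).trans (le_of_eq ?_)
        push_cast
        rw [map_pow]
      rw [sub_eq_add_neg]
      refine (hv _ _).trans (max_le hle' ?_)
      rw [v.map_neg, hρ]
      exact hle'
    · refine hc'.mono fun t ht => ?_
      have ht' : ρ (x (0 + c' + N' * t) : E) = x (0 + c' + N' * t) := ht
      rw [zero_add] at ht'
      exact sub_eq_zero.2 ht'.symm
    refine ⟨m * N', Nat.mul_pos hm hN', ?_⟩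
    refine polyIter_eq_of_orbit ρ _ _ (fun t => (y t : E)) (fun t => ?_) ?_
      (fun t => (sub_eq_zero.1 (hzero t)).symm)
    · have := iterate_map 𝒪.subtype f (m * N') (y t)
      refine this.symm.trans ?_
      rw [Subring.subtype_apply]
      congr 1
      simp only [y, x]
      rw [hbadd]
      congr 1
      ring
    · intro s t h
      have := hxinj (Subtype.ext h)
      exact Nat.eq_of_mul_eq_mul_left hN' (by omega)

/-! ### Common periodic points of two polynomials -/

/-- A point whose size strictly grows beyond a threshold is not periodic. -/
lemma not_lt_of_periodic {α Γ : Type*} [LinearOrder Γ] (F : α → α) (s : α → Γ) (B : Γ)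
    (h : ∀ x, B < s x → s x < s (F x)) {m : ℕ} (hm : 1 ≤ m) {x : α} (hx : F^[m] x = x) :
    s x ≤ B := by
  by_contra! hB
  have key : ∀ k, B < s (F^[k] x) ∧ s x ≤ s (F^[k] x) := by
    intro k
    induction k with
    | zero => exact ⟨hB, le_rfl⟩
    | succ k ih =>
      rw [Function.iterate_succ_apply']
      have := h _ ih.1
      exact ⟨ih.1.trans this, ih.2.trans this.le⟩
  obtain ⟨k, rfl⟩ : ∃ k, m = k + 1 := ⟨m - 1, by omega⟩
  have h1 := h _ (key k).1
  rw [← Function.iterate_succ_apply' F, hx] at h1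
  exact absurd (key k).2 (not_le.mpr h1)

lemma isIntegral_of_forall_valuationSubring {A : Type*} [Field A] (x : A)
    (h : ∀ V : ValuationSubring A, x ∈ V) : IsIntegral ℤ x := by
  have h1 : x ∈ (integralClosure (Subring.closure (∅ : Set A)) A).toSubring := by
    rw [← iInf_valuationSubring_superset]
    simp only [Subring.mem_iInf]
    exact fun V => h V.1
  have h2 : IsIntegral (Subring.closure (∅ : Set A)) x := h1
  have : Algebra.IsIntegral ℤ (Subring.closure (∅ : Set A)) := by
    constructor
    rintro ⟨y, hy⟩
    have hy' : y ∈ (algebraMap ℤ A).range := by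
      have : Subring.closure (∅ : Set A) ≤ (algebraMap ℤ A).range := by
        rw [Subring.closure_le]; simp
      exact this hy
    obtain ⟨n, hn⟩ := hy'
    have : (⟨y, hy⟩ : Subring.closure (∅ : Set A)) = algebraMap ℤ _ n := by
      apply Subtype.ext
      change y = _
      rw [← hn]; simp
    rw [this]
    exact isIntegral_algebraMap
  exact isIntegral_trans (R := ℤ) x h2

lemma mem_valuationSubring_of_isIntegral {A : Type*} [Field A] (V : ValuationSubring A) {x : A}
    (h : IsIntegral ℤ x) : x ∈ V := by
  have h1 : IsIntegral V x := h.tower_top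
  obtain ⟨y, hy⟩ := IsIntegrallyClosed.isIntegral_iff.mp h1
  rw [← hy]; exact y.2

/-- Periodic points of a polynomial have bounded denominators. -/
lemma isIntegral_periodic {A : Type*} [Field A] (f : A[X]) (hd : 2 ≤ f.natDegree) (q : A)
    (hq : IsIntegral ℤ q) (hqu : IsIntegral ℤ (q / f.leadingCoeff))
    (hc : ∀ i < f.natDegree, IsIntegral ℤ (q * f.coeff i / f.leadingCoeff))
    {α : A} {m : ℕ} (hm : 1 ≤ m) (hα : (fun b => f.eval b)^[m] α = α) : IsIntegral ℤ (q * α) := by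
  apply isIntegral_of_forall_valuationSubring
  intro V
  rw [← V.valuation_le_one_iff]
  set v := V.valuation with hv
  have hIntegral : ∀ x, IsIntegral ℤ x → v x ≤ 1 := fun x hx =>
    (V.valuation_le_one_iff x).mpr (mem_valuationSubring_of_isIntegral V hx)
  refine not_lt_of_periodic (fun b => f.eval b) (fun x => v (q * x)) 1 ?_ hm hα
  intro x hx
  by_contra! hle
  have hu : f.leadingCoeff ≠ 0 := by
    rw [leadingCoeff_ne_zero]; rintro rfl; simp at hd
  obtain ⟨d, hdd⟩ : ∃ d, f.natDegree = d + 2 := ⟨f.natDegree - 2, by omega⟩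
  set u := f.leadingCoeff with hudef
  have hy0 : 0 < v (q * x) := lt_trans zero_lt_one hx
  have h1 : (q * x) ^ (d + 2) = q ^ d * (q / u) * (q * f.eval x)
      - ∑ i ∈ Finset.range (d + 2), q ^ (d + 1 - i) * (q * f.coeff i / u) * (q * x) ^ i := by
    have hl : f.coeff (d + 2) = u := by rw [hudef, leadingCoeff, hdd]
    have e : ∑ i ∈ Finset.range (d + 2), q ^ (d + 1 - i) * (q * f.coeff i / u) * (q * x) ^ i
        = q ^ (d + 2) / u * ∑ i ∈ Finset.range (d + 2), f.coeff i * x ^ i := by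
      rw [Finset.mul_sum]
      refine Finset.sum_congr rfl fun i hi => ?_
      have : d + 2 = (d + 1 - i) + i + 1 := by have := Finset.mem_range.mp hi; omega
      rw [this]
      have h' : (d + 1 - i) + i + 1 - 1 - i = d + 1 - i := by omega
      simp only [mul_pow, pow_add, pow_one]
      ring
    rw [e, eval_eq_sum_range, hdd, Finset.sum_range_succ, hl]
    field_simp
    ring
  have h2 : v ((q * x) ^ (d + 2)) ≤ v (q * x) ^ (d + 1) := by
    rw [h1]
    refine (v.map_sub _ _).trans (max_le ?_ ?_)
    · rw [map_mul]
      calc _ ≤ 1 * v (q * x) := by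
            gcongr
            exact hIntegral _ ((hq.pow d).mul hqu)
        _ ≤ _ := by
            rw [one_mul]
            exact le_self_pow₀ hx.le (by omega)
    · refine v.map_sum_le fun i hi => ?_
      have hi' := Finset.mem_range.mp hi
      rw [map_mul, map_pow]
      calc _ ≤ 1 * v (q * x) ^ i := by
            gcongr
            exact hIntegral _ ((hq.pow _).mul (hc i (by omega)))
        _ ≤ _ := by
            rw [one_mul]
            exact pow_le_pow_right₀ hx.le (by omega)
  rw [map_pow] at h2
  exact absurd h2 (not_le.mpr (pow_lt_pow_right₀ hx (by omega)))

lemma exists_bound_periodic (f : ℂ[X]) (hd : 2 ≤ f.natDegree) :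
    ∃ B : ℝ, 1 ≤ B ∧ ∀ m ≥ 1, ∀ α, (fun b => f.eval b)^[m] α = α → ‖α‖ ≤ B := by
  have hdeg : 0 < f.divX.degree := by
    rw [← natDegree_pos_iff_degree_pos, natDegree_divX_eq_natDegree_tsub_one]; omega
  have ht := f.divX.tendsto_norm_atTop hdeg (z := fun z : ℂ => z) (l := Bornology.cobounded ℂ)
    tendsto_norm_cobounded_atTop
  have h1 := ht.eventually_ge_atTop (2 + ‖f.coeff 0‖)
  rw [← comap_norm_atTop, eventually_comap] at h1
  obtain ⟨B, hB⟩ := eventually_atTop.mp h1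
  refine ⟨max B 1, le_max_right _ _, fun m hm α hα => ?_⟩
  refine not_lt_of_periodic (fun b => f.eval b) (fun x => ‖x‖) (max B 1) ?_ hm hα
  intro x hx
  have hx1 : 1 < ‖x‖ := lt_of_le_of_lt (le_max_right _ _) hx
  have h2 := hB ‖x‖ ((le_max_left _ _).trans hx.le) x rfl
  have h3 : f.eval x = f.divX.eval x * x + f.coeff 0 := by
    conv_lhs => rw [← divX_mul_X_add f]
    simp
  have h4 : ‖f.divX.eval x * x‖ ≤ ‖f.eval x‖ + ‖f.coeff 0‖ := by
    have : f.divX.eval x * x = f.eval x - f.coeff 0 := by rw [h3]; ring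
    rw [this]; exact norm_sub_le _ _
  rw [norm_mul] at h4
  nlinarith [norm_nonneg (f.coeff 0)]

/-- A non-zero algebraic integer has a conjugate of modulus at least one. -/
lemma exists_embedding_one_le {A : Type*} [Field A] [CharZero A] [Algebra.IsAlgebraic ℚ A]
    (z : A) (hz : z ≠ 0) (hi : IsIntegral ℤ z) : ∃ φ : A →+* ℂ, 1 ≤ ‖φ z‖ := by
  by_contra! hcon
  let F := IntermediateField.adjoin ℚ {z}
  have hzq : IsIntegral ℚ z := hi.tower_top
  have : FiniteDimensional ℚ F := IntermediateField.adjoin.finiteDimensional hzq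
  let w : F := IntermediateField.AdjoinSimple.gen ℚ z
  have hw : algebraMap F A w = z := rfl
  have hwi : IsIntegral ℤ w :=
    (isIntegral_algebraMap_iff (algebraMap F A).injective).mp (by rw [hw]; exact hi)
  have hw0 : w ≠ 0 := by rintro h; apply hz; rw [← hw, h, map_zero]
  have hN : IsIntegral ℤ (Algebra.norm ℚ w) := Algebra.isIntegral_norm ℚ hwi
  obtain ⟨n, hn⟩ := IsIntegrallyClosed.isIntegral_iff.mp hN
  have hn0 : n ≠ 0 := by
    rintro rfl
    rw [map_zero] at hn
    exact hw0 (Algebra.norm_eq_zero_iff.mp hn.symm)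
  have hprod := Algebra.norm_eq_prod_embeddings ℚ ℂ w
  have hlt : ∀ s : F →ₐ[ℚ] ℂ, ‖s w‖ < 1 := by
    intro s
    let _ : Algebra F ℂ := s.toRingHom.toAlgebra
    have : Algebra.IsAlgebraic F A := Algebra.IsAlgebraic.tower_top (K := ℚ) F
    let φ : A →ₐ[F] ℂ := IsAlgClosed.lift
    have := hcon φ.toRingHom
    rw [← hw] at this
    have h2 : φ.toRingHom (algebraMap F A w) = s w := φ.commutes w
    rwa [h2] at this
  have hle : ‖∏ s : F →ₐ[ℚ] ℂ, s w‖ < 1 := by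
    rw [norm_prod]
    obtain ⟨s⟩ : Nonempty (F →ₐ[ℚ] ℂ) := ⟨IsAlgClosed.lift⟩
    calc ∏ s : F →ₐ[ℚ] ℂ, ‖s w‖ < ∏ s : F →ₐ[ℚ] ℂ, (1 : ℝ) := by
          refine Finset.prod_lt_prod (fun s _ => ?_) (fun s _ => (hlt s).le)
            ⟨s, Finset.mem_univ _, hlt s⟩
          rw [norm_pos_iff]
          exact fun h => hw0 ((map_eq_zero s).mp h)
      _ = 1 := by simp
  rw [← hprod, ← hn] at hle
  simp only [eq_intCast, map_intCast, Complex.norm_intCast] at hle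
  have : (1 : ℝ) ≤ |(n : ℝ)| := by exact_mod_cast Int.one_le_abs hn0
  linarith

lemma natDegree_polyIter {F : Type*} [Field F] (f : F[X]) (k : ℕ) :
    (polyIter f k).natDegree = f.natDegree ^ k := by
  induction k with
  | zero => simp [polyIter_zero]
  | succ k ih => rw [polyIter_succ, natDegree_comp, ih, pow_succ, mul_comm]

lemma leadingCoeff_polyIter_succ {F : Type*} [Field F] (f : F[X]) (hd : f.natDegree ≠ 0) (k : ℕ) :
    (polyIter f (k + 1)).leadingCoeff =
      f.leadingCoeff * (polyIter f k).leadingCoeff ^ f.natDegree := by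
  rw [polyIter_succ, leadingCoeff_comp]
  rw [natDegree_polyIter]; exact pow_ne_zero _ hd

lemma leadingCoeff_polyIter_ne_zero {F : Type*} [Field F] (f : F[X]) (hd : f.natDegree ≠ 0)
    (k : ℕ) : (polyIter f k).leadingCoeff ≠ 0 := by
  rw [leadingCoeff_ne_zero]
  intro h
  have := natDegree_polyIter f k
  rw [h, natDegree_zero] at this
  exact pow_ne_zero _ hd this.symm

/-- The monic normalisation of the `k`-th iterate of `f`. -/
noncomputable def hatIter {F : Type*} [Field F] (f : F[X]) (k : ℕ) : F[X] :=
  C (polyIter f k).leadingCoeff⁻¹ * polyIter f k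

lemma hatIter_monic {F : Type*} [Field F] (f : F[X]) (hd : f.natDegree ≠ 0) (k : ℕ) :
    (hatIter f k).Monic := by
  rw [hatIter, Monic, leadingCoeff_mul, leadingCoeff_C,
    inv_mul_cancel₀ (leadingCoeff_polyIter_ne_zero f hd k)]

lemma natDegree_hatIter {F : Type*} [Field F] (f : F[X]) (hd : f.natDegree ≠ 0) (k : ℕ) :
    (hatIter f k).natDegree = f.natDegree ^ k := by
  rw [hatIter, natDegree_C_mul (inv_ne_zero (leadingCoeff_polyIter_ne_zero f hd k)),
    natDegree_polyIter]

lemma polyIter_eq_hatIter {F : Type*} [Field F] (f : F[X]) (hd : f.natDegree ≠ 0) (k : ℕ) :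
    polyIter f k = C (polyIter f k).leadingCoeff * hatIter f k := by
  rw [hatIter, ← mul_assoc, ← C_mul, mul_inv_cancel₀ (leadingCoeff_polyIter_ne_zero f hd k), C_1,
    one_mul]

lemma hatIter_map {F G : Type*} [Field F] [Field G] (ψ : F →+* G) (f : F[X]) (k : ℕ) :
    (hatIter f k).map ψ = hatIter (f.map ψ) k := by
  rw [hatIter, hatIter, Polynomial.map_mul, map_C, map_polyIter, ← map_polyIter, leadingCoeff_map,
    map_inv₀]

/-- The monic normalisations satisfy the recursion `P ↦ P ^ d` up to lower order terms. -/
lemma hatIter_succ {F : Type*} [Field F] (f : F[X]) (hd : f.natDegree ≠ 0) (k : ℕ) :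
    ∃ r : F[X], r.natDegree ≤ (f.natDegree - 1) * f.natDegree ^ k ∧
      hatIter f (k + 1) = hatIter f k ^ f.natDegree + r := by
  have hU := leadingCoeff_polyIter_ne_zero f hd k
  have hu : f.leadingCoeff ≠ 0 := by rw [leadingCoeff_ne_zero]; rintro rfl; simp at hd
  refine ⟨C (polyIter f (k + 1)).leadingCoeff⁻¹ * f.eraseLead.comp (polyIter f k), ?_, ?_⟩
  · refine (natDegree_C_mul_le _ _).trans ?_
    rw [natDegree_comp, natDegree_polyIter]
    exact Nat.mul_le_mul_right _ (eraseLead_natDegree_le f)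
  · have h1 : polyIter f (k + 1) = f.eraseLead.comp (polyIter f k)
        + C f.leadingCoeff * polyIter f k ^ f.natDegree := by
      rw [polyIter_succ]
      have := congrArg (fun h => h.comp (polyIter f k)) (eraseLead_add_C_mul_X_pow f).symm
      simpa only [add_comp, mul_comp, C_comp, X_pow_comp] using this
    conv_lhs => rw [hatIter, h1, mul_add, add_comm, ← h1]
    congr 1
    rw [leadingCoeff_polyIter_succ f hd, hatIter, mul_pow, ← C_pow, ← mul_assoc, ← C_mul]
    congr 2
    rw [inv_pow]
    field_simp

/-- The cofactor of `P - Q` in `P ^ d - Q ^ d`. Characteristic zero guarantees that its leading terms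
do not cancel. -/
lemma natDegree_geom {F : Type*} [Field F] [CharZero F] {P Q : F[X]} (hP : P.Monic) (hQ : Q.Monic)
    {n d : ℕ} (hPn : P.natDegree = n) (hQn : Q.natDegree = n) (hd : d ≠ 0) :
    (∑ i ∈ Finset.range d, P ^ i * Q ^ (d - 1 - i)).natDegree = (d - 1) * n ∧
    (∑ i ∈ Finset.range d, P ^ i * Q ^ (d - 1 - i)).leadingCoeff = d := by
  have hm : ∀ i ∈ Finset.range d, (P ^ i * Q ^ (d - 1 - i)).Monic ∧
      (P ^ i * Q ^ (d - 1 - i)).natDegree = (d - 1) * n := by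
    intro i hi
    have hi := Finset.mem_range.mp hi
    refine ⟨(hP.pow i).mul (hQ.pow _), ?_⟩
    rw [(hP.pow i).natDegree_mul (hQ.pow _), hP.natDegree_pow, hQ.natDegree_pow, hPn, hQn,
      ← add_mul]
    congr 1; omega
  have hc : (∑ i ∈ Finset.range d, P ^ i * Q ^ (d - 1 - i)).coeff ((d - 1) * n) = d := by
    rw [finsetSum_coeff, Finset.sum_congr rfl (g := fun _ => (1 : F))]
    · simp
    · intro i hi
      rw [← (hm i hi).2]; exact (hm i hi).1
  have h1 : (∑ i ∈ Finset.range d, P ^ i * Q ^ (d - 1 - i)).natDegree = (d - 1) * n := by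
    refine le_antisymm (natDegree_sum_le_of_forall_le _ _ fun i hi => (hm i hi).2.le) ?_
    apply le_natDegree_of_ne_zero
    rw [hc]; exact_mod_cast hd
  exact ⟨h1, by rw [leadingCoeff, h1, hc]⟩

lemma hatIter_sub_succ {F : Type*} [Field F] [CharZero F] (f g : F[X]) (hd : f.natDegree ≠ 0)
    (hg : g.natDegree = f.natDegree) (k : ℕ) (hk : 1 ≤ (hatIter f k - hatIter g k).natDegree) :
    (hatIter f (k + 1) - hatIter g (k + 1)).natDegree =
      (hatIter f k - hatIter g k).natDegree + (f.natDegree - 1) * f.natDegree ^ k ∧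
    (hatIter f (k + 1) - hatIter g (k + 1)).leadingCoeff =
      f.natDegree * (hatIter f k - hatIter g k).leadingCoeff := by
  obtain ⟨r, hr, hr'⟩ := hatIter_succ f hd k
  obtain ⟨s, hs, hs'⟩ := hatIter_succ g (hg ▸ hd) k
  rw [hg] at hs hs'
  obtain ⟨h1, h2⟩ := natDegree_geom (hatIter_monic f hd k) (hatIter_monic g (hg ▸ hd) k)
    (natDegree_hatIter f hd k) ((natDegree_hatIter g (hg ▸ hd) k).trans (by rw [hg])) hd
  set S := ∑ i ∈ Finset.range f.natDegree, hatIter f k ^ i * hatIter g k ^ (f.natDegree - 1 - i)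
  set Δ := hatIter f k - hatIter g k
  have e : hatIter f (k + 1) - hatIter g (k + 1) = S * Δ + (r - s) := by
    rw [(Commute.all _ _).geom_sum₂_mul, hr', hs']; ring
  have hS : S ≠ 0 := by
    rw [← leadingCoeff_ne_zero, h2]; exact_mod_cast hd
  have hΔ : Δ ≠ 0 := by rintro h; rw [h] at hk; simp at hk
  have hm : (S * Δ).natDegree = Δ.natDegree + (f.natDegree - 1) * f.natDegree ^ k := by
    rw [natDegree_mul hS hΔ, h1, add_comm]
  have hlt : (r - s).natDegree < (S * Δ).natDegree := by
    have := natDegree_sub_le r s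
    have := max_le hr hs
    omega
  rw [e]
  refine ⟨by rw [natDegree_add_eq_left_of_natDegree_lt hlt, hm], ?_⟩
  rw [leadingCoeff_add_of_degree_lt' (degree_lt_degree hlt), leadingCoeff_mul, h2]

/-- If some monic normalised iterates of `f` and `g` differ by a non-constant polynomial, then
the degree of the difference of the later ones falls short of `d ^ k` by a constant, while its
leading coefficient is multiplied by `d` in each step. -/
lemma hatIter_sub {F : Type*} [Field F] [CharZero F] (f g : F[X]) (hd : f.natDegree ≠ 0)
    (hg : g.natDegree = f.natDegree) (k₀ : ℕ)
    (hk : 1 ≤ (hatIter f k₀ - hatIter g k₀).natDegree) :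
    ∃ (j : ℕ) (c : F), c ≠ 0 ∧ ∀ k,
      (hatIter f (k₀ + k) - hatIter g (k₀ + k)).natDegree + j = f.natDegree ^ (k₀ + k) ∧
      (hatIter f (k₀ + k) - hatIter g (k₀ + k)).leadingCoeff = f.natDegree ^ k * c := by
  have hle : (hatIter f k₀ - hatIter g k₀).natDegree ≤ f.natDegree ^ k₀ := by
    refine (natDegree_sub_le _ _).trans (max_le ?_ ?_)
    · rw [natDegree_hatIter f hd]
    · rw [natDegree_hatIter g (hg ▸ hd), hg]
  refine ⟨f.natDegree ^ k₀ - (hatIter f k₀ - hatIter g k₀).natDegree,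
    (hatIter f k₀ - hatIter g k₀).leadingCoeff, ?_, ?_⟩
  · rw [leadingCoeff_ne_zero]; intro h; rw [h] at hk; simp at hk
  intro k
  suffices h : 1 ≤ (hatIter f (k₀ + k) - hatIter g (k₀ + k)).natDegree ∧
      (hatIter f (k₀ + k) - hatIter g (k₀ + k)).natDegree +
        (f.natDegree ^ k₀ - (hatIter f k₀ - hatIter g k₀).natDegree) = f.natDegree ^ (k₀ + k) ∧
      (hatIter f (k₀ + k) - hatIter g (k₀ + k)).leadingCoeff =
        f.natDegree ^ k * (hatIter f k₀ - hatIter g k₀).leadingCoeff from h.2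
  induction k with
  | zero => exact ⟨hk, by rw [add_zero]; omega, by simp⟩
  | succ k ih =>
    obtain ⟨h1, h2, h3⟩ := ih
    obtain ⟨h4, h5⟩ := hatIter_sub_succ f g hd hg (k₀ + k) h1
    rw [← add_assoc]
    refine ⟨by omega, ?_, by rw [h5, h3, pow_succ]; ring⟩
    have : f.natDegree ^ (k₀ + k + 1) =
        f.natDegree ^ (k₀ + k) + (f.natDegree - 1) * f.natDegree ^ (k₀ + k) := by
      obtain ⟨d, hd'⟩ := Nat.exists_eq_succ_of_ne_zero hd
      rw [hd', pow_succ]; simp; ring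
    omega

lemma norm_eval_hatIter_le (f : ℂ[X]) (k : ℕ) (α : ℂ) (B : ℝ)
    (h : ∀ k, ‖(fun b => f.eval b)^[k] α‖ ≤ B) :
    ‖(hatIter f k).eval α‖ ≤ B / ‖(polyIter f k).leadingCoeff‖ := by
  rw [hatIter, eval_mul, eval_C, eval_polyIter, norm_mul, norm_inv, inv_mul_eq_div]
  gcongr
  exact h k

/-- The case of `exists_small_monic` in which the leading coefficients have different modulus: the
witness is the normalised iterate of `f`. -/
lemma exists_small_monic_aux (f g : ℂ[X]) (hd : 2 ≤ f.natDegree) (hg : g.natDegree = f.natDegree)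
    (B q : ℝ) (hlt : ‖g.leadingCoeff‖ < ‖f.leadingCoeff‖) :
    ∀ᶠ K in atTop, ∃ W : ℂ[X], W.Monic ∧ W.natDegree = f.natDegree ^ K ∧ ∀ α,
      (∀ k, ‖(fun b => f.eval b)^[k] α‖ ≤ B) → (∀ k, ‖(fun b => g.eval b)^[k] α‖ ≤ B) →
      q ^ 2 * ‖(polyIter f K).leadingCoeff‖ * ‖(polyIter g K).leadingCoeff‖ * ‖W.eval α‖ ^ 2
        ≤ 1 / 4 := by
  have hd0 : f.natDegree ≠ 0 := by omega
  have hu : 0 < ‖f.leadingCoeff‖ := lt_of_le_of_lt (norm_nonneg _) hlt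
  set t := ‖g.leadingCoeff‖ / ‖f.leadingCoeff‖ with ht
  have ht0 : 0 ≤ t := by positivity
  have ht1 : t < 1 := by rw [ht, div_lt_one hu]; exact hlt
  have hU : ∀ K, ‖(polyIter g K).leadingCoeff‖ ≤ t ^ K * ‖(polyIter f K).leadingCoeff‖ := by
    intro K
    induction K with
    | zero => simp [polyIter_zero]
    | succ K ih =>
      rw [leadingCoeff_polyIter_succ f hd0, leadingCoeff_polyIter_succ g (hg ▸ hd0), norm_mul,
        norm_mul, norm_pow, norm_pow, hg]
      have h1 : ‖g.leadingCoeff‖ = t * ‖f.leadingCoeff‖ := by rw [ht]; field_simp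
      calc ‖g.leadingCoeff‖ * ‖(polyIter g K).leadingCoeff‖ ^ f.natDegree
          ≤ ‖g.leadingCoeff‖ * (t ^ K * ‖(polyIter f K).leadingCoeff‖) ^ f.natDegree := by gcongr
        _ = t * (t ^ K) ^ f.natDegree *
            (‖f.leadingCoeff‖ * ‖(polyIter f K).leadingCoeff‖ ^ f.natDegree) := by rw [h1]; ring
        _ ≤ t * t ^ K * (‖f.leadingCoeff‖ * ‖(polyIter f K).leadingCoeff‖ ^ f.natDegree) := by
            gcongr
            exact pow_le_of_le_one (by positivity) (pow_le_one₀ ht0 ht1.le) hd0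
        _ = _ := by ring
  have hlim : Tendsto (fun K => q ^ 2 * B ^ 2 * t ^ K) atTop (𝓝 (q ^ 2 * B ^ 2 * 0)) :=
    (tendsto_pow_atTop_nhds_zero_of_lt_one ht0 ht1).const_mul _
  rw [mul_zero] at hlim
  filter_upwards [hlim.eventually_le_const (show (0 : ℝ) < 1 / 4 by norm_num)] with K hK
  refine ⟨hatIter f K, hatIter_monic f hd0 K, natDegree_hatIter f hd0 K, fun α h1 _ => ?_⟩
  refine le_trans ?_ hK
  have hUp : 0 < ‖(polyIter f K).leadingCoeff‖ :=
    norm_pos_iff.mpr (leadingCoeff_polyIter_ne_zero f hd0 K)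
  calc _ ≤ q ^ 2 * ‖(polyIter f K).leadingCoeff‖ * (t ^ K * ‖(polyIter f K).leadingCoeff‖) *
        (B / ‖(polyIter f K).leadingCoeff‖) ^ 2 := by
        gcongr
        · exact hU K
        · exact norm_eval_hatIter_le f K α B h1
    _ = _ := by field_simp

/-- At each complex place the set of common (pre)periodic points is too small: its transfinite
diameter is less than the product formula permits. The witness `W` is a normalised iterate if the
leading coefficients differ in modulus, and otherwise comes from the difference of the
normalised iterates of `f` and `g`. -/
lemma exists_small_monic (f g : ℂ[X]) (hd : 2 ≤ f.natDegree) (hg : g.natDegree = f.natDegree)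
    (k₀ : ℕ) (hk : 1 ≤ (hatIter f k₀ - hatIter g k₀).natDegree) (B q : ℝ) (hB : 1 ≤ B) :
    ∀ᶠ K in atTop, ∃ W : ℂ[X], W.Monic ∧ W.natDegree = f.natDegree ^ K ∧ ∀ α,
      (∀ k, ‖(fun b => f.eval b)^[k] α‖ ≤ B) → (∀ k, ‖(fun b => g.eval b)^[k] α‖ ≤ B) →
      q ^ 2 * ‖(polyIter f K).leadingCoeff‖ * ‖(polyIter g K).leadingCoeff‖ * ‖W.eval α‖ ^ 2
        ≤ 1 / 4 := by
  have hd0 : f.natDegree ≠ 0 := by omega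
  rcases lt_trichotomy ‖g.leadingCoeff‖ ‖f.leadingCoeff‖ with hlt | heq | hgt
  · exact exists_small_monic_aux f g hd hg B q hlt
  · obtain ⟨j, c, hc, hjc⟩ := hatIter_sub f g hd0 hg k₀ hk
    have hU : ∀ K, ‖(polyIter g K).leadingCoeff‖ = ‖(polyIter f K).leadingCoeff‖ := by
      intro K
      induction K with
      | zero => simp [polyIter_zero]
      | succ K ih =>
        rw [leadingCoeff_polyIter_succ f hd0, leadingCoeff_polyIter_succ g (hg ▸ hd0), norm_mul,
          norm_mul, norm_pow, norm_pow, hg, ih, heq]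
    have hc' : 0 < ‖c‖ := norm_pos_iff.mpr hc
    have hlim : Tendsto (fun k : ℕ => q ^ 2 * (4 * B ^ (2 * j + 2)) / ‖c‖ ^ 2 *
        (((f.natDegree : ℝ) ^ 2)⁻¹) ^ k) atTop
        (𝓝 (q ^ 2 * (4 * B ^ (2 * j + 2)) / ‖c‖ ^ 2 * 0)) := by
      refine (tendsto_pow_atTop_nhds_zero_of_lt_one (by positivity) ?_).const_mul _
      apply inv_lt_one_of_one_lt₀
      have : (2 : ℝ) ≤ f.natDegree := by exact_mod_cast hd
      nlinarith
    rw [mul_zero] at hlim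
    have hev := hlim.eventually_le_const (show (0 : ℝ) < 1 / 4 by norm_num)
    obtain ⟨k₁, hk₁⟩ := eventually_atTop.mp hev
    filter_upwards [eventually_ge_atTop (k₀ + k₁)] with K hK
    obtain ⟨k, rfl⟩ : ∃ k, K = k₀ + k := ⟨K - k₀, by omega⟩
    obtain ⟨h1, h2⟩ := hjc k
    set Δ := hatIter f (k₀ + k) - hatIter g (k₀ + k) with hΔ
    have hdk : (0 : ℝ) < f.natDegree := by exact_mod_cast (by omega : 0 < f.natDegree)
    have hlc : Δ.leadingCoeff ≠ 0 := by
      rw [h2]; refine mul_ne_zero (pow_ne_zero _ (by exact_mod_cast hd0)) hc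
    have hΔ0 : Δ ≠ 0 := leadingCoeff_ne_zero.mp hlc
    have hW : (C Δ.leadingCoeff⁻¹ * Δ).Monic := by
      rw [Monic, leadingCoeff_mul, leadingCoeff_C, inv_mul_cancel₀ hlc]
    refine ⟨X ^ j * (C Δ.leadingCoeff⁻¹ * Δ), (monic_X_pow j).mul hW, ?_, fun α hα hα' => ?_⟩
    · rw [(monic_X_pow j).natDegree_mul hW, natDegree_X_pow,
        natDegree_C_mul (inv_ne_zero hlc), ← h1, add_comm]
    · refine le_trans ?_ (hk₁ k (by omega))
      have hUp : 0 < ‖(polyIter f (k₀ + k)).leadingCoeff‖ :=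
        norm_pos_iff.mpr (leadingCoeff_polyIter_ne_zero f hd0 _)
      have hα0 : ‖α‖ ≤ B := hα 0
      have h3 := norm_eval_hatIter_le f (k₀ + k) α B hα
      have h4 := norm_eval_hatIter_le g (k₀ + k) α B hα'
      rw [hU] at h4 ⊢
      set U := ‖(polyIter f (k₀ + k)).leadingCoeff‖
      have h5 : ‖Δ.eval α‖ ≤ 2 * (B / U) := by
        rw [hΔ, eval_sub]
        refine (norm_sub_le _ _).trans ?_
        linarith
      have h6 : ‖(X ^ j * (C Δ.leadingCoeff⁻¹ * Δ)).eval α‖ ≤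
          B ^ j * ((f.natDegree ^ k * ‖c‖)⁻¹ * (2 * (B / U))) := by
        simp only [eval_mul, eval_pow, eval_X, eval_C, norm_mul, norm_pow, norm_inv, h2,
          Complex.norm_natCast]
        gcongr
      calc _ ≤ q ^ 2 * U * U * (B ^ j * ((f.natDegree ^ k * ‖c‖)⁻¹ * (2 * (B / U)))) ^ 2 := by
            gcongr
        _ = _ := by
            rw [inv_pow]
            field_simp
            ring
  · filter_upwards [exists_small_monic_aux g f (hg ▸ hd) hg.symm B q hgt] with K hK
    obtain ⟨W, h1, h2, h3⟩ := hK
    refine ⟨W, h1, by rw [h2, hg], fun α h4 h5 => ?_⟩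
    have := h3 α h5 h4
    calc _ = _ := by ring
      _ ≤ _ := this

/-- The factorial growth of the determinant expansion is beaten by the quadratic exponent. -/
lemma exists_prod_lt_one (C₀ : ℝ) (hC : 0 < C₀) (D : ℕ) (hD : 0 < D) :
    ∃ N : ℕ, ∏ i ∈ Finset.range N, (((i + 1 : ℕ) : ℝ) ^ 2 * C₀ * (1 / 4) ^ (i / D)) < 1 := by
  have h0 : Tendsto (fun m : ℕ => ((D : ℝ) * (m + 1)) ^ 2 * C₀ * (1 / 4 : ℝ) ^ m) atTop (𝓝 0) := by
    have h1 := (tendsto_pow_const_mul_const_pow_of_abs_lt_one 2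
      (show |(1 / 4 : ℝ)| < 1 by rw [abs_of_pos] <;> norm_num)).comp (tendsto_add_atTop_nat 1)
    have h2 := h1.const_mul ((D : ℝ) ^ 2 * C₀ * 4)
    rw [mul_zero] at h2
    refine h2.congr fun m => ?_
    simp only [Function.comp_apply, Nat.cast_add, Nat.cast_one, pow_succ]
    ring
  have h1 : Tendsto (fun i : ℕ => ((i + 1 : ℕ) : ℝ) ^ 2 * C₀ * (1 / 4 : ℝ) ^ (i / D)) atTop
      (𝓝 0) := by
    refine squeeze_zero (fun i => by positivity) (fun i => ?_)
      (h0.comp (Nat.tendsto_div_const_atTop hD.ne'))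
    simp only [Function.comp_apply]
    gcongr
    have : i + 1 ≤ D * (i / D + 1) := Nat.lt_mul_div_succ i hD
    exact_mod_cast this
  set s : ℕ → ℝ := fun N => ∏ i ∈ Finset.range N, (((i + 1 : ℕ) : ℝ) ^ 2 * C₀ * (1 / 4) ^ (i / D))
  have hs : ∀ N, 0 < s N := fun N => Finset.prod_pos fun i _ => by positivity
  have h2 : Summable s := by
    refine summable_of_ratio_test_tendsto_lt_one (l := 0) zero_lt_one
      (Eventually.of_forall fun N => (hs N).ne') (h1.congr fun N => ?_)
    rw [Real.norm_of_nonneg (hs _).le, Real.norm_of_nonneg (hs _).le, eq_div_iff (hs N).ne']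
    simp only [s]
    rw [Finset.prod_range_succ, mul_comm]
  obtain ⟨N, hN⟩ := (h2.tendsto_atTop_zero.eventually_lt_const zero_lt_one).exists
  exact ⟨N, hN⟩

lemma norm_det_le_of_cols {N : ℕ} (M : Matrix (Fin N) (Fin N) ℂ) (w : Fin N → ℝ)
    (h : ∀ j i, ‖M j i‖ ≤ w i) : ‖M.det‖ ≤ N.factorial * ∏ i, w i := by
  rw [Matrix.det_apply]
  refine (norm_sum_le _ _).trans ?_
  have : ∀ s ∈ (Finset.univ : Finset (Equiv.Perm (Fin N))),
      ‖Equiv.Perm.sign s • ∏ i, M (s i) i‖ ≤ ∏ i, w i := by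
    intro s _
    rw [Units.smul_def, zsmul_eq_mul, norm_mul, norm_prod]
    have h1 : ‖(((Equiv.Perm.sign s : ℤˣ) : ℤ) : ℂ)‖ = 1 := by
      rcases Int.units_eq_one_or (Equiv.Perm.sign s) with h | h <;> simp [h]
    rw [h1, one_mul]
    exact Finset.prod_le_prod (fun i _ => norm_nonneg _) fun i _ => h _ _
  refine (Finset.sum_le_card_nsmul _ _ _ this).trans ?_
  rw [Finset.card_univ, Fintype.card_perm, Fintype.card_fin, nsmul_eq_mul]

/-- The finite part of the product formula estimate: computing the Vandermonde determinant in the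
basis `X ^ (i % D) * W ^ (i / D)`, where `D = (deg h) ^ K` and `W` is the monic normalisation of the
`K`-th iterate of `h`, bounds its denominator. -/
lemma isIntegral_vandermonde {A : Type*} [Field A] (h : A[X]) (hd : h.natDegree ≠ 0) (q : A)
    (K N : ℕ) (α : Fin N → A) (h1 : ∀ j, IsIntegral ℤ (q * α j))
    (h2 : ∀ j, IsIntegral ℤ (q * (fun b => h.eval b)^[K] (α j))) :
    IsIntegral ℤ ((∏ i : Fin N, ((q * (polyIter h K).leadingCoeff) ^ ((i : ℕ) / h.natDegree ^ K) *
      q ^ ((i : ℕ) % h.natDegree ^ K))) * (Matrix.vandermonde α).det) := by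
  set D := h.natDegree ^ K with hD
  have hW := hatIter_monic h hd K
  rw [Matrix.det_eval_matrixOfPolynomials_eq_det_vandermonde α
    (fun i => hatIter h K ^ ((i : ℕ) / D) * X ^ ((i : ℕ) % D)) ?_ ?_, ← Matrix.det_mul_row]
  · apply IsIntegral.det
    intro j i
    simp only [Matrix.of_apply, eval_mul, eval_pow, eval_X]
    have e : (q * (polyIter h K).leadingCoeff) ^ ((i : ℕ) / D) * q ^ ((i : ℕ) % D) *
        ((hatIter h K).eval (α j) ^ ((i : ℕ) / D) * α j ^ ((i : ℕ) % D)) =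
        (q * (fun b => h.eval b)^[K] (α j)) ^ ((i : ℕ) / D) * (q * α j) ^ ((i : ℕ) % D) := by
      have : (fun b => h.eval b)^[K] (α j) =
          (polyIter h K).leadingCoeff * (hatIter h K).eval (α j) := by
        rw [← eval_polyIter]
        conv_lhs => rw [polyIter_eq_hatIter h hd K]
        rw [eval_mul, eval_C]
      rw [this]
      ring
    rw [e]
    exact ((h2 j).pow _).mul ((h1 j).pow _)
  · intro i
    rw [(hW.pow _).natDegree_mul (monic_X_pow _), hW.natDegree_pow, natDegree_X_pow,
      natDegree_hatIter h hd]
    exact Nat.div_add_mod' _ _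
  · exact fun i => (hW.pow _).mul (monic_X_pow _)

/-- The archimedean part of the product formula estimate, obtained by computing the Vandermonde
determinant in the monic basis `X ^ (i % D) * W ^ (i / D)`. -/
lemma norm_vandermonde_le {N D : ℕ} (hD : 0 < D) (W : ℂ[X]) (hW : W.Monic) (hWD : W.natDegree = D)
    (α : Fin N → ℂ) (B w : ℝ) (hB : 1 ≤ B) (hα : ∀ j, ‖α j‖ ≤ B) (hw : ∀ j, ‖W.eval (α j)‖ ≤ w) :
    ‖(Matrix.vandermonde α).det‖ ≤ N.factorial * ∏ i : Fin N, (w ^ ((i : ℕ) / D) * B ^ D) := by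
  rw [Matrix.det_eval_matrixOfPolynomials_eq_det_vandermonde α
    (fun i => W ^ ((i : ℕ) / D) * X ^ ((i : ℕ) % D)) ?_ ?_]
  · apply norm_det_le_of_cols
    intro j i
    simp only [Matrix.of_apply, eval_mul, eval_pow, eval_X, norm_mul, norm_pow]
    gcongr
    · exact pow_nonneg ((norm_nonneg _).trans (hw j)) _
    · exact hw j
    · calc ‖α j‖ ^ ((i : ℕ) % D) ≤ B ^ ((i : ℕ) % D) := by gcongr; exact hα j
        _ ≤ B ^ D := pow_le_pow_right₀ hB (Nat.mod_lt _ hD).le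
  · intro i
    rw [(hW.pow _).natDegree_mul (monic_X_pow _), hW.natDegree_pow, natDegree_X_pow, hWD]
    exact Nat.div_add_mod' _ _
  · exact fun i => (hW.pow _).mul (monic_X_pow _)

lemma iterate_periodic {α : Type*} (F : α → α) (m k : ℕ) (x : α) (h : F^[m] x = x) :
    F^[m] (F^[k] x) = F^[k] x := by
  rw [← Function.iterate_add_apply, add_comm, Function.iterate_add_apply, h]

/-- The numerical contradiction behind the finiteness of common periodic points. -/
lemma vandermonde_estimate (N D : ℕ) (B q U U' w V : ℝ) (hq : 1 ≤ q) (hB : 1 ≤ B)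
    (hU : 0 ≤ U) (hU' : 0 ≤ U') (hw0 : 0 ≤ w) (hV0 : 0 ≤ V)
    (hw : q ^ 2 * U * U' * w ^ 2 ≤ 1 / 4) (hD : 0 < D)
    (hV : V ≤ N.factorial * ∏ i : Fin N, (w ^ ((i : ℕ) / D) * B ^ D)) :
    ((∏ i : Fin N, ((q * U) ^ ((i : ℕ) / D) * q ^ ((i : ℕ) % D))) * V) *
    ((∏ i : Fin N, ((q * U') ^ ((i : ℕ) / D) * q ^ ((i : ℕ) % D))) * V) ≤
    ∏ i ∈ Finset.range N, (((i + 1 : ℕ) : ℝ) ^ 2 * ((q * B) ^ (2 * D)) * (1 / 4) ^ (i / D)) := by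
  have hq0 : 0 ≤ q := by linarith
  have hB0 : 0 ≤ B := by linarith
  have hfac : (N.factorial : ℝ) = ∏ i : Fin N, ((((i : ℕ) + 1 : ℕ) : ℝ)) := by
    rw [Fin.prod_univ_eq_prod_range (fun i => (((i + 1 : ℕ) : ℝ))), ← Nat.cast_prod,
      Finset.prod_range_add_one_eq_factorial]
  rw [hfac, ← Finset.prod_mul_distrib] at hV
  calc _ ≤ ((∏ i : Fin N, ((q * U) ^ ((i : ℕ) / D) * q ^ D)) *
        (∏ i : Fin N, ((((i : ℕ) + 1 : ℕ) : ℝ) * (w ^ ((i : ℕ) / D) * B ^ D)))) *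
      ((∏ i : Fin N, ((q * U') ^ ((i : ℕ) / D) * q ^ D)) *
        (∏ i : Fin N, ((((i : ℕ) + 1 : ℕ) : ℝ) * (w ^ ((i : ℕ) / D) * B ^ D)))) := by
        gcongr
        all_goals first | exact hq | exact (Nat.mod_lt _ hD).le
    _ = ∏ i : Fin N, ((((i : ℕ) + 1 : ℕ) : ℝ) ^ 2 * ((q * B) ^ (2 * D)) *
          (q ^ 2 * U * U' * w ^ 2) ^ ((i : ℕ) / D)) := by
        simp only [← Finset.prod_mul_distrib]
        refine Finset.prod_congr rfl fun i _ => ?_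
        simp only [mul_pow, ← pow_mul, two_mul, pow_add]
        ring
    _ ≤ ∏ i : Fin N, ((((i : ℕ) + 1 : ℕ) : ℝ) ^ 2 * ((q * B) ^ (2 * D)) *
          (1 / 4) ^ ((i : ℕ) / D)) := by gcongr
    _ = _ := Fin.prod_univ_eq_prod_range
        (fun i => (((i + 1 : ℕ) : ℝ) ^ 2 * ((q * B) ^ (2 * D)) * (1 / 4) ^ (i / D))) N

lemma exists_common_denominator {L : Type*} [Field L] [NumberField L] (f : L[X]) :
    ∃ q : ℕ, q ≠ 0 ∧ ∀ q' : ℕ, q ∣ q' → IsIntegral ℤ ((q' : L) / f.leadingCoeff) ∧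
      ∀ i < f.natDegree, IsIntegral ℤ ((q' : L) * f.coeff i / f.leadingCoeff) := by
  classical
  obtain ⟨y, hy, h⟩ := exists_integral_multiples ℤ ℚ (L := L)
    (insert (1 / f.leadingCoeff)
      ((Finset.range f.natDegree).image fun i => f.coeff i / f.leadingCoeff))
  have key : ∀ x : L, IsIntegral ℤ (y • x) → ∀ q', y.natAbs ∣ q' → IsIntegral ℤ ((q' : L) * x) := by
    intro x hx q' hq
    obtain ⟨c, hc⟩ : y ∣ (q' : ℤ) := Int.natAbs_dvd.mp (Int.natCast_dvd_natCast.mpr hq)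
    have : (q' : L) * x = (c : L) * (y • x) := by
      have : (q' : L) = (y : L) * c := by exact_mod_cast congrArg (Int.cast : ℤ → L) hc
      rw [this, zsmul_eq_mul]; ring
    rw [this]
    exact (isIntegral_algebraMap (R := ℤ) (x := c)).mul hx
  refine ⟨y.natAbs, by simpa using hy, fun q' hq => ⟨?_, fun i hi => ?_⟩⟩
  · rw [div_eq_mul_one_div]
    exact key _ (h _ (Finset.mem_insert_self _ _)) q' hq
  · rw [mul_div_assoc]
    exact key _ (h _ (Finset.mem_insert_of_mem
      (Finset.mem_image_of_mem _ (Finset.mem_range.mpr hi)))) q' hq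

lemma isIntegral_periodic_map {L A : Type*} [Field L] [NumberField L] [Field A] [Algebra L A]
    (f : L[X]) (hd : 2 ≤ f.natDegree) (q : ℕ)
    (hq : IsIntegral ℤ ((q : L) / f.leadingCoeff) ∧
      ∀ i < f.natDegree, IsIntegral ℤ ((q : L) * f.coeff i / f.leadingCoeff))
    {α : A} {m : ℕ} (hm : 1 ≤ m) (hα : (fun b => (f.map (algebraMap L A)).eval b)^[m] α = α) :
    IsIntegral ℤ ((q : A) * α) := by
  refine isIntegral_periodic (f.map (algebraMap L A)) (by rwa [natDegree_map]) q
    (by simpa using isIntegral_algebraMap (R := ℤ) (A := A) (x := (q : ℤ))) ?_ ?_ hm hα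
  · have := hq.1.map (algebraMap L A).toIntAlgHom
    simpa [leadingCoeff_map] using this
  · intro i hi
    rw [natDegree_map] at hi
    have := (hq.2 i hi).map (algebraMap L A).toIntAlgHom
    simpa [leadingCoeff_map] using this

/-- Two polynomials of the same degree at least two whose normalised iterates do not differ only
by constants have only finitely many common periodic points. -/
lemma finite_common_periodic {L A : Type*} [Field L] [NumberField L] [Field A] [Algebra L A]
    [CharZero A] [Algebra.IsAlgebraic ℚ A] (f g : L[X]) (hd : 2 ≤ f.natDegree)
    (hg : g.natDegree = f.natDegree) (k₀ : ℕ)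
    (hk : 1 ≤ (hatIter f k₀ - hatIter g k₀).natDegree) :
    {x : A | ∃ m ≥ 1, (fun b => (f.map (algebraMap L A)).eval b)^[m] x = x ∧
      (fun b => (g.map (algebraMap L A)).eval b)^[m] x = x}.Finite := by
  classical
  by_contra hinf
  set ι := algebraMap L A with hι
  obtain ⟨q₁, hq₁, h₁⟩ := exists_common_denominator f
  obtain ⟨q₂, hq₂, h₂⟩ := exists_common_denominator g
  set q := q₁ * q₂ with hqdef
  have hq0 : q ≠ 0 := mul_ne_zero hq₁ hq₂
  have hq1 : (1 : ℝ) ≤ q := by exact_mod_cast Nat.one_le_iff_ne_zero.mpr hq0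
  replace h₁ := h₁ q (dvd_mul_right _ _)
  replace h₂ := h₂ q (dvd_mul_left _ _)
  have hdψ : ∀ (ψ : L →+* ℂ) (h : L[X]), (h.map ψ).natDegree = h.natDegree :=
    fun ψ h => natDegree_map ψ
  choose B₁ hB₁ hB₁' using fun ψ : L →+* ℂ =>
    exists_bound_periodic (f.map ψ) (by rwa [hdψ])
  choose B₂ hB₂ hB₂' using fun ψ : L →+* ℂ =>
    exists_bound_periodic (g.map ψ) (by rwa [hdψ, hg])
  set B := 1 + ∑ ψ : L →+* ℂ, (B₁ ψ + B₂ ψ) with hBdef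
  have hpos : ∀ ψ, 0 ≤ B₁ ψ + B₂ ψ := fun ψ => by linarith [hB₁ ψ, hB₂ ψ]
  have hB : 1 ≤ B := by
    have := Finset.sum_nonneg (s := Finset.univ) fun ψ _ => hpos ψ
    linarith
  have hBψ : ∀ ψ, B₁ ψ + B₂ ψ ≤ B := by
    intro ψ
    have := Finset.single_le_sum (s := Finset.univ) (fun ψ _ => hpos ψ) (Finset.mem_univ ψ)
    linarith
  have hev : ∀ᶠ K in atTop, ∀ ψ : L →+* ℂ, ∃ W : ℂ[X], W.Monic ∧
      W.natDegree = (f.map ψ).natDegree ^ K ∧ ∀ α,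
      (∀ k, ‖(fun b => (f.map ψ).eval b)^[k] α‖ ≤ B) →
      (∀ k, ‖(fun b => (g.map ψ).eval b)^[k] α‖ ≤ B) →
      (q : ℝ) ^ 2 * ‖(polyIter (f.map ψ) K).leadingCoeff‖ *
        ‖(polyIter (g.map ψ) K).leadingCoeff‖ * ‖W.eval α‖ ^ 2 ≤ 1 / 4 := by
    rw [eventually_all]
    intro ψ
    refine exists_small_monic (f.map ψ) (g.map ψ) (by rwa [hdψ]) (by rw [hdψ, hdψ, hg]) k₀ ?_ B q hB
    rw [← hatIter_map, ← hatIter_map, ← Polynomial.map_sub, hdψ]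
    exact hk
  obtain ⟨K, hK⟩ := hev.exists
  set D := f.natDegree ^ K with hD
  have hD0 : 0 < D := pow_pos (by omega) _
  obtain ⟨N, hN⟩ := exists_prod_lt_one (((q : ℝ) * B) ^ (2 * D)) (by positivity) D hD0
  set emb := Set.Infinite.natEmbedding _ hinf
  set α : Fin N → A := fun i => (emb i : A) with hα
  have hαinj : Function.Injective α := fun i j hij =>
    Fin.val_injective (emb.injective (Subtype.ext hij))
  have hαp : ∀ i, ∃ m ≥ 1, (fun b => (f.map ι).eval b)^[m] (α i) = α i ∧
      (fun b => (g.map ι).eval b)^[m] (α i) = α i := fun i => (emb i).2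
  have hdA : ∀ h : L[X], (h.map ι).natDegree = h.natDegree := fun h => natDegree_map ι
  have hz1 := isIntegral_vandermonde (f.map ι) (by rw [hdA]; omega) (q : A) K N α
    (fun j => by
      obtain ⟨m, hm, h, -⟩ := hαp j
      exact isIntegral_periodic_map f hd q h₁ hm h)
    (fun j => by
      obtain ⟨m, hm, h, -⟩ := hαp j
      exact isIntegral_periodic_map f hd q h₁ hm (iterate_periodic _ _ _ _ h))
  have hz2 := isIntegral_vandermonde (g.map ι) (by rw [hdA]; omega) (q : A) K N α
    (fun j => by
      obtain ⟨m, hm, h, -⟩ := hαp j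
      exact isIntegral_periodic_map f hd q h₁ hm h)
    (fun j => by
      obtain ⟨m, hm, -, h⟩ := hαp j
      exact isIntegral_periodic_map g (by omega) q h₂ hm (iterate_periodic _ _ _ _ h))
  have hV : (Matrix.vandermonde α).det ≠ 0 := Matrix.det_vandermonde_ne_zero_iff.mpr hαinj
  have hqA : (q : A) ≠ 0 := by exact_mod_cast hq0
  have hne : ∀ h : L[X], h.natDegree ≠ 0 →
      (∏ i : Fin N, (((q : A) * (polyIter (h.map ι) K).leadingCoeff) ^
        ((i : ℕ) / (h.map ι).natDegree ^ K) * (q : A) ^ ((i : ℕ) % (h.map ι).natDegree ^ K))) *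
        (Matrix.vandermonde α).det ≠ 0 := by
    intro h hh
    refine mul_ne_zero (Finset.prod_ne_zero_iff.mpr fun i _ => ?_) hV
    exact mul_ne_zero (pow_ne_zero _ (mul_ne_zero hqA
      (leadingCoeff_polyIter_ne_zero _ (by rwa [hdA]) K))) (pow_ne_zero _ hqA)
  obtain ⟨φ, hφ⟩ := exists_embedding_one_le _
    (mul_ne_zero (hne f (by omega)) (hne g (by omega))) (hz1.mul hz2)
  set ψ : L →+* ℂ := φ.comp ι with hψ
  have hmap : ∀ h : L[X], (h.map ι).map φ = h.map ψ := fun h => map_map ι φ h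
  have hlc : ∀ h : L[X], φ (polyIter (h.map ι) K).leadingCoeff =
      (polyIter (h.map ψ) K).leadingCoeff := by
    intro h
    rw [← hmap, ← map_polyIter φ, leadingCoeff_map]
  obtain ⟨W, hW, hWD, hWα⟩ := hK ψ
  have hb₁ : ∀ j k, ‖(fun b => (f.map ψ).eval b)^[k] (φ (α j))‖ ≤ B := by
    intro j k
    obtain ⟨m, hm, h, -⟩ := hαp j
    have h' := congrArg φ h
    rw [iterate_map, hmap] at h'
    refine (hB₁' ψ m hm _ (iterate_periodic _ _ _ _ h')).trans ?_
    linarith [hBψ ψ, hB₂ ψ]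
  have hb₂ : ∀ j k, ‖(fun b => (g.map ψ).eval b)^[k] (φ (α j))‖ ≤ B := by
    intro j k
    obtain ⟨m, hm, -, h⟩ := hαp j
    have h' := congrArg φ h
    rw [iterate_map, hmap] at h'
    refine (hB₂' ψ m hm _ (iterate_periodic _ _ _ _ h')).trans ?_
    linarith [hBψ ψ, hB₁ ψ]
  set U := ‖(polyIter (f.map ψ) K).leadingCoeff‖ with hU
  set U' := ‖(polyIter (g.map ψ) K).leadingCoeff‖ with hU'
  have hUp : 0 < U := norm_pos_iff.mpr (leadingCoeff_polyIter_ne_zero _ (by rw [hdψ]; omega) K)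
  have hUp' : 0 < U' := norm_pos_iff.mpr (leadingCoeff_polyIter_ne_zero _ (by rw [hdψ]; omega) K)
  set w := √(1 / 4 / ((q : ℝ) ^ 2 * U * U')) with hw
  have hc : 0 < (q : ℝ) ^ 2 * U * U' := by positivity
  have hw2 : (q : ℝ) ^ 2 * U * U' * w ^ 2 ≤ 1 / 4 := by
    rw [hw, Real.sq_sqrt (by positivity)]
    apply le_of_eq; field_simp
  have hwα : ∀ j, ‖W.eval (φ (α j))‖ ≤ w := by
    intro j
    apply Real.le_sqrt_of_sq_le
    rw [le_div_iff₀ hc, mul_comm]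
    exact hWα _ (hb₁ j) (hb₂ j)
  rw [hdψ] at hWD
  have hVb := norm_vandermonde_le hD0 W hW hWD (fun j => φ (α j)) B w hB (fun j => hb₁ j 0) hwα
  have hest := vandermonde_estimate N D B q U U' w _ hq1 hB hUp.le hUp'.le (Real.sqrt_nonneg _)
    (norm_nonneg _) hw2 hD0 hVb
  have hdet : φ (Matrix.vandermonde α).det = (Matrix.vandermonde fun j => φ (α j)).det := by
    rw [RingHom.map_det]
    congr 1
    ext i j
    simp [Matrix.vandermonde_apply]
  rw [hdA, hdA, hg, ← hD] at hφ
  simp only [map_mul, map_prod, map_pow, map_natCast, hlc, hdet, norm_mul, norm_prod, norm_pow,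
    Complex.norm_natCast] at hφ
  exact absurd (hφ.trans hest) (not_le.mpr hN)

lemma iterate_derivative_comp_linear {F : Type*} [Field F] (p : F[X]) (e t : F) (n : ℕ) :
    derivative^[n] (p.comp (C e * X + C t)) =
      C (e ^ n) * (derivative^[n] p).comp (C e * X + C t) := by
  induction n with
  | zero => simp
  | succ n ih =>
    rw [Function.iterate_succ_apply', ih, Function.iterate_succ_apply', derivative_C_mul,
      derivative_comp]
    simp only [derivative_add, derivative_C_mul, derivative_X, derivative_C, mul_one, add_zero,
      pow_succ, C_mul, mul_assoc]

lemma iterate_derivative_C_mul_add {F : Type*} [Field F] (p : F[X]) (e t : F) (n : ℕ) (hn : 0 < n) :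
    derivative^[n] (C e * p + C t) = C e * derivative^[n] p := by
  rw [iterate_map_add derivative, iterate_derivative_C_mul, iterate_derivative_C hn, add_zero]

/-- If all normalised iterates of `f` and `g` differ by constants, then all the affine maps
relating the iterates have a common fixed point. -/
lemma exists_common_fixed {F : Type*} [Field F] [CharZero F] (f g : F[X]) (hd : 2 ≤ f.natDegree)
    (hg : g.natDegree = f.natDegree) (h : ∀ k, (hatIter f k - hatIter g k).natDegree = 0) :
    ∃ y : F, ∀ k ≥ 1, ∃ e t : F, polyIter f k = C e * polyIter g k + C t ∧ e * y + t = y := by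
  have hf0 : f.natDegree ≠ 0 := by omega
  have hg0 : g.natDegree ≠ 0 := by omega
  have hrel : ∀ k, ∃ e t : F, e ≠ 0 ∧ polyIter f k = C e * polyIter g k + C t := by
    intro k
    obtain ⟨c, hc⟩ := natDegree_eq_zero.mp (h k)
    set U := (polyIter f k).leadingCoeff with hU
    set U' := (polyIter g k).leadingCoeff with hU'
    have hU0 : U ≠ 0 := leadingCoeff_polyIter_ne_zero f hf0 k
    have hU0' : U' ≠ 0 := leadingCoeff_polyIter_ne_zero g hg0 k
    refine ⟨U / U', U * c, div_ne_zero hU0 hU0', ?_⟩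
    have e1 : hatIter f k = hatIter g k + C c := by rw [hc]; ring
    rw [polyIter_eq_hatIter f hf0 k, e1, ← hU, mul_add, ← C_mul]
    congr 1
    conv_rhs => rw [polyIter_eq_hatIter g hg0 k]
    rw [← hU', ← mul_assoc, ← C_mul]
    congr 2
    field_simp
  choose e t he hft using hrel
  set G := derivative^[g.natDegree - 1] g with hG
  have hGd : G.natDegree ≤ 1 := (natDegree_iterate_derivative _ _).trans (by omega)
  have hG1 : G.coeff 1 ≠ 0 := by
    rw [hG, coeff_iterate_derivative, show 1 + (g.natDegree - 1) = g.natDegree by omega,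
      nsmul_eq_mul]
    refine mul_ne_zero ?_ ?_
    · rw [Nat.cast_ne_zero]
      exact (Nat.descFactorial_pos.mpr (by omega)).ne'
    · rw [coeff_natDegree, leadingCoeff_ne_zero]
      rintro h0; rw [h0] at hg0; simp at hg0
  obtain ⟨a, b, hab⟩ := exists_eq_X_add_C_of_natDegree_le_one hGd
  have ha : a ≠ 0 := by
    rintro rfl
    rw [hab] at hG1
    simp at hG1
  refine ⟨-b / a, fun k hk => ⟨e k, t k, hft k, ?_⟩⟩
  have hf1 : f = C (e 1) * g + C (t 1) := by
    have := hft 1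
    simpa [polyIter_succ, polyIter_zero] using this
  have hcomp : (C (e 1) * g.comp (C (e k) * X + C (t k)) + C (t 1)) =
      C (e (k + 1)) * g + C (t (k + 1)) := by
    have h1 : (C (e 1) * g.comp (C (e k) * X + C (t k)) + C (t 1)).comp (polyIter g k) =
        (C (e (k + 1)) * g + C (t (k + 1))).comp (polyIter g k) := by
      have h2 := hft (k + 1)
      rw [polyIter_succ f, polyIter_succ g, hft k] at h2
      conv_lhs at h2 => rw [hf1]
      simpa [comp_assoc] using h2
    rw [← sub_eq_zero, ← sub_comp, comp_eq_zero_iff] at h1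
    rcases h1 with h1 | h1
    · exact sub_eq_zero.mp h1
    · exfalso
      have := natDegree_polyIter g k
      rw [h1.2, natDegree_C] at this
      exact pow_ne_zero _ hg0 this.symm
  have hder := congrArg (fun p => derivative^[g.natDegree - 1] p) hcomp
  simp only [iterate_derivative_C_mul_add _ _ _ _ (show 0 < g.natDegree - 1 by omega)] at hder
  rw [iterate_derivative_comp_linear, ← hG] at hder
  have hev := congrArg (fun p => p.eval (-b / a)) hder
  simp only [eval_mul, eval_C, eval_comp, hab, eval_add, eval_X] at hev
  have h0 : a * (-b / a) + b = 0 := by field_simp; ring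
  rw [h0, mul_zero, mul_eq_zero, mul_eq_zero] at hev
  have h3 : a * (e k * (-b / a) + t k) + b = 0 :=
    (hev.resolve_left (he 1)).resolve_left (pow_ne_zero _ (he k))
  have h4 : a * (e k * (-b / a) + t k) = a * (-b / a) := by linear_combination h3 - h0
  exact mul_left_cancel₀ ha h4

/-- The conclusion in the exceptional case where the normalised iterates differ by constants. -/
lemma exists_iter_eq_of_const {F : Type*} [Field F] [CharZero F] (f : F[X]) (ρ : F ≃+* F)
    (hd : 2 ≤ f.natDegree)
    (h : ∀ k, (hatIter f k - hatIter (f.map (ρ : F →+* F)) k).natDegree = 0)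
    (a : F) (hinj : Function.Injective fun n => (fun x => f.eval x)^[n] a)
    (hS : {n | ρ ((fun x => f.eval x)^[n] a) = (fun x => f.eval x)^[n] a}.Infinite) :
    ∃ k ≥ 1, (polyIter f k).map (ρ : F →+* F) = polyIter f k := by
  by_contra! hcon
  set b := fun n => (fun x => f.eval x)^[n] a with hb
  obtain ⟨y, hy⟩ := exists_common_fixed f (f.map (ρ : F →+* F)) hd
    (natDegree_map_eq_of_injective ρ.injective f) h
  have key : ∀ n n', n < n' → ρ (b n) = b n → ρ (b n') = b n' → b n' = y := by
    intro n n' hlt hn hn'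
    obtain ⟨k, rfl⟩ : ∃ k, n' = k + n := ⟨n' - n, by omega⟩
    obtain ⟨e, t, het, hfix⟩ := hy k (by omega)
    have h1 : b (k + n) = (polyIter f k).eval (b n) := by
      rw [eval_polyIter, hb]; exact Function.iterate_add_apply _ _ _ _
    have h2 : (polyIter (f.map (ρ : F →+* F)) k).eval (b n) = b (k + n) := by
      rw [← map_polyIter]
      conv_lhs => rw [← hn]
      have := eval_map_apply (p := polyIter f k) (ρ : F →+* F) (b n)
      simp only [RingHom.coe_coe] at this
      rw [this, ← h1, hn']
    have h3 : b (k + n) = e * b (k + n) + t := by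
      conv_lhs => rw [h1, het]
      simp [h2]
    have h4 : (1 - e) * (b (k + n) - y) = 0 := by linear_combination h3 + hfix
    rcases mul_eq_zero.mp h4 with h5 | h5
    · exfalso
      have he : e = 1 := by linear_combination -h5
      subst he
      have ht : t = 0 := by linear_combination hfix
      subst ht
      refine hcon k (by omega) ?_
      rw [map_polyIter, het]; simp
    · exact sub_eq_zero.mp h5
  obtain ⟨n₁, h₁⟩ := hS.nonempty
  obtain ⟨n₂, h₂, h₂'⟩ := hS.exists_gt n₁
  obtain ⟨n₃, h₃, h₃'⟩ := hS.exists_gt n₂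
  have := hinj ((key n₁ n₂ h₂' h₁ h₂).trans (key n₂ n₃ h₃' h₂ h₃).symm)
  omega

/-- A polynomial of degree one with two periodic points has an iterate equal to the identity. -/
lemma periodic_subsingleton_of_linear {F : Type*} [Field F] (f : F[X]) (hd : f.natDegree = 1)
    {x y : F} {m n : ℕ} (hm : 1 ≤ m) (hn : 1 ≤ n)
    (hx : (fun b => f.eval b)^[m] x = x) (hy : (fun b => f.eval b)^[n] y = y) (hxy : x ≠ y) :
    ∃ k ≥ 1, polyIter f k = X := by
  refine ⟨m * n, Nat.mul_pos hm hn, ?_⟩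
  have hdeg : (polyIter f (m * n)).natDegree = 1 := by rw [natDegree_polyIter, hd, one_pow]
  have hx' : (polyIter f (m * n)).eval x = x := by
    rw [eval_polyIter, Function.iterate_mul]
    exact Function.iterate_fixed hx n
  have hy' : (polyIter f (m * n)).eval y = y := by
    rw [eval_polyIter, mul_comm, Function.iterate_mul]
    exact Function.iterate_fixed hy m
  obtain ⟨a, b, hab⟩ := exists_eq_X_add_C_of_natDegree_le_one hdeg.le
  rw [hab] at hx' hy' ⊢
  simp only [eval_add, eval_mul, eval_C, eval_X] at hx' hy'
  have h1 : (a - 1) * (x - y) = 0 := by linear_combination hx' - hy'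
  have ha : a = 1 := by
    rcases mul_eq_zero.mp h1 with h | h
    · linear_combination h
    · exact absurd (sub_eq_zero.mp h) hxy
  subst ha
  have hb : b = 0 := by linear_combination hx'
  subst hb
  simp

/-! ### Places, Frobenius elements and backward orbits -/

lemma val_le_one_of_isIntegral {E : Type*} [Field E] (v : AbsoluteValue E ℝ)
    (hv : IsNonarchimedean v) {x : E} (hx : IsIntegral ℤ x) : v x ≤ 1 := by
  let V : ValuationSubring E :=
    { carrier := {x | v x ≤ 1}
      mul_mem' := fun {a b} ha hb => by
        have ha : v a ≤ 1 := ha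
        have hb : v b ≤ 1 := hb
        change v (a * b) ≤ 1
        rw [map_mul]; exact mul_le_one₀ ha (v.nonneg _) hb
      one_mem' := by change v 1 ≤ 1; simp
      add_mem' := fun {a b} ha hb => (hv a b).trans (max_le ha hb)
      zero_mem' := by change v 0 ≤ 1; simp
      neg_mem' := fun {a} ha => by
        have ha : v a ≤ 1 := ha
        change v (-a) ≤ 1
        rwa [v.map_neg]
      mem_or_inv_mem' := fun a => by
        change v a ≤ 1 ∨ v a⁻¹ ≤ 1
        rw [map_inv₀]
        rcases le_total (v a) 1 with h | h
        · exact Or.inl h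
        · exact Or.inr (inv_le_one_of_one_le₀ h) }
  exact mem_valuationSubring_of_isIntegral V hx

/-- A given nonzero algebraic number is a unit at all places of large residue characteristic,
uniformly in the number field in which it is considered. -/
lemma unit_of_large {A : Type*} [Field A] [CharZero A] [Algebra.IsAlgebraic ℚ A] (T : Set A)
    (hT : T.Finite) :
    ∃ N₀ : ℕ, ∀ p : ℕ, p.Prime → N₀ < p → ∀ (E : IntermediateField ℚ A)
      (v : AbsoluteValue E ℝ), IsNonarchimedean v → v p < 1 → ∀ w : E, (w : A) ∈ T → w ≠ 0 →
        v w = 1 := by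
  -- it suffices to bound the absolute value from above for single elements
  have h1 : ∀ z : A, ∃ N₀ : ℕ, ∀ p : ℕ, p.Prime → N₀ < p → ∀ (E : IntermediateField ℚ A)
      (v : AbsoluteValue E ℝ), IsNonarchimedean v → v p < 1 → ∀ w : E, (w : A) = z → v w ≤ 1 := by
    intro z
    have hz : IsAlgebraic ℤ z := by
      have := Algebra.IsAlgebraic.isAlgebraic (R := ℚ) z
      exact (IsFractionRing.isAlgebraic_iff ℤ ℚ A).2 this
    obtain ⟨y, hy0, hy⟩ := hz.exists_integral_multiple
    refine ⟨y.natAbs, fun p hp hlt E v hv hvp w hw => ?_⟩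
    have hyv : v (y : E) = 1 := by
      have hc : Nat.Coprime y.natAbs p := by
        rw [Nat.coprime_comm, hp.coprime_iff_not_dvd]
        intro hdvd
        exact absurd (Nat.le_of_dvd (Int.natAbs_pos.2 hy0) hdvd) (by omega)
      have := val_natCast_coprime v hv p y.natAbs hvp hc
      rcases Int.natAbs_eq y with h | h
      · rw [h]; simpa using this
      · rw [h]; simpa using this
    have hIntegral : IsIntegral ℤ ((y : E) * w) := by
      rw [← isIntegral_algHom_iff (E.val.restrictScalars ℤ) (RingHom.injective _)]
      convert hy using 1
      simp [hw, zsmul_eq_mul]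
    have := val_le_one_of_isIntegral v hv hIntegral
    rwa [map_mul, hyv, one_mul] at this
  choose N hN using h1
  refine ⟨hT.toFinset.sup (fun z => max (N z) (N z⁻¹)), fun p hp hlt E v hv hvp w hw hw0 => ?_⟩
  have hle : max (N (w : A)) (N (w : A)⁻¹) ≤ hT.toFinset.sup (fun z => max (N z) (N z⁻¹)) :=
    Finset.le_sup (f := fun z => max (N z) (N z⁻¹)) (hT.mem_toFinset.2 hw)
  have h1 := hN (w : A) p hp (by have := le_max_left (N (w : A)) (N (w : A)⁻¹); omega) E v hv hvp w rfl
  have h2 := hN (w : A)⁻¹ p hp (by have := le_max_right (N (w : A)) (N (w : A)⁻¹); omega) E v hv hvp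
    w⁻¹ (by simp)
  rw [map_inv₀] at h2
  refine le_antisymm h1 ?_
  exact (inv_le_one₀ (v.pos hw0)).1 h2

/-- The `P`-adic absolute value, together with the description of its valuation ring as the
localisation of `𝓞 E` at `P`. -/
lemma exists_place {E : Type*} [Field E] [NumberField E] (P : Ideal (𝓞 E)) (hP : P.IsPrime) (p : ℕ)
    (hp : p.Prime) (hpP : (p : 𝓞 E) ∈ P) :
    ∃ v : AbsoluteValue E ℝ, IsNonarchimedean v ∧ v p < 1 ∧ (∀ x : 𝓞 E, v x < 1 ↔ x ∈ P) ∧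
      (∀ x : 𝓞 E, v x ≤ 1) ∧ ∀ x : E, v x ≤ 1 → ∃ a s : 𝓞 E, s ∉ P ∧ x * s = a := by
  have hne : P ≠ ⊥ := by
    rintro rfl
    rw [Ideal.mem_bot] at hpP
    exact hp.ne_zero (by exact_mod_cast hpP)
  let w : HeightOneSpectrum (𝓞 E) := ⟨P, hP, hne⟩
  have hb : (1 : NNReal) < 2 := one_lt_two
  refine ⟨w.adicAbv hb, w.isNonarchimedean_adicAbv hb, ?_, ?_, ?_, ?_⟩
  · have := (w.adicAbv_coe_lt_one_iff (K := E) hb (p : 𝓞 E)).2 hpP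
    simpa using this
  · exact fun x => w.adicAbv_coe_lt_one_iff (K := E) hb x
  · exact fun x => w.adicAbv_coe_le_one (K := E) hb x
  · intro x hx
    have hx' : w.valuation E x ≤ 1 := by
      have : WithZeroMulInt.toNNReal (ne_zero_of_lt hb) (w.valuation E x) ≤ 1 := hx
      exact (WithZeroMulInt.toNNReal_le_one_iff hb).1 this
    obtain ⟨n, d, hnd⟩ := w.exists_primeCompl_mul_eq_of_integer x hx'
    exact ⟨n, d, d.2, hnd⟩

lemma val_sub_lt {E : Type*} [Field E] (v : AbsoluteValue E ℝ) (hv : IsNonarchimedean v) {x y : E}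
    {c : ℝ} (hx : v x < c) (hy : v y < c) : v (x - y) < c := by
  rw [sub_eq_add_neg]
  refine (hv x (-y)).trans_lt (max_lt hx ?_)
  rwa [v.map_neg]

lemma val_add_lt {E : Type*} [Field E] (v : AbsoluteValue E ℝ) (hv : IsNonarchimedean v) {x y : E}
    {c : ℝ} (hx : v x < c) (hy : v y < c) : v (x + y) < c :=
  (hv x y).trans_lt (max_lt hx hy)

lemma val_mul_lt_one {E : Type*} [Field E] (v : AbsoluteValue E ℝ) {x y : E}
    (hx : v x ≤ 1) (hy : v y < 1) : v (x * y) < 1 := by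
  rw [map_mul]
  exact (mul_le_of_le_one_left (v.nonneg _) hx).trans_lt hy

lemma val_eq_one_of_sub_lt {E : Type*} [Field E] (v : AbsoluteValue E ℝ) (hv : IsNonarchimedean v)
    {x y : E} (hx : v x = 1) (hxy : v (y - x) < 1) : v y = 1 := by
  refine le_antisymm ?_ ?_
  · have := hv (y - x) x
    rw [sub_add_cancel] at this
    exact this.trans (max_le hxy.le hx.le)
  · by_contra! h
    have := val_sub_lt v hv h hxy
    rw [sub_sub_cancel, hx] at this
    exact lt_irrefl _ this

/-- The Frobenius congruence extends from the ring of integers to the ring of `v`-integers. -/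
lemma frob_val {E : Type*} [Field E] [NumberField E] (P : Ideal (𝓞 E)) (p : ℕ)
    (v : AbsoluteValue E ℝ) (hv : IsNonarchimedean v) (hP : ∀ x : 𝓞 E, v x < 1 ↔ x ∈ P)
    (h1 : ∀ x : 𝓞 E, v x ≤ 1) (hs : ∀ x : E, v x ≤ 1 → ∃ a s : 𝓞 E, s ∉ P ∧ x * s = a)
    (ρ : E →+* E) (hρ : ∀ x : 𝓞 E, RingOfIntegers.mapRingHom ρ x - x ^ p ∈ P) (x : E)
    (hx : v x ≤ 1) : v (ρ x - x ^ p) < 1 := by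
  obtain ⟨a, s, hsP, hxs⟩ := hs x hx
  have ha : v (ρ a - (a : E) ^ p) < 1 := by
    have := (hP _).2 (hρ a)
    simpa using this
  have hs' : v (ρ s - (s : E) ^ p) < 1 := by
    have := (hP _).2 (hρ s)
    simpa using this
  have hs1 : v (s : E) = 1 := le_antisymm (h1 s) (not_lt.1 fun h => hsP ((hP s).1 h))
  have hρs : v (ρ s) = 1 := val_eq_one_of_sub_lt v hv (x := (s : E) ^ p) (by simp [hs1]) hs'
  have key : (ρ x - x ^ p) * ρ s = (ρ a - (a : E) ^ p) - x ^ p * (ρ s - (s : E) ^ p) := by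
    rw [← hxs, map_mul]; ring
  have := val_sub_lt v hv ha
    (val_mul_lt_one v (x := x ^ p) (by rw [map_pow]; exact pow_le_one₀ (v.nonneg _) hx) hs')
  rw [← key, map_mul, hρs, mul_one] at this
  exact this

/-- A finite order automorphism preserving the `v`-integers preserves `v`. -/
lemma val_comp_eq {E : Type*} [Field E] (v : AbsoluteValue E ℝ) (ρ : E →+* E) (n : ℕ) (hn : 1 ≤ n)
    (hρn : ∀ x, ρ^[n] x = x) (h : ∀ x, v x ≤ 1 → v (ρ x) ≤ 1) (x : E) : v (ρ x) = v x := by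
  have mono : ∀ x y, v x ≤ v y → v (ρ x) ≤ v (ρ y) := by
    intro x y hxy
    by_cases hy : y = 0
    · subst hy
      have : x = 0 := by
        have : v x ≤ 0 := by simpa using hxy
        exact v.eq_zero.1 (le_antisymm this (v.nonneg _))
      rw [this]
    · have hpos := v.pos hy
      have := h (x / y) (by rw [map_div₀]; exact (div_le_one hpos).2 hxy)
      rw [map_div₀, map_div₀, div_le_one (v.pos ((map_ne_zero ρ).2 hy))] at this
      exact this
  obtain ⟨k, rfl⟩ : ∃ k, n = k + 1 := ⟨n - 1, by omega⟩
  rcases le_total (v (ρ x)) (v x) with hle | hle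
  · have : ∀ i, v (ρ^[i + 1] x) ≤ v (ρ x) := by
      intro i
      induction i with
      | zero => simp
      | succ i ih =>
        rw [Function.iterate_succ_apply']
        exact (mono _ _ (ih.trans hle))
    have := this k
    rw [hρn] at this
    exact le_antisymm hle this
  · have : ∀ i, v (ρ x) ≤ v (ρ^[i + 1] x) := by
      intro i
      induction i with
      | zero => simp
      | succ i ih =>
        rw [Function.iterate_succ_apply' _ (i + 1)]
        exact (mono _ _ (hle.trans ih))
    have := this k
    rw [hρn] at this
    exact le_antisymm this hle

lemma finite_quotient_valuation {E : Type*} [Field E] [NumberField E] (P : Ideal (𝓞 E)) (p : ℕ)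
    (hp : p.Prime) (v : AbsoluteValue E ℝ) (hP : ∀ x : 𝓞 E, v x < 1 ↔ x ∈ P)
    (h1 : ∀ x : 𝓞 E, v x ≤ 1) (hs : ∀ x : E, v x ≤ 1 → ∃ a s : 𝓞 E, s ∉ P ∧ x * s = a)
    (𝒪 : Subring E) (h𝒪 : ∀ x, x ∈ 𝒪 ↔ v x ≤ 1) :
    Finite (𝒪 ⧸ Ideal.span {((p : 𝒪)) ^ 2}) := by
  let φ : 𝓞 E →+* 𝒪 := (algebraMap (𝓞 E) E).codRestrict 𝒪 (fun x => (h𝒪 _).2 (h1 x))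
  let I : Ideal 𝒪 := Ideal.span {((p : 𝒪)) ^ 2}
  let ψ : 𝓞 E →+* 𝒪 ⧸ I := (Ideal.Quotient.mk I).comp φ
  let J : Ideal (𝓞 E) := Ideal.span {(p : 𝓞 E) ^ 2}
  have hJ : J ≠ ⊥ := by
    intro h
    rw [Ideal.span_singleton_eq_bot] at h
    exact hp.ne_zero (by exact_mod_cast pow_eq_zero_iff (two_ne_zero) |>.1 h)
  have hfinJ : Finite (𝓞 E ⧸ J) := Ring.HasFiniteQuotients.finiteQuotient hJ
  have hψJ : ∀ x ∈ J, ψ x = 0 := by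
    intro x hx
    obtain ⟨c, rfl⟩ := Ideal.mem_span_singleton'.1 hx
    change Ideal.Quotient.mk I (φ _) = 0
    rw [Ideal.Quotient.eq_zero_iff_mem, map_mul, map_pow, map_natCast]
    exact Ideal.mul_mem_left _ _ (Ideal.mem_span_singleton_self _)
  have hfin : Finite ψ.range := by
    let ψ' : 𝓞 E ⧸ J →+* 𝒪 ⧸ I := Ideal.Quotient.lift J ψ hψJ
    have hsub : (Set.range ψ) ⊆ Set.range ψ' := by
      rintro _ ⟨x, rfl⟩
      exact ⟨Ideal.Quotient.mk J x, by simp [ψ']⟩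
    exact ((Set.finite_range ψ').subset hsub).to_subtype
  have hsurj : Function.Surjective ψ := by
    intro y
    obtain ⟨x, rfl⟩ := Ideal.Quotient.mk_surjective y
    obtain ⟨a, s, hsP, hxs⟩ := hs x ((h𝒪 x).1 x.2)
    have hs1 : v (s : E) = 1 := le_antisymm (h1 s) (not_lt.1 fun h => hsP ((hP s).1 h))
    have hs0 : (s : E) ≠ 0 := by intro h; rw [h, map_zero] at hs1; exact zero_ne_one hs1
    have hunit : IsUnit (ψ s) := by
      have hu : IsUnit (φ s) := by
        refine IsUnit.of_mul_eq_one ⟨(s : E)⁻¹, (h𝒪 _).2 (by rw [map_inv₀, hs1, inv_one])⟩ ?_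
        ext
        change (s : E) * (s : E)⁻¹ = 1
        exact mul_inv_cancel₀ hs0
      exact hu.map (Ideal.Quotient.mk I)
    obtain ⟨m, n, hmn, heq⟩ := Finite.exists_ne_map_eq_of_infinite
      (fun n : ℕ => (⟨ψ (s ^ n), ⟨s ^ n, rfl⟩⟩ : ψ.range))
    simp only [Subtype.mk.injEq, map_pow] at heq
    have hone : ∃ k, ψ s ^ (k + 1) = 1 := by
      wlog hlt : m < n generalizing m n
      · exact this n m hmn.symm heq.symm (by omega)
      · refine ⟨n - m - 1, ?_⟩
        have : ψ s ^ n = ψ s ^ m * ψ s ^ (n - m - 1 + 1) := by rw [← pow_add]; congr 1; omega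
        rw [this] at heq
        exact ((hunit.pow m).mul_left_cancel (by rw [mul_one]; exact heq)).symm
    obtain ⟨k, hk⟩ := hone
    refine ⟨a * s ^ k, ?_⟩
    have hxa : Ideal.Quotient.mk I x * ψ s = ψ a := by
      change Ideal.Quotient.mk I x * Ideal.Quotient.mk I (φ s) = Ideal.Quotient.mk I (φ a)
      rw [← map_mul]
      congr 1
      ext
      exact hxs
    rw [map_mul, map_pow, ← hxa, mul_assoc, ← pow_succ', hk, mul_one]
  have hψ : ψ.range = ⊤ := RingHom.range_eq_top.2 hsurj
  rw [hψ] at hfin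
  exact Finite.of_equiv _ Subring.topEquiv.toEquiv

/-- If a polynomial with unit leading coefficient whose roots all lie in `E` takes a small value at
`b`, then `b` is close to one of the roots. -/
lemma exists_root_close {A : Type*} [Field A] [CharZero A] [IsAlgClosed A]
    (E : IntermediateField ℚ A) (v : AbsoluteValue E ℝ) (P : E[X]) (hP : v P.leadingCoeff = 1)
    (hr : ∀ x : A, (P.map (algebraMap E A)).eval x = 0 → x ∈ E) (b : E) (hb : v (P.eval b) < 1) :
    ∃ y : E, P.eval y = 0 ∧ v (b - y) < 1 := by
  have hP0 : P ≠ 0 := by rintro rfl; simp at hP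
  have hsplit : P.Splits := by
    refine Splits.of_splits_map (algebraMap E A) (IsAlgClosed.splits _) (fun x hx => ?_)
    have := (mem_roots'.1 hx).2
    exact ⟨⟨x, hr x this⟩, rfl⟩
  by_contra! hcon
  rw [hsplit.eval_eq_prod_roots, map_mul, hP, one_mul] at hb
  refine absurd hb (not_lt.2 ?_)
  rw [map_multiset_prod, Multiset.map_map]
  refine Multiset.prod_induction (fun t : ℝ => 1 ≤ t) _
    (fun s t hs ht => one_le_mul_of_one_le_of_one_le hs ht) le_rfl (fun t ht => ?_)
  obtain ⟨y, hy, rfl⟩ := Multiset.mem_map.1 ht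
  exact hcon y (mem_roots'.1 hy).2

/-- Existence of Frobenius elements over `ℚ`. -/
lemma exists_frob_of_galois {E : Type*} [Field E] [NumberField E] [IsGalois ℚ E] (Q : Ideal (𝓞 E))
    (hQ : Q.IsPrime) (p : ℕ) (hp : p.Prime) (hpQ : (p : 𝓞 E) ∈ Q) :
    ∃ ρ : E ≃ₐ[ℚ] E, ∀ x : 𝓞 E,
      RingOfIntegers.mapRingHom (ρ : E →+* E) x - x ^ p ∈ Q := by
  have hne : Q ≠ ⊥ := by
    rintro rfl
    rw [Ideal.mem_bot] at hpQ
    exact hp.ne_zero (by exact_mod_cast hpQ)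
  have hfin : Finite (𝓞 E ⧸ Q) := Ring.HasFiniteQuotients.finiteQuotient hne
  obtain ⟨ρ, hρ⟩ := IsArithFrobAt.exists_of_isInvariant ℤ (E ≃ₐ[ℚ] E) Q
  refine ⟨ρ, fun x => ?_⟩
  have hcard : Nat.card (ℤ ⧸ Q.under ℤ) = p := by
    have hmax : (Ideal.span {(p : ℤ)}).IsMaximal :=
      PrincipalIdealRing.isMaximal_of_irreducible (Nat.prime_iff_prime_int.1 hp).irreducible
    have hle : Ideal.span {(p : ℤ)} ≤ Q.under ℤ := by
      rw [Ideal.span_singleton_le_iff_mem]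
      change algebraMap ℤ (𝓞 E) p ∈ Q
      simpa using hpQ
    have : Ideal.span {(p : ℤ)} = Q.under ℤ :=
      hmax.eq_of_le (Ideal.IsPrime.ne_top inferInstance) hle
    rw [← this, Nat.card_congr (Int.quotientSpanNatEquivZMod p).toEquiv, Nat.card_zmod]
  have := hρ x
  rw [hcard] at this
  exact this

/-- The ring of `v`-integers. -/
def valInt {E : Type*} [Field E] (v : AbsoluteValue E ℝ) (hv : IsNonarchimedean v) : Subring E where
  carrier := {x | v x ≤ 1}
  mul_mem' := fun {a b} ha hb => by
    have ha : v a ≤ 1 := ha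
    have hb : v b ≤ 1 := hb
    change v (a * b) ≤ 1
    rw [map_mul]; exact mul_le_one₀ ha (v.nonneg _) hb
  one_mem' := by change v 1 ≤ 1; simp
  add_mem' := fun {a b} ha hb => (hv a b).trans (max_le ha hb)
  zero_mem' := by change v 0 ≤ 1; simp
  neg_mem' := fun {a} ha => by
    have ha : v a ≤ 1 := ha
    change v (-a) ≤ 1
    rwa [v.map_neg]

lemma mem_valInt {E : Type*} [Field E] (v : AbsoluteValue E ℝ) (hv : IsNonarchimedean v) (x : E) :
    x ∈ valInt v hv ↔ v x ≤ 1 := Iff.rfl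

lemma exists_lift_valInt {E : Type*} [Field E] (v : AbsoluteValue E ℝ) (hv : IsNonarchimedean v)
    (g : E[X]) (hg : ∀ i, v (g.coeff i) ≤ 1) :
    ∃ g' : (valInt v hv)[X], g'.map (valInt v hv).subtype = g := by
  have : g ∈ Polynomial.lifts (valInt v hv).subtype := by
    rw [Polynomial.lifts_iff_coeff_lifts]
    intro n
    exact ⟨⟨g.coeff n, hg n⟩, rfl⟩
  exact (Polynomial.mem_lifts _).1 this

lemma val_eval_le_one {E : Type*} [Field E] (v : AbsoluteValue E ℝ) (hv : IsNonarchimedean v)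
    (g : E[X]) (hg : ∀ i, v (g.coeff i) ≤ 1) {x : E} (hx : v x ≤ 1) : v (g.eval x) ≤ 1 := by
  obtain ⟨g', rfl⟩ := exists_lift_valInt v hv g hg
  have := (g'.eval ⟨x, hx⟩).2
  have e : ((g'.eval ⟨x, hx⟩ : valInt v hv) : E) = (g'.map (valInt v hv).subtype).eval x := by
    rw [← Subring.subtype_apply, ← eval_map_apply]; rfl
  rw [← e]; exact this

lemma val_eval_sub_lt {E : Type*} [Field E] (v : AbsoluteValue E ℝ) (hv : IsNonarchimedean v)
    (g : E[X]) (hg : ∀ i, v (g.coeff i) ≤ 1) {x y : E} (hx : v x ≤ 1) (hy : v y ≤ 1)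
    (hxy : v (x - y) < 1) : v (g.eval x - g.eval y) < 1 := by
  obtain ⟨g', rfl⟩ := exists_lift_valInt v hv g hg
  obtain ⟨c, hc⟩ := sub_dvd_eval_sub (⟨x, hx⟩ : valInt v hv) ⟨y, hy⟩ g'
  have e : ∀ (z : E) (hz : v z ≤ 1),
      ((g'.eval ⟨z, hz⟩ : valInt v hv) : E) = (g'.map (valInt v hv).subtype).eval z := by
    intro z hz
    rw [← Subring.subtype_apply, ← eval_map_apply]; rfl
  have := congrArg (Subring.subtype _) hc
  rw [map_sub, map_mul, map_sub] at this
  simp only [Subring.subtype_apply, e] at this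
  rw [this, mul_comm]
  exact val_mul_lt_one v c.2 hxy

/-- Polynomials with integral coefficients and unit leading coefficient pull `v`-integers back to
`v`-integers. -/
lemma val_le_one_of_eval {E : Type*} [Field E] (v : AbsoluteValue E ℝ) (hv : IsNonarchimedean v)
    (g : E[X]) (hg : ∀ i, v (g.coeff i) ≤ 1) (hlc : v g.leadingCoeff = 1) (hd : 1 ≤ g.natDegree)
    {y : E} (hy : v (g.eval y) ≤ 1) : v y ≤ 1 := by
  by_contra! hlt
  have hy0 : y ≠ 0 := by rintro rfl; simp at hlt; linarith
  let _ : Invertible y := invertibleOfNonzero hy0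
  have h1 := eval₂_reverse_mul_pow (RingHom.id E) y g
  rw [eval₂_id, eval₂_id, invOf_eq_inv] at h1
  have ht : v y⁻¹ < 1 := by rw [map_inv₀]; exact inv_lt_one_of_one_lt₀ hlt
  have hrev : ∀ i, v (g.reverse.coeff i) ≤ 1 := fun i => by rw [coeff_reverse]; exact hg _
  have h2 := val_eval_sub_lt v hv g.reverse hrev ht.le (y := 0) (by simp) (by simpa using ht)
  rw [← coeff_zero_eq_eval_zero, coeff_zero_reverse] at h2
  have h3 := val_eq_one_of_sub_lt v hv hlc h2
  rw [← h1, map_mul, h3, one_mul, map_pow] at hy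
  exact absurd hy (not_le.2 (one_lt_pow₀ hlt (by omega)))

lemma exists_eq_of_pow {D : Type*} [CommRing D] [IsDomain D] (q : ℕ) (hq : 2 ≤ q) (τ : ℕ → D)
    (hτ : ∀ i, τ i ^ q = τ i) : ∃ i j, i < j ∧ j ≤ q ∧ τ i = τ j := by
  classical
  have hX : (X ^ q - X : D[X]).natDegree = q := by
    rw [natDegree_sub_eq_left_of_natDegree_lt] <;> simp
    omega
  have hX0 : (X ^ q - X : D[X]) ≠ 0 := by
    intro h; rw [h, natDegree_zero] at hX; omega
  obtain ⟨i, hi, j, hj, hij, heq⟩ := Finset.exists_ne_map_eq_of_card_lt_of_maps_to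
    (s := Finset.range (q + 1)) (t := (X ^ q - X : D[X]).roots.toFinset) (f := τ)
    (by
      rw [Finset.card_range]
      have := (Multiset.toFinset_card_le _).trans (card_roots' (X ^ q - X : D[X]))
      omega)
    (fun i _ => by
      rw [Finset.mem_coe, Multiset.mem_toFinset, mem_roots hX0]
      simp [hτ])
  rw [Finset.mem_range] at hi hj
  rcases lt_or_gt_of_ne hij with h | h
  · exact ⟨i, j, h, by omega, heq⟩
  · exact ⟨j, i, h, by omega, heq.symm⟩

/-- Pigeonhole in the residue field: there are at most `q` solutions of `t ^ q = t`. -/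
lemma exists_close_of_pow {E : Type*} [Field E] (v : AbsoluteValue E ℝ) (hv : IsNonarchimedean v)
    (q : ℕ) (hq : 2 ≤ q) (t : ℕ → E) (ht : ∀ i, v (t i) ≤ 1) (htq : ∀ i, v (t i ^ q - t i) < 1) :
    ∃ i j, i < j ∧ j ≤ q ∧ v (t i - t j) < 1 := by
  let m : Ideal (valInt v hv) :=
    { carrier := {x | v x < 1}
      add_mem' := fun {a b} ha hb => val_add_lt v hv ha hb
      zero_mem' := by change v ((0 : valInt v hv) : E) < 1; simp
      smul_mem' := fun c x hx => val_mul_lt_one v c.2 hx }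
  have hm : m.IsPrime := by
    refine ⟨fun h => ?_, fun {x y} hxy => ?_⟩
    · have : (1 : valInt v hv) ∈ m := h ▸ Submodule.mem_top
      have : v ((1 : valInt v hv) : E) < 1 := this
      simp at this
    · by_contra! hcon
      have hx : v (x : E) = 1 := le_antisymm x.2 (not_lt.1 hcon.1)
      have hy : v (y : E) = 1 := le_antisymm y.2 (not_lt.1 hcon.2)
      have : v ((x * y : valInt v hv) : E) < 1 := hxy
      rw [Subring.coe_mul, map_mul, hx, hy] at this
      linarith
  let τ : ℕ → valInt v hv ⧸ m := fun i => Ideal.Quotient.mk m ⟨t i, ht i⟩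
  have hτ : ∀ i, τ i ^ q = τ i := by
    intro i
    rw [← map_pow, Ideal.Quotient.eq]
    exact htq i
  obtain ⟨i, j, hij, hj, h⟩ := exists_eq_of_pow q hq τ hτ
  exact ⟨i, j, hij, hj, Ideal.Quotient.eq.1 h⟩

/-- A point which enters `Y` in `q + 1` steps, and whose orbit is fixed by a map `ρ` congruent to
`x ↦ x ^ q`, enters `Y` in `q` steps: by the pigeonhole principle its `q`-th iterate is congruent to a later
one, hence to a point of `Y`, and `hsep` places it in `Y`. -/
lemma backward_orbit_short {E : Type*} [Field E] (v : AbsoluteValue E ℝ) (hv : IsNonarchimedean v)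
    (g : E[X]) (hg : ∀ i, v (g.coeff i) ≤ 1) (hlc : v g.leadingCoeff = 1) (hd : 1 ≤ g.natDegree)
    (q : ℕ) (hq : 2 ≤ q) (Y : Set E) (hY : ∀ y ∈ Y, v y ≤ 1) (hgY : ∀ y ∈ Y, g.eval y ∈ Y)
    (hsep : ∀ y, g.eval y ∈ Y → y ∉ Y → ∀ β ∈ Y, 1 ≤ v (y - β)) (ρ : E → E)
    (hρ : ∀ x, v x ≤ 1 → v (ρ x - x ^ q) < 1) (y : E)
    (hfix : ∀ i, ρ ((fun b => g.eval b)^[i] y) = (fun b => g.eval b)^[i] y)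
    (hM : (fun b => g.eval b)^[q + 1] y ∈ Y) : (fun b => g.eval b)^[q] y ∈ Y := by
  let t : ℕ → E := fun i => (fun b => g.eval b)^[i] y
  have htsucc : ∀ i, t (i + 1) = g.eval (t i) := fun i => Function.iterate_succ_apply' _ _ _
  have hback : ∀ i, v (t i) ≤ 1 → v (t 0) ≤ 1 := by
    intro i
    induction i with
    | zero => exact id
    | succ i ih =>
      intro h
      rw [htsucc] at h
      exact ih (val_le_one_of_eval v hv g hg hlc hd h)
  have ht : ∀ i, v (t i) ≤ 1 := by
    intro i
    induction i with
    | zero => exact hback _ (hY _ hM)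
    | succ i ih => rw [htsucc]; exact val_eval_le_one v hv g hg ih
  have hYt : ∀ i, t (q + 1 + i) ∈ Y := by
    intro i
    induction i with
    | zero => exact hM
    | succ i ih => rw [← add_assoc, htsucc]; exact hgY _ ih
  obtain ⟨i, j, hij, hjq, hc⟩ := exists_close_of_pow v hv q hq t ht (fun i => by
    have := hρ (t i) (ht i)
    rw [hfix i] at this
    rwa [v.map_sub])
  have hiter : ∀ s, v (t (i + s) - t (j + s)) < 1 := by
    intro s
    induction s with
    | zero => exact hc
    | succ s ih =>
      rw [← add_assoc, ← add_assoc, htsucc, htsucc]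
      exact val_eval_sub_lt v hv g hg (ht _) (ht _) ih
  by_contra hcon
  have h1 := hiter (q - i)
  have e1 : i + (q - i) = q := by omega
  have e2 : j + (q - i) = q + 1 + (j - i - 1) := by omega
  rw [e1, e2] at h1
  exact absurd h1 (not_lt.2 (hsep (t q) (by rw [← htsucc]; exact hM) hcon _ (hYt _)))

lemma exists_prime_over {L E : Type*} [Field L] [NumberField L] [Field E] [NumberField E]
    (j : L →+* E) (P : Ideal (𝓞 L)) (hP : P.IsPrime) :
    ∃ Q : Ideal (𝓞 E), Q.IsPrime ∧ ∀ x : 𝓞 L, x ∈ P → RingOfIntegers.mapRingHom j x ∈ Q := by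
  let _ : Algebra L E := j.toAlgebra
  obtain ⟨Q, -, hQ, hcomap⟩ := Ideal.exists_ideal_over_prime_of_isIntegral_of_isPrime P
    (⊥ : Ideal (𝓞 E)) (by
      rw [Ideal.comap_bot_of_injective _ (FaithfulSMul.algebraMap_injective (𝓞 L) (𝓞 E))]
      exact bot_le)
  refine ⟨Q, hQ, fun x hx => ?_⟩
  rw [← hcomap] at hx
  exact hx

lemma frob_pow {E : Type*} [Field E] [CharZero E] (v : AbsoluteValue E ℝ) (hv : IsNonarchimedean v) (p : ℕ)
    (ρ : E ≃ₐ[ℚ] E) (hρ : ∀ x, v x ≤ 1 → v (ρ x - x ^ p) < 1) (r : ℕ) :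
    ∀ x, v x ≤ 1 → v ((ρ ^ r) x - x ^ p ^ r) < 1 := by
  have hle : ∀ (y z : E), v z ≤ 1 → v (y - z) < 1 → v y ≤ 1 := by
    intro y z hz h
    have := hv (y - z) z
    rw [sub_add_cancel] at this
    exact this.trans (max_le h.le hz)
  have hpow : ∀ (x : E) (n : ℕ), v x ≤ 1 → v (x ^ n) ≤ 1 := fun x n hx => by
    rw [map_pow]; exact pow_le_one₀ (v.nonneg _) hx
  intro x hx
  induction r with
  | zero => simp
  | succ r ih =>
    have h1 : v ((ρ ^ r) x) ≤ 1 := hle _ _ (hpow _ _ hx) ih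
    have h2 := hρ _ h1
    have h3 := val_eval_sub_lt v hv (X ^ p) (fun i => by
      rw [coeff_X_pow]; split_ifs <;> simp) h1 (hpow _ (p ^ r) hx) ih
    simp only [eval_pow, eval_X] at h3
    have := val_add_lt v hv h2 h3
    rw [sub_add_sub_cancel, ← pow_mul, ← pow_succ] at this
    rw [pow_succ']
    exact this

lemma finite_preimage_iterate {A : Type*} [Field A] (g : A[X]) (hd : 1 ≤ g.natDegree) (Y : Set A)
    (hY : Y.Finite) (M : ℕ) : {y | (fun b => g.eval b)^[M] y ∈ Y}.Finite := by
  induction M generalizing Y with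
  | zero => exact hY
  | succ M ih =>
    simp only [Function.iterate_succ_apply']
    refine ih {b | g.eval b ∈ Y} ?_
    have : {b | g.eval b ∈ Y} ⊆ ⋃ y ∈ Y, {b | (g - C y).IsRoot b} := by
      intro b hb
      simp only [Set.mem_iUnion]
      exact ⟨_, hb, by simp [IsRoot]⟩
    refine (hY.biUnion fun y _ => ?_).subset this
    refine finite_setOfPred_isRoot ?_
    intro h
    have := congrArg natDegree h
    rw [natDegree_sub_C, natDegree_zero] at this
    omega

/-- A Galois number field in an algebraically closed field containing a given number field and
a given finite set. -/
lemma exists_galois_field {L A : Type*} [Field L] [NumberField L] [Field A] [CharZero A]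
    [IsAlgClosed A] [Algebra.IsAlgebraic ℚ A] [Algebra L A] (S : Set A) (hS : S.Finite) :
    ∃ E : IntermediateField ℚ A, FiniteDimensional ℚ E ∧ IsGalois ℚ E ∧
      (∀ x : L, algebraMap L A x ∈ E) ∧ S ⊆ E := by
  let i : L →ₐ[ℚ] A := (algebraMap L A).toRatAlgHom
  have h1 : FiniteDimensional ℚ i.fieldRange :=
    (AlgEquiv.ofInjectiveField i).toLinearEquiv.finiteDimensional
  have h2 : FiniteDimensional ℚ (IntermediateField.adjoin ℚ S) := by
    have := hS.to_subtype
    exact IntermediateField.finiteDimensional_adjoin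
      fun x _ => (Algebra.IsAlgebraic.isAlgebraic (R := ℚ) x).isIntegral
  let E₀ : IntermediateField ℚ A := i.fieldRange ⊔ IntermediateField.adjoin ℚ S
  have hE₀ : FiniteDimensional ℚ E₀ := IntermediateField.finiteDimensional_sup _ _
  have hcl : IsAlgClosure ℚ A := ⟨inferInstance, inferInstance⟩
  have hn : Normal ℚ A := IsAlgClosure.normal ℚ A
  let E : IntermediateField ℚ A := IntermediateField.normalClosure ℚ E₀ A
  have hle : E₀ ≤ E := IntermediateField.le_normalClosure E₀
  have hEn : Normal ℚ E := normalClosure.normal ℚ E₀ A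
  refine ⟨E, inferInstance, ⟨⟩, fun x => hle ?_, fun x hx => hle ?_⟩
  · exact (le_sup_left : i.fieldRange ≤ E₀) ⟨x, rfl⟩
  · exact (le_sup_right : IntermediateField.adjoin ℚ S ≤ E₀) (IntermediateField.subset_adjoin _ _ hx)

/-- The inclusion of `L` in a subfield of `A` containing its image. -/
def incl {L A : Type*} [Field L] [Field A] [CharZero A] [Algebra L A] (E : IntermediateField ℚ A)
    (hLE : ∀ x : L, algebraMap L A x ∈ E) : L →+* E :=
  (algebraMap L A).codRestrict E hLE

lemma coe_incl {L A : Type*} [Field L] [Field A] [CharZero A] [Algebra L A]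
    (E : IntermediateField ℚ A) (hLE : ∀ x : L, algebraMap L A x ∈ E) (x : L) :
    (incl E hLE x : A) = algebraMap L A x := rfl

lemma map_incl {L A : Type*} [Field L] [Field A] [CharZero A] [Algebra L A]
    (E : IntermediateField ℚ A) (hLE : ∀ x : L, algebraMap L A x ∈ E) (f : L[X]) :
    (f.map (incl E hLE)).map (algebraMap E A) = f.map (algebraMap L A) := by
  rw [Polynomial.map_map]; rfl

lemma coe_iterate {L A : Type*} [Field L] [Field A] [CharZero A] [Algebra L A]
    (E : IntermediateField ℚ A) (hLE : ∀ x : L, algebraMap L A x ∈ E) (f : L[X]) (n : ℕ) (y : E) :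
    (((fun b => (f.map (incl E hLE)).eval b)^[n] y : E) : A) =
      (fun b => (f.map (algebraMap L A)).eval b)^[n] (y : A) := by
  have := iterate_map (algebraMap E A) (f.map (incl E hLE)) n y
  rw [map_incl] at this
  exact this

/-- The nonzero coefficients of `f`, as elements of `A`. -/
def coeffSet {L : Type*} (A : Type*) [Field L] [Field A] [Algebra L A] (f : L[X]) : Set A :=
  (fun i => algebraMap L A (f.coeff i)) '' (f.support : Set ℕ)

lemma val_coeff_le {L A : Type*} [Field L] [Field A] [CharZero A] [Algebra L A]
    (E : IntermediateField ℚ A) (hLE : ∀ x : L, algebraMap L A x ∈ E) (f : L[X])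
    (v : AbsoluteValue E ℝ) (h : ∀ w : E, (w : A) ∈ coeffSet A f → w ≠ 0 → v w = 1) (i : ℕ) :
    v ((f.map (incl E hLE)).coeff i) ≤ 1 := by
  rw [coeff_map]
  by_cases hi : f.coeff i = 0
  · simp [hi]
  · exact (h _ ⟨i, by simpa using hi, rfl⟩ (by simpa using hi)).le

lemma val_leadingCoeff {L A : Type*} [Field L] [Field A] [CharZero A] [Algebra L A]
    (E : IntermediateField ℚ A) (hLE : ∀ x : L, algebraMap L A x ∈ E) (f : L[X]) (hf : f ≠ 0)
    (v : AbsoluteValue E ℝ) (h : ∀ w : E, (w : A) ∈ coeffSet A f → w ≠ 0 → v w = 1) :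
    v (f.map (incl E hLE)).leadingCoeff = 1 := by
  rw [leadingCoeff_map]
  exact h _ ⟨f.natDegree, by simpa using hf, rfl⟩ (by simpa using hf)

/-- Homs from `L` to a number field which are congruent modulo a large prime are equal; the bound does
not depend on the number field. -/
lemma exists_bound_frobenius_field {L A : Type*} [Field L] [NumberField L] [Field A] [CharZero A]
    [IsAlgClosed A] [Algebra.IsAlgebraic ℚ A] [Algebra L A] :
    ∃ N₀ : ℕ, ∀ p : ℕ, p.Prime → N₀ < p → ∀ (E : IntermediateField ℚ A)
      (v : AbsoluteValue E ℝ), IsNonarchimedean v → v p < 1 → ∀ φ ψ : L →ₐ[ℚ] E,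
        (∀ x : 𝓞 L, v (φ x - ψ x) < 1) → φ = ψ := by
  let b := integralBasis L
  let R : Set A := ⋃ i, (minpoly ℚ (b i)).rootSet A
  have hR : R.Finite := Set.finite_iUnion fun i => rootSet_finite _ _
  obtain ⟨N₀, hN₀⟩ := unit_of_large (Set.image2 (fun x y => x - y) R R) (hR.image2 _ hR)
  refine ⟨N₀, fun p hp hlt E v hv hvp φ ψ h => ?_⟩
  have hroot : ∀ (φ : L →ₐ[ℚ] E) i, ((φ (b i) : E) : A) ∈ R := by
    intro φ i
    refine Set.mem_iUnion.2 ⟨i, ?_⟩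
    rw [mem_rootSet]
    refine ⟨minpoly.ne_zero (Algebra.IsIntegral.isIntegral _), ?_⟩
    have : ((φ (b i) : E) : A) = (E.val.comp φ) (b i) := rfl
    rw [this, aeval_algHom_apply, minpoly.aeval, map_zero]
  have hb : ∀ i, φ (b i) = ψ (b i) := by
    intro i
    by_contra hne
    have h1 := hN₀ p hp hlt E v hv hvp (φ (b i) - ψ (b i))
      ⟨_, hroot φ i, _, hroot ψ i, rfl⟩ (sub_ne_zero.2 hne)
    have h2 := h (RingOfIntegers.basis L i)
    have e : b i = ((RingOfIntegers.basis L i : 𝓞 L) : L) := integralBasis_apply L i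
    rw [← e] at h2
    exact absurd h1 h2.ne
  have : φ.toLinearMap = ψ.toLinearMap := b.ext hb
  exact AlgHom.toLinearMap_injective this

/-- The map `incl` as a `ℚ`-algebra homomorphism. -/
def inclAlg {L A : Type*} [Field L] [NumberField L] [Field A] [CharZero A] [Algebra L A]
    (E : IntermediateField ℚ A) (hLE : ∀ x : L, algebraMap L A x ∈ E) : L →ₐ[ℚ] E :=
  (incl E hLE).toRatAlgHom

/-- For a suitable number field `E` containing `f^{-M}(Y)` and a suitable extension `ρ` to `E` of a
generator of `⟨σ⟩`, a point of `f^{-M}(Y)` which is fixed by `ρ ^ orderOf σ` enters `Y` already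
before the last step. The automorphism `ρ` is a Frobenius at a large prime `p` and
`M = p ^ orderOf σ + 1`, so that the fixed points of `ρ ^ orderOf σ` occupy fewer than `M`
residue classes. -/
lemma exists_field_no_backward {L A : Type*} [Field L] [NumberField L] [Field A] [CharZero A]
    [IsAlgClosed A] [Algebra.IsAlgebraic ℚ A] [Algebra L A] (σ : L ≃ₐ[ℚ] L) (f : L[X])
    (hd : 1 ≤ f.natDegree) (Y : Set A) (hY : Y.Finite)
    (hfY : ∀ y ∈ Y, (f.map (algebraMap L A)).eval y ∈ Y) :
    ∃ (M : ℕ) (E : IntermediateField ℚ A) (hLE : ∀ x : L, algebraMap L A x ∈ E),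
      1 ≤ M ∧ FiniteDimensional ℚ E ∧
      (∀ y, (fun b => (f.map (algebraMap L A)).eval b)^[M] y ∈ Y → y ∈ E) ∧
      ∃ (ρ : E ≃ₐ[ℚ] E) (i : ℕ), Nat.Coprime i (orderOf σ) ∧
        (∀ x, ρ (incl E hLE x) = incl E hLE ((σ ^ i) x)) ∧
        ∀ y : E, (ρ ^ orderOf σ) y = y →
          (fun b => (f.map (algebraMap L A)).eval b)^[M] (y : A) ∈ Y →
          (fun b => (f.map (algebraMap L A)).eval b)^[M - 1] (y : A) ∈ Y := by
  let g := f.map (algebraMap L A)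
  have hgd : g.natDegree = f.natDegree := natDegree_map _
  have hf0 : f ≠ 0 := by rintro rfl; simp at hd
  let Z : Set A := {y | (fun b => g.eval b)^[1] y ∈ Y}
  have hZ : Z.Finite := finite_preimage_iterate g (by omega) Y hY 1
  obtain ⟨N₁, hN₁⟩ := unit_of_large
    (coeffSet A f ∪ (Y ∪ Set.image2 (fun x y => x - y) Z Y))
    ((f.support.finite_toSet.image _).union (hY.union (hZ.image2 _ hY)))
  obtain ⟨N₂, hN₂⟩ := exists_bound_frobenius_field (L := L) (A := A)
  obtain ⟨p, hp, hNp, P, hP, hpP, i, hi, hfrob⟩ := exists_frobenius_prime σ (max N₁ N₂)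
  let r := orderOf σ
  have hr : 1 ≤ r := orderOf_pos σ
  let q := p ^ r
  have hq : 2 ≤ q := hp.two_le.trans (Nat.le_self_pow (by omega) p)
  obtain ⟨E, hEfin, hEgal, hLE, hSE⟩ := exists_galois_field (L := L)
    {y | (fun b => g.eval b)^[q + 1] y ∈ Y} (finite_preimage_iterate g (by omega) Y hY _)
  have hEnf : NumberField E := ⟨⟩
  obtain ⟨Q, hQ, hPQ⟩ := exists_prime_over (incl E hLE) P hP
  have hpQ : (p : 𝓞 E) ∈ Q := by simpa using hPQ _ hpP
  obtain ⟨ρ, hρ⟩ := exists_frob_of_galois Q hQ p hp hpQ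
  obtain ⟨v, hv, hvp, hvQ, hv1, hvs⟩ := exists_place Q hQ p hp hpQ
  have hfr : ∀ x, v x ≤ 1 → v (ρ x - x ^ p) < 1 :=
    frob_val Q p v hv hvQ hv1 hvs (ρ : E →+* E) hρ
  have hN₁' := hN₁ p hp (by omega) E v hv hvp
  have hrho : ∀ x, ρ (incl E hLE x) = incl E hLE ((σ ^ i) x) := by
    have := hN₂ p hp (by omega) E v hv hvp ((ρ : E →ₐ[ℚ] E).comp (inclAlg E hLE))
      ((inclAlg E hLE).comp ((σ ^ i : L ≃ₐ[ℚ] L) : L →ₐ[ℚ] L)) (fun x => by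
        have h1 : v (ρ (incl E hLE x) - incl E hLE x ^ p) < 1 := by
          have := (hvQ _).2 (hρ (RingOfIntegers.mapRingHom (incl E hLE) x))
          simpa using this
        have h2 : v (incl E hLE ((σ ^ i) x) - incl E hLE x ^ p) < 1 := by
          have := (hvQ _).2 (hPQ _ (hfrob x))
          simpa using this
        have h3 := val_sub_lt v hv h1 h2
        rw [sub_sub_sub_cancel_right] at h3
        exact h3)
    exact fun x => DFunLike.congr_fun this x
  refine ⟨q + 1, E, hLE, by omega, hEfin, fun y hy => hSE hy, ρ, i, hi, hrho, ?_⟩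
  intro y hy hM
  let h := f.map (incl E hLE)
  have hco : ∀ w : E, (w : A) ∈ coeffSet A f → w ≠ 0 → v w = 1 :=
    fun w hw => hN₁' w (Or.inl hw)
  have hYE : ∀ y : E, (y : A) ∈ Y → v y ≤ 1 := by
    intro y hy
    by_cases h0 : y = 0
    · simp [h0]
    · exact (hN₁' y (Or.inr (Or.inl hy)) h0).le
  have heval : ∀ y : E, ((h.eval y : E) : A) = g.eval (y : A) := fun y => coe_iterate E hLE f 1 y
  have hσr : ((σ ^ i) ^ r) = 1 := by
    rw [← pow_mul, mul_comm, pow_mul, pow_orderOf_eq_one, one_pow]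
  have hrhor : ∀ (n : ℕ) (x : L), (ρ ^ n) (incl E hLE x) = incl E hLE (((σ ^ i) ^ n) x) := by
    intro n
    induction n with
    | zero => intro x; simp
    | succ n ih =>
      intro x
      rw [pow_succ', pow_succ', AlgEquiv.mul_apply, ih, hrho, AlgEquiv.mul_apply]
  have hmaph : h.map ((ρ ^ r : E ≃ₐ[ℚ] E) : E →+* E) = h := by
    ext n
    rw [coeff_map, coeff_map]
    have := hrhor r (f.coeff n)
    rw [hσr] at this
    exact congrArg Subtype.val this
  have key := backward_orbit_short v hv h (val_coeff_le E hLE f v hco)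
    (val_leadingCoeff E hLE f hf0 v hco) (by rw [natDegree_map]; exact hd) q hq
    {y : E | (y : A) ∈ Y} hYE (fun y hy => by
      change ((h.eval y : E) : A) ∈ Y
      rw [heval]; exact hfY _ hy)
    (fun y hy hyY β hβ => by
      refine (hN₁' _ (Or.inr (Or.inr ⟨y, ?_, β, hβ, rfl⟩)) (sub_ne_zero.2 ?_)).ge
      · change g.eval (y : A) ∈ Y
        rw [← heval]; exact hy
      · rintro rfl; exact hyY hβ)
    (fun x => (ρ ^ r) x) (frob_pow v hv p ρ hfr r) y
    (fun n => by
      have := iterate_map ((ρ ^ r : E ≃ₐ[ℚ] E) : E →+* E) h n y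
      rw [hmaph] at this
      refine Eq.trans this ?_
      congr 1)
    (by
      change ((_ : E) : A) ∈ Y
      rw [coe_iterate]; exact hM)
  have key' : (((fun b => h.eval b)^[q] y : E) : A) ∈ Y := key
  rw [coe_iterate] at key'
  exact key'

/-- A place at which the orbit of `a` never comes close to the finite set `Y` of periodic points, and
which is preserved by an extension of a generator `τ` of `⟨σ⟩`. It is taken so that its Frobenius
generates the group of the automorphism of `exists_field_no_backward`. If the orbit is close to `Y`
for the first time at step `N`, then at step `N - M` it is close to a point `y` of `f^{-M}(Y)`; this
point inherits from the orbit that it is fixed by a power of Frobenius, so it enters `Y` before the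
last step and the orbit was close to `Y` at step `N - 1` already. -/
lemma exists_good_place {L A : Type*} [Field L] [NumberField L] [Field A] [CharZero A]
    [IsAlgClosed A] [Algebra.IsAlgebraic ℚ A] [Algebra L A] (σ : L ≃ₐ[ℚ] L) (f : L[X])
    (hd : 1 ≤ f.natDegree) (a : L) (hinj : Function.Injective fun n => (fun x => f.eval x)^[n] a)
    (Y : Set A) (hY : Y.Finite) (hfY : ∀ y ∈ Y, (f.map (algebraMap L A)).eval y ∈ Y)
    (hper : ∀ y ∈ Y, ∃ m ≥ 1, (fun b => (f.map (algebraMap L A)).eval b)^[m] y = y) :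
    ∃ (E : IntermediateField ℚ A) (hLE : ∀ x : L, algebraMap L A x ∈ E) (p : ℕ)
      (v : AbsoluteValue E ℝ) (hv : IsNonarchimedean v) (ρ : E ≃ₐ[ℚ] E) (τ : L ≃ₐ[ℚ] L),
      p.Prime ∧ 3 ≤ p ∧ v p < 1 ∧
      Finite (valInt v hv ⧸ Ideal.span {((p : valInt v hv)) ^ 2}) ∧
      (∀ x, v (ρ x) = v x) ∧ (∃ k : ℕ, τ = σ ^ k) ∧ (∃ k : ℕ, σ = τ ^ k) ∧
      (∀ x, ρ (incl E hLE x) = incl E hLE (τ x)) ∧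
      (∀ i, v ((f.map (incl E hLE)).coeff i) ≤ 1) ∧ v (incl E hLE a) ≤ 1 ∧
      (∀ y ∈ Y, y ∈ E) ∧
      ∀ (n : ℕ) (y : E), (y : A) ∈ Y →
        1 ≤ v (incl E hLE ((fun x => f.eval x)^[n] a) - y) := by
  obtain ⟨M, E, hLE, hM, hEfin, hpre, ρ, i, hi, hρσ, hback⟩ :=
    exists_field_no_backward σ f hd Y hY hfY
  have hEnf : NumberField E := ⟨⟩
  let g := f.map (algebraMap L A)
  have hgd : g.natDegree = f.natDegree := natDegree_map _
  have hf0 : f ≠ 0 := by rintro rfl; simp at hd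
  let h := f.map (incl E hLE)
  have hhd : h.natDegree = f.natDegree := natDegree_map _
  let b : ℕ → L := fun n => (fun x => f.eval x)^[n] a
  let β : ℕ → E := fun n => incl E hLE (b n)
  have hβsucc : ∀ n, β (n + 1) = h.eval (β n) := by
    intro n
    change incl E hLE ((fun x => f.eval x)^[n + 1] a) = _
    rw [Function.iterate_succ_apply', ← eval_map_apply]
  let G : A → A := fun b => g.eval b
  have hGY : ∀ (k n : ℕ) (y : A), k ≤ n → G^[k] y ∈ Y → G^[n] y ∈ Y := by
    intro k n y hkn hy
    induction n, hkn using Nat.le_induction with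
    | base => exact hy
    | succ n _ ih => rw [Function.iterate_succ_apply']; exact hfY _ ih
  let W : Set A := {y | G^[M] y ∈ Y}
  have hW : W.Finite := finite_preimage_iterate g (by omega) Y hY M
  let T₁ : Set A := ⋃ τ : E ≃ₐ[ℚ] E, (fun y : E => ((τ y - y : E) : A)) '' {y : E | (y : A) ∈ W}
  have hT₁ : T₁.Finite := Set.finite_iUnion fun τ =>
    (hW.preimage Subtype.val_injective.injOn).image _
  let T₂ : Set A := Set.image2 (fun n y => algebraMap L A (b n) - y) {n | n < M} Y
  have hT₂ : T₂.Finite := (Set.finite_lt_nat M).image2 _ hY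
  obtain ⟨N₁, hN₁⟩ := unit_of_large (coeffSet A f ∪ ({algebraMap L A a} ∪ (T₁ ∪ T₂)))
    ((f.support.finite_toSet.image _).union ((Set.finite_singleton _).union (hT₁.union hT₂)))
  obtain ⟨p, hp, hNp, P, hP, hpP, i', hi', hfrob⟩ := exists_frobenius_prime ρ (max N₁ 2)
  obtain ⟨v, hv, hvp, hvP, hv1, hvs⟩ := exists_place P hP p hp hpP
  let ρ' := ρ ^ i'
  have hfr : ∀ x, v x ≤ 1 → v (ρ' x - x ^ p) < 1 :=
    frob_val P p v hv hvP hv1 hvs ((ρ ^ i' : E ≃ₐ[ℚ] E) : E →+* E) hfrob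
  have hN := hN₁ p hp (by omega) E v hv hvp
  have hco : ∀ w : E, (w : A) ∈ coeffSet A f → w ≠ 0 → v w = 1 := fun w hw => hN w (Or.inl hw)
  have hcoef := val_coeff_le E hLE f v hco
  have hlc := val_leadingCoeff E hLE f hf0 v hco
  have hva : v (incl E hLE a) ≤ 1 := by
    by_cases h0 : a = 0
    · simp [h0]
    · exact (hN (incl E hLE a) (Or.inr (Or.inl rfl)) (by simpa using h0)).le
  have hβ1 : ∀ n, v (β n) ≤ 1 := by
    intro n
    induction n with
    | zero => exact hva
    | succ n ih => rw [hβsucc]; exact val_eval_le_one v hv h hcoef ih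
  -- the automorphism preserves the place
  have hvρ : ∀ x, v (ρ' x) = v x := by
    refine val_comp_eq v (ρ' : E →+* E) (orderOf ρ') (orderOf_pos ρ') (fun x => ?_) (fun x hx => ?_)
    · have hpow : ∀ n, (ρ' : E →+* E)^[n] x = (ρ' ^ n) x := by
        intro n
        induction n with
        | zero => rfl
        | succ n ih => rw [Function.iterate_succ_apply', ih, pow_succ']; rfl
      rw [hpow, pow_orderOf_eq_one]; rfl
    · have h1 := hfr x hx
      have h2 := hv (ρ' x - x ^ p) (x ^ p)
      rw [sub_add_cancel] at h2
      refine h2.trans (max_le h1.le ?_)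
      rw [map_pow]; exact pow_le_one₀ (v.nonneg _) hx
  have hvρn : ∀ (n : ℕ) x, v ((ρ' ^ n) x) = v x := by
    intro n x
    induction n with
    | zero => rfl
    | succ n ih => rw [pow_succ', AlgEquiv.mul_apply, hvρ, ih]
  have hρpow : ∀ (n : ℕ) (x : L), (ρ ^ n) (incl E hLE x) = incl E hLE (((σ ^ i) ^ n) x) := by
    intro n
    induction n with
    | zero => intro x; simp
    | succ n ih =>
      intro x
      rw [pow_succ', pow_succ', AlgEquiv.mul_apply, ih, hρσ, AlgEquiv.mul_apply]
  let r := orderOf σ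
  have hσr : ∀ n, ((σ ^ i) ^ (n * r)) = 1 := by
    intro n
    rw [← pow_mul, ← mul_assoc, mul_comm, pow_mul, pow_orderOf_eq_one, one_pow]
  have hρ'r : ∀ x, (ρ' ^ r) (incl E hLE x) = incl E hLE x := by
    intro x
    change ((ρ ^ i') ^ r) _ = _
    rw [← pow_mul, hρpow, hσr]; rfl
  obtain ⟨k₁, hk₁⟩ := exists_pow_eq_self_of_coprime hi'
  obtain ⟨k₀, hk₀⟩ := exists_pow_eq_self_of_coprime hi
  -- fixed points of `ρ' ^ r` are fixed by `ρ ^ r`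
  have hfixρ : ∀ y : E, (ρ' ^ r) y = y → (ρ ^ r) y = y := by
    intro y hy
    have e : ρ ^ r = (ρ' ^ r) ^ k₁ := by
      rw [← pow_mul, mul_comm, pow_mul]; exact congrArg (· ^ r) hk₁.symm
    rw [e]
    clear e
    generalize k₁ = k
    induction k with
    | zero => rfl
    | succ k ih => rw [pow_succ', AlgEquiv.mul_apply, ih, hy]
  refine ⟨E, hLE, p, v, hv, ρ', (σ ^ i) ^ i', hp, by omega, hvp,
    finite_quotient_valuation P p hp v hvP hv1 hvs _ (mem_valInt v hv), hvρ,
    ⟨i * i', (pow_mul _ _ _).symm⟩, ⟨k₁ * k₀, ?_⟩, hρpow i', hcoef, hva, ?_, ?_⟩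
  · have : ((σ ^ i) ^ i') ^ k₁ = σ ^ i := by
      ext x
      refine (incl E hLE).injective ?_
      rw [← pow_mul, ← hρpow, pow_mul, hk₁, hρσ]
    rw [pow_mul, this, hk₀]
  · intro y hy
    exact hpre y (hGY 0 M y (by omega) hy)
  · by_contra! hcon
    -- a minimal time at which the orbit is close to `Y`
    classical
    let N := Nat.find hcon
    obtain ⟨y₀, hy₀, hvy₀⟩ := Nat.find_spec hcon
    have hmin : ∀ n < N, ∀ y : E, (y : A) ∈ Y → 1 ≤ v (β n - y) := by
      intro n hn y hy
      by_contra! hlt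
      exact Nat.find_min hcon hn ⟨y, hy, hlt⟩
    have hNM : M ≤ N := by
      by_contra! hlt
      refine absurd hvy₀ (not_lt.2 (hN _ (Or.inr (Or.inr (Or.inr ⟨N, hlt, y₀, hy₀, rfl⟩)))
        (sub_ne_zero.2 fun heq => ?_)).ge)
      obtain ⟨m, hm, hmy⟩ := hper _ hy₀
      rw [← heq, coe_incl, ← iterate_map, ← Function.iterate_add_apply] at hmy
      have := hinj ((algebraMap L A).injective hmy)
      omega
    have hpull : ∀ k ≤ M, ∃ y : E, G^[k] (y : A) ∈ Y ∧ v (β (N - k) - y) < 1 := by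
      intro k
      induction k with
      | zero => exact fun _ => ⟨y₀, hy₀, hvy₀⟩
      | succ k ih =>
        intro hk
        obtain ⟨y, hyY, hvy⟩ := ih (by omega)
        have e : N - k = (N - (k + 1)) + 1 := by omega
        rw [e, hβsucc] at hvy
        have hdeg : (C y).degree < h.degree := by
          refine degree_C_le.trans_lt ?_
          rw [← natDegree_pos_iff_degree_pos]; omega
        have hmap : (h - C y).map (algebraMap E A) = g - C (y : A) := by
          rw [Polynomial.map_sub, map_C, map_incl]; rfl
        obtain ⟨y', hy', hvy'⟩ := exists_root_close E v (h - C y)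
          (by rw [leadingCoeff_sub_of_degree_lt hdeg]; exact hlc)
          (fun x hx => by
            rw [hmap, eval_sub, eval_C, sub_eq_zero] at hx
            refine hpre x (hGY (k + 1) M x hk ?_)
            rw [Function.iterate_succ_apply]
            change G^[k] (g.eval x) ∈ Y
            rwa [hx])
          (β (N - (k + 1))) (by rwa [eval_sub, eval_C])
        refine ⟨y', ?_, hvy'⟩
        rw [eval_sub, eval_C, sub_eq_zero] at hy'
        have hy'' : g.eval (y' : A) = y := by
          rw [← hy']; exact (coe_iterate E hLE f 1 y').symm
        rw [Function.iterate_succ_apply]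
        change G^[k] (g.eval (y' : A)) ∈ Y
        rwa [hy'']
    obtain ⟨y, hyY, hvy⟩ := hpull M le_rfl
    -- `y` is fixed by `ρ' ^ r` because it is close to a point of `L`
    have hfix : (ρ' ^ r) y = y := by
      by_contra hne
      have h1 := hN ((ρ' ^ r) y - y)
        (Or.inr (Or.inr (Or.inl (Set.mem_iUnion.2 ⟨ρ' ^ r, y, hyY, rfl⟩)))) (sub_ne_zero.2 hne)
      have h2 : v ((ρ' ^ r) (β (N - M) - y)) < 1 := by rwa [hvρn]
      rw [map_sub, hρ'r] at h2
      have h3 := val_sub_lt v hv hvy h2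
      rw [sub_sub_sub_cancel_left] at h3
      exact absurd h1 h3.ne
    have hY1 := hback y (hfixρ y hfix) hyY
    have hy1 : v y ≤ 1 := by
      have := hv (β (N - M)) (-(β (N - M) - y))
      rw [v.map_neg, ← sub_eq_add_neg, sub_sub_cancel] at this
      exact this.trans (max_le (hβ1 _) hvy.le)
    have hforw : ∀ k, v ((fun b => h.eval b)^[k] y) ≤ 1 ∧
        v (β (N - M + k) - (fun b => h.eval b)^[k] y) < 1 := by
      intro k
      induction k with
      | zero => exact ⟨hy1, hvy⟩
      | succ k ih =>
        rw [Function.iterate_succ_apply', ← add_assoc, hβsucc]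
        exact ⟨val_eval_le_one v hv h hcoef ih.1,
          val_eval_sub_lt v hv h hcoef (hβ1 _) ih.1 ih.2⟩
    have h1 := (hforw (M - 1)).2
    refine absurd h1 (not_lt.2 (hmin _ (by omega) _ ?_))
    rw [coe_iterate]; exact hY1

/-! ### Invariant iterates and virtual periodicity -/

lemma map_eq_of_pow {L : Type*} [Field L] [CharZero L] (τ : L ≃ₐ[ℚ] L) (g : L[X])
    (hg : g.map (τ : L →+* L) = g) (k : ℕ) :
    g.map ((τ ^ k : L ≃ₐ[ℚ] L) : L →+* L) = g := by
  have hc : ∀ n, τ (g.coeff n) = g.coeff n := by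
    intro n
    have := congrArg (fun q : L[X] => q.coeff n) hg
    simpa using this
  ext n
  rw [coeff_map]
  change (τ ^ k) (g.coeff n) = _
  induction k with
  | zero => rfl
  | succ k ih => rw [pow_succ', AlgEquiv.mul_apply, ih, hc]

lemma natDegree_pos_of_injective_orbit {L : Type*} [Field L] (f : L[X]) (a : L)
    (hinj : Function.Injective fun n => (fun x => f.eval x)^[n] a) : 1 ≤ f.natDegree := by
  by_contra! h
  rw [eq_C_of_natDegree_eq_zero (by omega : f.natDegree = 0)] at hinj
  have : (1 : ℕ) = 2 := hinj (by simp)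
  omega

/-- The common periodic points of `f` and its conjugate are finite in number, unless some iterate of
`f` is invariant. -/
lemma finite_common_periodic_of_not_invariant {L A : Type*} [Field L] [NumberField L] [Field A]
    [CharZero A] [Algebra.IsAlgebraic ℚ A] [Algebra L A] (τ : L ≃ₐ[ℚ] L) (f : L[X]) (a : L)
    (hinj : Function.Injective fun n => (fun x => f.eval x)^[n] a)
    (hS : {n | τ ((fun x => f.eval x)^[n] a) = (fun x => f.eval x)^[n] a}.Infinite)
    (hcon : ¬ ∃ k ≥ 1, (polyIter f k).map (τ : L →+* L) = polyIter f k) :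
    {x : A | ∃ m ≥ 1, (fun b => (f.map (algebraMap L A)).eval b)^[m] x = x ∧
      (fun b => ((f.map (τ : L →+* L)).map (algebraMap L A)).eval b)^[m] x = x}.Finite := by
  have hd := natDegree_pos_of_injective_orbit f a hinj
  rcases hd.eq_or_lt with hd | hd
  · refine Set.Subsingleton.finite ?_
    rintro x ⟨m, hm, hx, -⟩ y ⟨n, hn, hy, -⟩
    by_contra hxy
    obtain ⟨k, hk, hX⟩ := periodic_subsingleton_of_linear (f.map (algebraMap L A))
      (by rw [natDegree_map]; exact hd.symm) hm hn hx hy hxy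
    rw [← map_polyIter, ← map_X (algebraMap L A)] at hX
    have hX' := map_injective _ (algebraMap L A).injective hX
    have h1 := eval_polyIter f k a
    rw [hX', eval_X] at h1
    have : k = 0 := hinj (by simpa using h1.symm)
    omega
  · by_cases h : ∀ k, (hatIter f k - hatIter (f.map (τ : L →+* L)) k).natDegree = 0
    · exact absurd (exists_iter_eq_of_const f τ.toRingEquiv (by omega) h a hinj hS) hcon
    · push Not at h
      obtain ⟨k₀, hk₀⟩ := h
      exact finite_common_periodic f (f.map (τ : L →+* L)) (by omega) (natDegree_map _) k₀
        (by omega)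

/-- An infinite orbit with infinitely many `σ`-fixed points forces some iterate of `f` to have
`σ`-invariant coefficients. -/
lemma exists_iterate_invariant {L A : Type*} [Field L] [NumberField L] [Field A] [CharZero A]
    [IsAlgClosed A] [Algebra.IsAlgebraic ℚ A] [Algebra L A] (σ : L ≃ₐ[ℚ] L) (f : L[X]) (a : L)
    (hinj : Function.Injective fun n => (fun x => f.eval x)^[n] a)
    (hS : {n | σ ((fun x => f.eval x)^[n] a) = (fun x => f.eval x)^[n] a}.Infinite) :
    ∃ k ≥ 1, (polyIter f k).map (σ : L →+* L) = polyIter f k := by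
  by_contra hcon
  have hd := natDegree_pos_of_injective_orbit f a hinj
  let g := f.map (algebraMap L A)
  let G : A → A := fun b => g.eval b
  -- everything said about `σ` holds for the other generators of the group it generates
  have hτS : ∀ τ : L ≃ₐ[ℚ] L, (∃ k : ℕ, τ = σ ^ k) →
      {n | τ ((fun x => f.eval x)^[n] a) = (fun x => f.eval x)^[n] a}.Infinite := by
    rintro τ ⟨k, rfl⟩
    refine hS.mono fun n hn => ?_
    have hn : σ ((fun x => f.eval x)^[n] a) = (fun x => f.eval x)^[n] a := hn
    change (σ ^ k) _ = _
    induction k with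
    | zero => rfl
    | succ k ih => rw [pow_succ', AlgEquiv.mul_apply, ih, hn]
  have hτcon : ∀ τ : L ≃ₐ[ℚ] L, (∃ k : ℕ, σ = τ ^ k) →
      ¬ ∃ k ≥ 1, (polyIter f k).map (τ : L →+* L) = polyIter f k := by
    rintro τ ⟨j, rfl⟩ ⟨k, hk, hkτ⟩
    exact hcon ⟨k, hk, map_eq_of_pow τ _ hkτ j⟩
  let Xset : (L ≃ₐ[ℚ] L) → Set A := fun τ => {x : A | ∃ m ≥ 1, G^[m] x = x ∧
      (fun b => ((f.map (τ : L →+* L)).map (algebraMap L A)).eval b)^[m] x = x}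
  let X₀ : Set A := ⋃ τ ∈ {τ : L ≃ₐ[ℚ] L | (∃ k : ℕ, τ = σ ^ k) ∧ ∃ k : ℕ, σ = τ ^ k}, Xset τ
  have hX₀ : X₀.Finite := Set.Finite.biUnion (Set.toFinite _) fun τ hτ =>
    finite_common_periodic_of_not_invariant τ f a hinj (hτS τ hτ.1) (hτcon τ hτ.2)
  have hX₀per : ∀ x ∈ X₀, ∃ m ≥ 1, G^[m] x = x := by
    intro x hx
    simp only [X₀, Set.mem_iUnion] at hx
    obtain ⟨τ, -, m, hm, h, -⟩ := hx
    exact ⟨m, hm, h⟩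
  let Y : Set A := ⋃ x ∈ X₀, Set.range fun k => G^[k] x
  have hY : Y.Finite := by
    refine hX₀.biUnion fun x hx => ?_
    obtain ⟨m, hm, hmx⟩ := hX₀per x hx
    refine ((Set.finite_lt_nat m).image fun k => G^[k] x).subset ?_
    rintro _ ⟨k, rfl⟩
    have hper : Function.IsPeriodicPt G m x := hmx
    exact ⟨k % m, Nat.mod_lt _ (by omega), hper.iterate_mod_apply k⟩
  have hfY : ∀ y ∈ Y, g.eval y ∈ Y := by
    intro y hy
    simp only [Y, Set.mem_iUnion] at hy ⊢
    obtain ⟨x, hx, k, rfl⟩ := hy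
    exact ⟨x, hx, k + 1, Function.iterate_succ_apply' _ _ _⟩
  have hYper : ∀ y ∈ Y, ∃ m ≥ 1, G^[m] y = y := by
    intro y hy
    simp only [Y, Set.mem_iUnion] at hy
    obtain ⟨x, hx, k, rfl⟩ := hy
    obtain ⟨m, hm, hmx⟩ := hX₀per x hx
    exact ⟨m, hm, iterate_periodic G m k x hmx⟩
  obtain ⟨E, hLE, p, v, hv, ρ, τ, hp, hp3, hvp, hfin, hρv, hτ1, hτ2, hρτ, hcoef, hva, hYE, hsep⟩ :=
    exists_good_place σ f hd a hinj Y hY hfY hYper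
  let h := f.map (incl E hLE)
  obtain ⟨f', hf'⟩ := exists_lift_valInt v hv h hcoef
  let a' : valInt v hv := ⟨incl E hLE a, hva⟩
  have horb : ∀ n, (((fun x => f'.eval x)^[n] a' : valInt v hv) : E) =
      incl E hLE ((fun x => f.eval x)^[n] a) := by
    intro n
    have h1 := iterate_map (valInt v hv).subtype f' n a'
    rw [hf'] at h1
    rw [iterate_map]
    exact h1
  have hmapρ : (h.map ((ρ.toRingEquiv : E ≃+* E) : E →+* E)).map (algebraMap E A) =
      (f.map (τ : L →+* L)).map (algebraMap L A) := by
    ext n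
    simp only [h, coeff_map]
    exact congrArg Subtype.val (hρτ (f.coeff n))
  obtain ⟨k, hk, hkρ⟩ := local_dichotomy v hv p hp hp3 hvp (valInt v hv) (mem_valInt v hv) hfin
    ρ.toRingEquiv hρv f' a'
    (fun m n hmn => by
      have hmn' := congrArg (Subtype.val) hmn
      simp only [horb] at hmn'
      exact hinj ((incl E hLE).injective hmn'))
    ((hτS τ hτ1).mono fun n hn => by
      change ρ _ = _
      rw [horb, hρτ]
      exact congrArg _ hn)
    (fun m hm R hR hR1 hR2 n => by
      rw [hf'] at hR1 hR2
      by_contra! hlt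
      rw [horb] at hlt
      -- the roots of `R` are common periodic points
      have hroot : ∀ x : A, (R.map (algebraMap E A)).eval x = 0 → x ∈ Y := by
        intro x hx
        have e1 : G^[m] x = x := by
          have := Polynomial.map_dvd (algebraMap E A) hR1
          have := (IsRoot.def.2 hx).dvd this
          rw [IsRoot.def, Polynomial.map_sub, map_X, map_polyIter, map_incl, eval_sub, eval_X,
            eval_polyIter, sub_eq_zero] at this
          exact this
        have e2 : (fun b => ((f.map (τ : L →+* L)).map (algebraMap L A)).eval b)^[m] x = x := by
          have := Polynomial.map_dvd (algebraMap E A) hR2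
          have := (IsRoot.def.2 hx).dvd this
          rw [IsRoot.def, Polynomial.map_sub, map_X, map_polyIter, map_polyIter, hmapρ, eval_sub,
            eval_X, eval_polyIter, sub_eq_zero] at this
          exact this
        refine Set.mem_biUnion (x := x) ?_ ⟨0, rfl⟩
        exact Set.mem_biUnion (x := τ) ⟨hτ1, hτ2⟩ ⟨m, hm, e1, e2⟩
      obtain ⟨y, hy, hvy⟩ := exists_root_close E v R (by rw [hR.leadingCoeff, map_one])
        (fun x hx => hYE x (hroot x hx)) _ hlt
      refine absurd hvy (not_lt.2 (hsep n y (hroot y ?_)))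
      have : (R.map (algebraMap E A)).eval (y : A) = algebraMap E A (R.eval y) :=
        eval_map_apply (algebraMap E A) y
      rw [this, hy, map_zero])
  rw [hf'] at hkρ
  refine hτcon τ hτ2 ⟨k, hk, ?_⟩
  have h2 := congrArg (Polynomial.map (algebraMap E A)) hkρ
  rw [map_polyIter, map_polyIter, map_polyIter, hmapρ, map_incl, ← map_polyIter, ← map_polyIter,
    ← map_polyIter] at h2
  exact map_injective _ (algebraMap L A).injective h2

/-- A set of natural numbers stable under a translation is virtually periodic. -/
lemma virtually_periodic_of_add {S : Set ℕ} {k : ℕ} (hk : 1 ≤ k) (h : ∀ n ∈ S, n + k ∈ S) :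
    ∃ N r : ℕ, 0 < r ∧ ∀ n > N, (n ∈ S ↔ n + r ∈ S) := by
  classical
  have hmul : ∀ (j n : ℕ), n ∈ S → n + j * k ∈ S := by
    intro j n hn
    induction j with
    | zero => simpa using hn
    | succ j ih => rw [Nat.succ_mul, ← add_assoc]; exact h _ ih
  have hc : ∀ c : ℕ, ∃ N : ℕ, ∀ n > N, n % k = c → n + k ∈ S → n ∈ S := by
    intro c
    by_cases hex : ∃ s ∈ S, s % k = c
    · obtain ⟨s, hs, hsc⟩ := hex
      refine ⟨s, fun n hn hnc _ => ?_⟩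
      obtain ⟨j, hj⟩ := (Nat.modEq_iff_dvd' hn.le).1 (hsc.trans hnc.symm : s ≡ n [MOD k])
      have : n = s + j * k := by rw [mul_comm j k]; omega
      rw [this]
      exact hmul j s hs
    · refine ⟨0, fun n _ hnc hn => absurd ⟨n + k, hn, ?_⟩ hex⟩
      rw [Nat.add_mod_right, hnc]
  choose N hN using hc
  refine ⟨(Finset.range k).sup N, k, by omega, fun n hn => ⟨h n, fun hn' => ?_⟩⟩
  have hle := Finset.le_sup (f := N) (Finset.mem_range.2 (Nat.mod_lt n (by omega : k > 0)))
  exact hN (n % k) n (by omega) rfl hn'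

/-- For number fields `K ⊆ L` with `L/K` finite Galois, `σ` in the Galois group,
a polynomial `f ∈ L[x]` and `a ∈ L`, the set `{n | σ(f⁽ⁿ⁾(a)) = f⁽ⁿ⁾(a)}` is a
virtually periodic subset of `ℕ`. -/
theorem iterate_fixed_set_virtually_periodic {K L : Type*} [Field K] [Field L]
    [NumberField K] [NumberField L] [Algebra K L] [FiniteDimensional K L]
    [IsGalois K L] (σ : L ≃ₐ[K] L) (f : Polynomial L) (a : L) :
    ∃ N r : ℕ, 0 < r ∧ ∀ n > N,
      (σ ((fun b => f.eval b)^[n] a) = (fun b => f.eval b)^[n] a ↔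
        σ ((fun b => f.eval b)^[n + r] a) = (fun b => f.eval b)^[n + r] a) := by
  let F : L → L := fun b => f.eval b
  let S : Set ℕ := {n | σ (F^[n] a) = F^[n] a}
  change ∃ N r : ℕ, 0 < r ∧ ∀ n > N, (n ∈ S ↔ n + r ∈ S)
  by_cases hfin : S.Finite
  · obtain ⟨B, hB⟩ := hfin.bddAbove
    refine ⟨B, 1, one_pos, fun n hn => iff_of_false (fun h => ?_) (fun h => ?_)⟩
    · have := hB h; omega
    · have := hB h; omega
  by_cases hinj : Function.Injective fun n => F^[n] a
  · let τ : L ≃ₐ[ℚ] L := σ.toRingEquiv.toRatAlgEquiv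
    have hchar : CharZero (AlgebraicClosure L) :=
      charZero_of_injective_algebraMap (algebraMap L (AlgebraicClosure L)).injective
    have halg : Algebra.IsAlgebraic ℚ (AlgebraicClosure L) := Algebra.IsAlgebraic.trans ℚ L _
    obtain ⟨k, hk, hkσ⟩ := exists_iterate_invariant (A := AlgebraicClosure L) τ f a hinj hfin
    refine virtually_periodic_of_add hk fun n hn => ?_
    have e : F^[n + k] a = (polyIter f k).eval (F^[n] a) := by
      rw [eval_polyIter, add_comm, Function.iterate_add_apply]
    change σ (F^[n + k] a) = F^[n + k] a
    have hn : σ (F^[n] a) = F^[n] a := hn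
    have h1 := eval_map_apply (f := (τ : L →+* L)) (p := polyIter f k) (F^[n] a)
    rw [hkσ] at h1
    rw [e]
    refine h1.symm.trans ?_
    congr 1
  · -- a non-injective orbit is eventually periodic
    have : ∃ m n, m < n ∧ F^[m] a = F^[n] a := by
      simp only [Function.Injective] at hinj
      push Not at hinj
      obtain ⟨m, n, heq, hne⟩ := hinj
      rcases lt_or_gt_of_ne hne with h | h
      · exact ⟨m, n, h, heq⟩
      · exact ⟨n, m, h, heq.symm⟩
    obtain ⟨m, n, hmn, heq⟩ := this
    refine ⟨m, n - m, by omega, fun t ht => ?_⟩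
    have : F^[t + (n - m)] a = F^[t] a := by
      have e1 : t + (n - m) = (t - m) + n := by omega
      have e2 : F^[t] a = F^[(t - m) + m] a := by rw [Nat.sub_add_cancel ht.le]
      rw [e1, e2, Function.iterate_add_apply, Function.iterate_add_apply, heq]
    change σ _ = _ ↔ σ _ = _
    rw [this]
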